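/- arXiv:2312.15833 — 2 statements merged into one kernel-verified Lean document; each statement's English description precedes it below -/
import Mathlib

section
/- There exist absolute constants C ≥ c > 0 such that for every positive integer n, every β > 0, and every s ∈ [n], if σ is a random permutation with law P_{n,β}, then c · min{max{β^{-2}, 1}, n} ≤ E[|C_s(σ)|] ≤ C · min{max{β^{-2}, 1}, n}. -/
/-!
Write `t ≤ i` / `i < t` for points above / below a threshold `t`, and say that the cycle of `s < t`
is *open at `t`* (`Reach`) if it contains a point above `t`, and that it *closes at `y`* (`Tops`) if
its maximum is `y`. Then `|C_s|` is at most one plus the number of thresholds on either side of `s`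
at which the cycle is open, and the two sides are exchanged by the reversal of `[n]`. All estimates
come from explicit rearrangements of arcs `i → σ i` that are injective (given a little extra data)
and whose effect on the weight is controlled.

*Upper bound.* Let `h` be the number of arcs crossing `y` upwards, which equals the number crossing
downwards, and `B = 2 / (1 - e^{-2β})`. If the cycle of `s` is open at `y`, its excursion below `y`
can be closed through `y` (`closeAt`). The permutation is recovered from the new one and two points,
which after weighting have at most `h + B` choices each, so that
`E[1_{open at y} (h + B)⁻²] ≤ P(closes at y)` (`closing`). Uncrossing one of the `h²` pairs
consisting of an upward and a downward arc keeps the cycle open except for one pair, and gives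
`E[1_{open at y} h²] ≤ (1 + B²) P(open at y)` (`second_moment`). Together,
`P(open at y) ≤ 6 B² P(closes at y)` (`reach_le_tops`), and the events on the right are disjoint.

*Lower bound.* Let `w = ⌊1/β⌋`. Exchanging `σ s` and `σ x` merges cycles, so points at distance at
most `w` share a cycle with probability at least `1/9` (`near`). The cycle of `s` closes at a given
`y` with probability at most `55 / w²`, since both arcs at its maximum can be redirected to `w`
points above `y` (`tops_small`). Hence the cycle of `s` stays open, with probability bounded below,
up to distance of order `w²`. Finally, two cycles open at the same threshold coincide with
probability at least `1/2`, by exchanging their exit arcs (`both_reach`), and a point `x` is rarely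
the maximum of its own cycle (`not_reach_small`); so `s` and `x` share a cycle with probability
bounded below for all `x` up to distance of order `w²` (`far`).
-/

open scoped BigOperators Classical

/-- The (unnormalized) Mallows weight `exp(-β ∑ᵢ |σ(i) - i|)` for the `L¹` distance.
Permutations of `[n] = {1, …, n}` are modeled as permutations of `Fin n`; the
displacements `|σ(i) - i|` are unchanged by this re-indexing. -/
noncomputable def mallowsWeight (n : ℕ) (β : ℝ) (σ : Equiv.Perm (Fin n)) : ℝ :=
  Real.exp (-β * ∑ i : Fin n, |((σ i : ℕ) : ℝ) - ((i : ℕ) : ℝ)|)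

/-- The probability of `σ` under the Mallows permutation model `P_{n,β}`. -/
noncomputable def mallowsProb (n : ℕ) (β : ℝ) (σ : Equiv.Perm (Fin n)) : ℝ :=
  mallowsWeight n β σ / ∑ τ : Equiv.Perm (Fin n), mallowsWeight n β τ

/-- Expectation of `f` under `P_{n,β}`. -/
noncomputable def mallowsE (n : ℕ) (β : ℝ) (f : Equiv.Perm (Fin n) → ℝ) : ℝ :=
  ∑ σ : Equiv.Perm (Fin n), f σ * mallowsProb n β σ

/-- The set of points of the cycle of `σ` containing `s`: `{σ^k(s) : k ≥ 0}`. -/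
noncomputable def cycleFinset (n : ℕ) (σ : Equiv.Perm (Fin n)) (s : Fin n) :
    Finset (Fin n) :=
  Finset.univ.filter fun x => ∃ k : ℕ, (σ ^ k) s = x

namespace MallowsL1

open Equiv Equiv.Perm

/-! ### Orbits, thresholds and first hits -/

/-- Iterating `σ` forward from `s`, the first point at height at least `t` is `b`. -/
def Hit {n : ℕ} (σ : Perm (Fin n)) (t : ℕ) (s b : Fin n) : Prop :=
  ∃ k : ℕ, (σ ^ k) s = b ∧ t ≤ (b : ℕ) ∧ ∀ i < k, (((σ ^ i) s : Fin n) : ℕ) < t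

/-- The cycle of `s` contains a point at height at least `t`. -/
def Reach {n : ℕ} (σ : Perm (Fin n)) (t : ℕ) (s : Fin n) : Prop :=
  ∃ x : Fin n, σ.SameCycle s x ∧ t ≤ (x : ℕ)

/-- For `s < y`: the cycle of `s` has maximum `y`, expressed by saying that `y` is the first point
at height at least `y`, both forward and backward from `s`. -/
def Tops {n : ℕ} (σ : Perm (Fin n)) (y s : Fin n) : Prop :=
  Hit σ y s y ∧ Hit σ⁻¹ y s y

/-- The first point of the forward orbit of `s` at height at least `t`
(and `s` itself if there is none). -/
noncomputable def hit {n : ℕ} (σ : Perm (Fin n)) (t : ℕ) (s : Fin n) : Fin n :=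
  if h : ∃ b, Hit σ t s b then h.choose else s

variable {n : ℕ} {σ τ : Perm (Fin n)} {t : ℕ} {s x y b b' : Fin n}

lemma Hit.unique (h : Hit σ t s b) (h' : Hit σ t s b') : b = b' := by
  obtain ⟨k, hk, hb, hl⟩ := h
  obtain ⟨k', hk', hb', hl'⟩ := h'
  rcases lt_trichotomy k k' with hlt | heq | hgt
  · have := hl' k hlt
    rw [hk] at this; omega
  · rw [← hk, ← hk', heq]
  · have := hl k' hgt
    rw [hk'] at this; omega

lemma Hit.hit_eq (h : Hit σ t s b) : hit σ t s = b := by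
  have h' : ∃ b, Hit σ t s b := ⟨b, h⟩
  rw [hit, dif_pos h']
  exact h'.choose_spec.unique h

lemma Hit.le (h : Hit σ t s b) : t ≤ (b : ℕ) := by
  obtain ⟨k, hk, hb, hl⟩ := h; exact hb

lemma Hit.sameCycle (h : Hit σ t s b) : σ.SameCycle s b := by
  obtain ⟨k, hk, hb, hl⟩ := h
  exact ⟨k, by simpa using hk⟩

lemma Hit.reach (h : Hit σ t s b) : Reach σ t s := ⟨b, h.sameCycle, h.le⟩

lemma reach_inv : Reach σ⁻¹ t s ↔ Reach σ t s := by
  simp [Reach, sameCycle_inv]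

lemma Reach.hit_spec (h : Reach σ t s) : Hit σ t s (hit σ t s) := by
  have h' : ∃ b, Hit σ t s b := by
    obtain ⟨x, hx, ht⟩ := h
    obtain ⟨k, hk⟩ := hx.exists_nat_pow_eq
    have hex : ∃ k : ℕ, t ≤ (((σ ^ k) s : Fin n) : ℕ) := ⟨k, by rw [hk]; exact ht⟩
    refine ⟨(σ ^ (Nat.find hex)) s, Nat.find hex, rfl, Nat.find_spec hex, fun i hi => ?_⟩
    have := Nat.find_min hex hi
    omega
  rw [h'.choose_spec.hit_eq]; exact h'.choose_spec

/-- The orbit leaves the region below `t` from the preimage of its first hit. -/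
lemma Hit.pred_lt (h : Hit σ t s b) (hs : (s : ℕ) < t) : ((σ⁻¹ b : Fin n) : ℕ) < t := by
  obtain ⟨k, hk, hb, hl⟩ := h
  rcases k with _ | k
  · simp at hk; subst hk; omega
  · have := hl k (by omega)
    rw [pow_succ'] at hk
    rw [← hk]; simpa using this

lemma pow_agree {k : ℕ} (h : ∀ i < k, τ ((σ ^ i) s) = σ ((σ ^ i) s)) :
    ∀ i ≤ k, (τ ^ i) s = (σ ^ i) s := by
  intro i hi
  induction i with
  | zero => rfl
  | succ i ih =>
    rw [pow_succ', pow_succ', Perm.mul_apply, Perm.mul_apply, ih (by omega), h i (by omega)]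

/-- `τ` agrees with `σ` on all arcs of `σ` that stay below `t`. -/
def AgreeBelow (σ τ : Perm (Fin n)) (t : ℕ) : Prop :=
  ∀ i : Fin n, (i : ℕ) < t → ((σ i : Fin n) : ℕ) < t → τ i = σ i

lemma AgreeBelow.inv (h : AgreeBelow σ τ t) : AgreeBelow σ⁻¹ τ⁻¹ t := by
  intro i hi hi'
  have := h (σ⁻¹ i) hi' (by simpa using hi)
  rw [Perm.inv_eq_iff_eq, this]; simp

/-- Changing only arcs that do not stay below `t` moves the first hit from `b` to
the new image of the exit point `σ⁻¹ b`. -/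
lemma Hit.transfer (h : Hit σ t s b) (hs : (s : ℕ) < t) (ha : AgreeBelow σ τ t)
    (hle : t ≤ ((τ (σ⁻¹ b) : Fin n) : ℕ)) : Hit τ t s (τ (σ⁻¹ b)) := by
  obtain ⟨k, hk, hb, hl⟩ := h
  rcases k with _ | k
  · simp at hk; subst hk; omega
  have key : ∀ i ≤ k, (τ ^ i) s = (σ ^ i) s := by
    apply pow_agree
    intro i hi
    apply ha _ (hl i (by omega))
    have := hl (i + 1) (by omega)
    rwa [pow_succ'] at this
  have hb' : σ⁻¹ b = (σ ^ k) s := by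
    rw [← hk, pow_succ']; simp
  refine ⟨k + 1, ?_, hle, fun i hi => ?_⟩
  · rw [pow_succ', Perm.mul_apply, key k le_rfl, hb']
  · rw [key i (by omega)]; exact hl i (by omega)

lemma Tops.le (h : Tops σ y s) (hs : s < y) (hx : σ.SameCycle s x) : x ≤ y := by
  obtain ⟨⟨k, hk, -, hl⟩, ⟨l, hl', -, hll⟩⟩ := h
  obtain ⟨m, rfl⟩ := hx.exists_nat_pow_eq
  rcases l with _ | l
  · simp at hl'; subst hl'; exact absurd hs (lt_irrefl _)
  have key : ∀ m : ℕ, (∃ i ≤ k, (σ ^ m) s = (σ ^ i) s) ∨ (∃ i ≤ l + 1, (σ ^ m) s = (σ⁻¹ ^ i) s) := by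
    intro m
    induction m with
    | zero => exact Or.inl ⟨0, Nat.zero_le _, rfl⟩
    | succ m ih =>
      rcases ih with ⟨i, hi, h⟩ | ⟨i, hi, h⟩
      · rcases hi.lt_or_eq with hi | rfl
        · exact Or.inl ⟨i + 1, hi, by rw [pow_succ', pow_succ', Perm.mul_apply, h]; rfl⟩
        · refine Or.inr ⟨l, by omega, ?_⟩
          rw [pow_succ', Perm.mul_apply, h, hk, ← hl', pow_succ']; simp
      · rcases i with _ | i
        · by_cases hk0 : 1 ≤ k
          · exact Or.inl ⟨1, hk0, by rw [pow_succ', Perm.mul_apply, h]; simp⟩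
          · have : k = 0 := by omega
            subst this
            simp at hk; subst hk; exact absurd hs (lt_irrefl _)
        · exact Or.inr ⟨i, by omega, by rw [pow_succ', Perm.mul_apply, h, pow_succ']; simp⟩
  rcases key m with ⟨i, hi, h⟩ | ⟨i, hi, h⟩
  · rw [h]
    rcases hi.lt_or_eq with hi | rfl
    · exact (Fin.lt_def.2 (hl i hi)).le
    · exact hk.le
  · rw [h]
    rcases hi.lt_or_eq with hi | rfl
    · exact (Fin.lt_def.2 (hll i hi)).le
    · exact hl'.le

lemma Tops.eq (h : Tops σ y s) (h' : Tops σ x s) (hy : s < y) (hx : s < x) : y = x :=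
  le_antisymm (h'.le hx h.1.sameCycle) (h.le hy h'.1.sameCycle)

lemma reach_succ_of_not_tops (h : Reach σ y s) (hn : ¬ Tops σ y s) :
    Reach σ (y + 1) s := by
  have h1 := h.hit_spec
  have h2 := (reach_inv.2 h).hit_spec
  by_cases e1 : hit σ y s = y
  · by_cases e2 : hit σ⁻¹ y s = y
    · rw [e1] at h1; rw [e2] at h2; exact absurd ⟨h1, h2⟩ hn
    · refine ⟨_, sameCycle_inv.1 h2.sameCycle, ?_⟩
      have := h2.le
      have : (hit σ⁻¹ y s : ℕ) ≠ y := fun h => e2 (Fin.ext h)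
      omega
  · refine ⟨_, h1.sameCycle, ?_⟩
    have := h1.le
    have : (hit σ y s : ℕ) ≠ y := fun h => e1 (Fin.ext h)
    omega

/-- Composing with the transposition of two points of different cycles merges the cycles: the new
orbit of `b` runs through the old cycle of `a` and comes to `a` at the end. -/
lemma merge_core {a b : Fin n} (h : ¬ σ.SameCycle a b) :
    ∃ k : ℕ, ((σ * swap a b) ^ k) b = a ∧
      ∀ i, 1 ≤ i → i ≤ k → ((σ * swap a b) ^ i) b = (σ ^ i) a := by
  have hex : ∃ k : ℕ, (σ ^ (k + 1)) a = a := by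
    refine ⟨orderOf σ - 1, ?_⟩
    rw [Nat.sub_add_cancel (orderOf_pos σ), pow_orderOf_eq_one]; rfl
  have hfirst : (σ * swap a b) b = σ a := by simp
  have key : ∀ i ≤ Nat.find hex, ((σ * swap a b) ^ i) (σ a) = (σ ^ i) (σ a) := by
    apply pow_agree
    intro i hi
    have hne : (σ ^ i) (σ a) ≠ a := by
      have := Nat.find_min hex hi
      rwa [pow_succ, Perm.mul_apply] at this
    have hne' : (σ ^ i) (σ a) ≠ b := by
      intro hb
      apply h
      refine ⟨((i + 1 : ℕ) : ℤ), ?_⟩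
      rw [zpow_natCast, pow_succ, Perm.mul_apply, hb]
    rw [Perm.mul_apply, swap_apply_of_ne_of_ne hne hne']
  have key' : ∀ i, 1 ≤ i → i ≤ Nat.find hex + 1 → ((σ * swap a b) ^ i) b = (σ ^ i) a := by
    intro i h1 h2
    obtain ⟨j, rfl⟩ : ∃ j, i = j + 1 := ⟨i - 1, by omega⟩
    rw [pow_succ, Perm.mul_apply, hfirst, key j (by omega), pow_succ σ, Perm.mul_apply]
  exact ⟨Nat.find hex + 1, by rw [key' _ (by omega) le_rfl]; exact Nat.find_spec hex, key'⟩

lemma merge_sameCycle {a b : Fin n} (h : ¬ σ.SameCycle a b) : (σ * swap a b).SameCycle a b := by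
  obtain ⟨k, hk, -⟩ := merge_core h
  exact SameCycle.symm ⟨k, by simpa using hk⟩

lemma merge_mono {a b : Fin n} (h : ¬ σ.SameCycle a b) (hxy : σ.SameCycle x y) :
    (σ * swap a b).SameCycle x y := by
  have hab := merge_sameCycle h
  have step : ∀ z, (σ * swap a b).SameCycle z (σ z) := by
    intro z
    have ha : (σ * swap a b) a = σ b := by simp
    have hb : (σ * swap a b) b = σ a := by simp
    by_cases hza : z = a
    · subst hza
      rw [← hb]; exact sameCycle_apply_right.2 hab
    · by_cases hzb : z = b
      · subst hzb
        rw [← ha]; exact sameCycle_apply_right.2 hab.symm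
      · have : (σ * swap a b) z = σ z := by
          rw [Perm.mul_apply, swap_apply_of_ne_of_ne hza hzb]
        rw [← this]; exact sameCycle_apply_right.2 (SameCycle.refl _ _)
  obtain ⟨k, rfl⟩ := hxy.exists_nat_pow_eq
  clear hxy
  induction k with
  | zero => exact SameCycle.refl _ _
  | succ k ih =>
    rw [pow_succ', Perm.mul_apply]
    exact ih.trans (step _)

/-! ### Weights and the effect of a transposition -/

/-- The `L¹` distance of `σ` to the identity. -/
noncomputable def cost (σ : Perm (Fin n)) : ℝ :=
  ∑ i : Fin n, |((σ i : ℕ) : ℝ) - ((i : ℕ) : ℝ)|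

variable {β : ℝ}

lemma weight_eq (σ : Perm (Fin n)) : mallowsWeight n β σ = Real.exp (-β * cost σ) := rfl

lemma weight_pos (σ : Perm (Fin n)) : 0 < mallowsWeight n β σ := Real.exp_pos _

lemma cost_inv (σ : Perm (Fin n)) : cost σ⁻¹ = cost σ := by
  unfold cost
  rw [← Equiv.sum_comp σ]
  refine Finset.sum_congr rfl fun i _ => ?_
  rw [abs_sub_comm]; simp

lemma weight_inv (σ : Perm (Fin n)) : mallowsWeight n β σ⁻¹ = mallowsWeight n β σ := by
  rw [weight_eq, weight_eq, cost_inv]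

lemma cost_swap (σ : Perm (Fin n)) (a b : Fin n) :
    cost σ - cost (σ * swap a b) =
      |((σ a : ℕ) : ℝ) - a| + |((σ b : ℕ) : ℝ) - b|
        - |((σ b : ℕ) : ℝ) - a| - |((σ a : ℕ) : ℝ) - b| := by
  by_cases hab : a = b
  · subst hab
    have h1 : swap a a = (1 : Perm (Fin n)) := swap_self a
    rw [h1, mul_one]; ring
  have hb : b ∈ (Finset.univ.erase a : Finset (Fin n)) := by simp [Ne.symm hab]
  unfold cost
  rw [← Finset.add_sum_erase _ _ (Finset.mem_univ a), ← Finset.add_sum_erase _ _ hb,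
    ← Finset.add_sum_erase Finset.univ
      (fun i : Fin n => |(((σ * swap a b) i : ℕ) : ℝ) - ((i : ℕ) : ℝ)|) (Finset.mem_univ a),
    ← Finset.add_sum_erase _ (fun i : Fin n => |(((σ * swap a b) i : ℕ) : ℝ) - ((i : ℕ) : ℝ)|) hb]
  have : ∑ i ∈ (Finset.univ.erase a).erase b, |(((σ * swap a b) i : ℕ) : ℝ) - ((i : ℕ) : ℝ)|
      = ∑ i ∈ (Finset.univ.erase a).erase b, |((σ i : ℕ) : ℝ) - ((i : ℕ) : ℝ)| := by
    refine Finset.sum_congr rfl fun i hi => ?_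
    simp only [Finset.mem_erase, Finset.mem_univ, and_true] at hi
    rw [Perm.mul_apply, swap_apply_of_ne_of_ne hi.2 hi.1]
  rw [this]
  simp only [Perm.mul_apply, swap_apply_left, swap_apply_right]
  ring

lemma weight_swap (σ : Perm (Fin n)) (a b : Fin n) :
    mallowsWeight n β σ = mallowsWeight n β (σ * swap a b) *
      Real.exp (-β * (|((σ a : ℕ) : ℝ) - a| + |((σ b : ℕ) : ℝ) - b|
        - |((σ b : ℕ) : ℝ) - a| - |((σ a : ℕ) : ℝ) - b|)) := by
  rw [← cost_swap, weight_eq, weight_eq, ← Real.exp_add]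
  ring_nf

lemma weight_le_mul_swap (hβ : 0 < β) (σ : Perm (Fin n)) (a b : Fin n) :
    mallowsWeight n β σ ≤
      Real.exp (2 * β * |((a : ℕ) : ℝ) - b|) * mallowsWeight n β (σ * swap a b) := by
  rw [weight_swap σ a b, mul_comm]
  refine mul_le_mul_of_nonneg_right (Real.exp_le_exp.2 ?_) (weight_pos _).le
  have h1 := abs_sub_le ((σ b : ℕ) : ℝ) b a
  have h2 := abs_sub_le ((σ a : ℕ) : ℝ) a b
  rw [abs_sub_comm ((b : ℕ) : ℝ) a] at h1
  nlinarith

lemma weight_le_swap_mul (hβ : 0 < β) (σ : Perm (Fin n)) (a b : Fin n) :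
    mallowsWeight n β σ ≤
      Real.exp (2 * β * |((a : ℕ) : ℝ) - b|) * mallowsWeight n β (swap a b * σ) := by
  have := weight_le_mul_swap hβ σ⁻¹ a b
  rwa [weight_inv, ← weight_inv (σ⁻¹ * swap a b), mul_inv_rev, inv_inv, swap_inv] at this

/-- Exchanging the targets of two arcs that both cross `t` upwards does not change the weight. -/
lemma weight_swap_same (σ : Perm (Fin n)) (a b : Fin n)
    (ha : (a : ℕ) < t) (hb : (b : ℕ) < t)
    (ha' : t ≤ ((σ a : Fin n) : ℕ)) (hb' : t ≤ ((σ b : Fin n) : ℕ)) :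
    mallowsWeight n β σ = mallowsWeight n β (σ * swap a b) := by
  have e : (|((σ a : ℕ) : ℝ) - a| + |((σ b : ℕ) : ℝ) - b|
        - |((σ b : ℕ) : ℝ) - a| - |((σ a : ℕ) : ℝ) - b|) = 0 := by
    have h1 : ((a : ℕ) : ℝ) ≤ t := by exact_mod_cast ha.le
    have h2 : ((b : ℕ) : ℝ) ≤ t := by exact_mod_cast hb.le
    have h3 : (t : ℝ) ≤ ((σ a : ℕ) : ℝ) := by exact_mod_cast ha'
    have h4 : (t : ℝ) ≤ ((σ b : ℕ) : ℝ) := by exact_mod_cast hb'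
    rw [abs_of_nonneg (by linarith), abs_of_nonneg (by linarith), abs_of_nonneg (by linarith),
      abs_of_nonneg (by linarith)]
    ring
  rw [weight_swap σ a b, e]; simp

/-- Closing move: `e < t ≤ σ e` and `σ p = t ≤ p`. Redirecting `e` to `t` and `p` to
`σ e` multiplies the weight by at least `e^{2β (min (p, σ e) - t)}`. -/
lemma weight_swap_close (σ : Perm (Fin n)) (e p : Fin n)
    (he : (e : ℕ) < t) (he' : t ≤ ((σ e : Fin n) : ℕ)) (hp : ((σ p : Fin n) : ℕ) = t)
    (hpt : t ≤ (p : ℕ)) :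
    mallowsWeight n β σ ≤ mallowsWeight n β (σ * swap e p) *
      Real.exp (-(2 * β) * (min ((p : ℕ) : ℝ) ((σ e : ℕ) : ℝ) - t)) := by
  rw [weight_swap σ e p]
  refine mul_le_mul_of_nonneg_left (Real.exp_le_exp.2 ?_) (weight_pos _).le
  have h1 : ((e : ℕ) : ℝ) ≤ t := by exact_mod_cast he.le
  have h2 : (t : ℝ) ≤ ((p : ℕ) : ℝ) := by exact_mod_cast hpt
  have h3 : (t : ℝ) ≤ ((σ e : ℕ) : ℝ) := by exact_mod_cast he'
  have h4 : ((σ p : ℕ) : ℝ) = t := by exact_mod_cast hp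
  rw [h4, abs_of_nonneg (by linarith : (0 : ℝ) ≤ ((σ e : ℕ) : ℝ) - e),
    abs_of_nonpos (by linarith : (t : ℝ) - ((p : ℕ) : ℝ) ≤ 0),
    abs_of_nonneg (by linarith : (0 : ℝ) ≤ (t : ℝ) - ((e : ℕ) : ℝ))]
  rcases le_total ((p : ℕ) : ℝ) ((σ e : ℕ) : ℝ) with h | h
  · rw [min_eq_left h, abs_of_nonneg (by linarith)]; nlinarith
  · rw [min_eq_right h, abs_of_nonpos (by linarith)]; nlinarith

/-- Uncrossing move: an upward arc `a → σ a` and a downward arc `v → σ v` across `t` are replaced by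
`a → σ v` below `t` and `v → σ a` above `t`. -/
lemma weight_swap_uncross (σ : Perm (Fin n)) (a v : Fin n)
    (ha : (a : ℕ) < t) (ha' : t ≤ ((σ a : Fin n) : ℕ))
    (hv : t ≤ (v : ℕ)) (hv' : ((σ v : Fin n) : ℕ) < t) :
    mallowsWeight n β σ = mallowsWeight n β (σ * swap a v) *
      (Real.exp (-(2 * β) * (t - max ((a : ℕ) : ℝ) ((σ v : ℕ) : ℝ))) *
       Real.exp (-(2 * β) * (min ((v : ℕ) : ℝ) ((σ a : ℕ) : ℝ) - t))) := by
  rw [weight_swap σ a v, ← Real.exp_add]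
  congr 2
  have h1 : ((a : ℕ) : ℝ) ≤ t := by exact_mod_cast ha.le
  have h2 : (t : ℝ) ≤ ((σ a : ℕ) : ℝ) := by exact_mod_cast ha'
  have h3 : (t : ℝ) ≤ ((v : ℕ) : ℝ) := by exact_mod_cast hv
  have h4 : ((σ v : ℕ) : ℝ) ≤ t := by exact_mod_cast hv'.le
  rw [abs_of_nonneg (by linarith : (0 : ℝ) ≤ ((σ a : ℕ) : ℝ) - a),
    abs_of_nonpos (by linarith : ((σ v : ℕ) : ℝ) - ((v : ℕ) : ℝ) ≤ 0)]
  rcases le_total ((v : ℕ) : ℝ) ((σ a : ℕ) : ℝ) with h | h <;>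
  rcases le_total ((a : ℕ) : ℝ) ((σ v : ℕ) : ℝ) with h' | h'
  · rw [min_eq_left h, max_eq_right h', abs_of_nonneg (by linarith), abs_of_nonneg (by linarith)]
    ring
  · rw [min_eq_left h, max_eq_left h', abs_of_nonpos (by linarith), abs_of_nonneg (by linarith)]
    ring
  · rw [min_eq_right h, max_eq_right h', abs_of_nonneg (by linarith), abs_of_nonpos (by linarith)]
    ring
  · rw [min_eq_right h, max_eq_left h', abs_of_nonpos (by linarith), abs_of_nonpos (by linarith)]
    ring

/-! ### Geometric sums -/

/-- `2 / (1 - e^{-2β})`, of order `max (1/β) 1`. -/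
noncomputable def bnd (β : ℝ) : ℝ := 2 / (1 - Real.exp (-(2 * β)))

lemma exp_neg_lt_one (hβ : 0 < β) : Real.exp (-(2 * β)) < 1 := by
  rw [Real.exp_lt_one_iff]; linarith

lemma two_le_bnd (hβ : 0 < β) : 2 ≤ bnd β := by
  have h := exp_neg_lt_one hβ
  rw [bnd, le_div_iff₀ (by linarith)]
  have := Real.exp_pos (-(2 * β))
  linarith

lemma bnd_le (hβ : 0 < β) : bnd β ≤ 1 / β + 2 := by
  have h := exp_neg_lt_one hβ
  rw [bnd, div_le_iff₀ (by linarith)]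
  have h1 : Real.exp (-(2 * β)) ≤ 1 / (1 + 2 * β) := by
    rw [Real.exp_neg, ← one_div]
    apply one_div_le_one_div_of_le (by linarith)
    linarith [Real.add_one_le_exp (2 * β)]
  have h2 : (1 / β + 2) * (1 - 1 / (1 + 2 * β)) = 2 := by
    field_simp; ring
  have h3 : 0 < 1 / β + 2 := by positivity
  nlinarith

lemma exp_eq_pow (m : ℕ) : Real.exp (-(2 * β) * m) = Real.exp (-(2 * β)) ^ m := by
  rw [← Real.exp_nat_mul]; ring_nf

lemma geom_up (hβ : 0 < β) (n t : ℕ) :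
    ∑ i : Fin n, (if t ≤ (i : ℕ) then Real.exp (-(2 * β) * (((i : ℕ) : ℝ) - t)) else 0)
      ≤ bnd β / 2 := by
  have h := exp_neg_lt_one hβ
  have h0 := Real.exp_pos (-(2 * β))
  set r := Real.exp (-(2 * β)) with hr
  have key : ∀ n : ℕ, ∑ i ∈ Finset.range n,
      (if t ≤ i then Real.exp (-(2 * β) * ((i : ℝ) - t)) else 0) ≤ (1 - r ^ (n - t)) / (1 - r) := by
    intro n
    induction n with
    | zero => simp
    | succ n ih =>
      rw [Finset.sum_range_succ]
      by_cases hn : t ≤ n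
      · rw [if_pos hn, ← Nat.cast_sub hn, exp_eq_pow, ← hr]
        have e : (1 - r ^ (n + 1 - t)) / (1 - r) = (1 - r ^ (n - t)) / (1 - r) + r ^ (n - t) := by
          rw [Nat.sub_add_comm hn, pow_succ]
          field_simp [(by linarith : (1 - r) ≠ 0)]
          ring
        rw [e]; linarith
      · rw [if_neg hn]
        have e1 : n - t = 0 := by omega
        have e2 : n + 1 - t = 0 := by omega
        rw [e1] at ih; rw [e2]; linarith
  rw [Fin.sum_univ_eq_sum_range (fun i => if t ≤ i then Real.exp (-(2 * β) * ((i : ℝ) - t)) else 0)]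
  refine (key n).trans ?_
  rw [bnd, ← hr, div_div, mul_comm (1 - r) 2, ← div_div, div_self two_ne_zero]
  apply div_le_div_of_nonneg_right _ (by linarith)
  have : 0 ≤ r ^ (n - t) := by positivity
  linarith

lemma geom_down (hβ : 0 < β) (n t : ℕ) :
    ∑ i : Fin n, (if (i : ℕ) < t then Real.exp (-(2 * β) * ((t : ℝ) - ((i : ℕ) : ℝ))) else 0)
      ≤ bnd β / 2 := by
  have h := exp_neg_lt_one hβ
  have h0 := Real.exp_pos (-(2 * β))
  set r := Real.exp (-(2 * β)) with hr
  have key : ∀ n : ℕ, ∑ i ∈ Finset.range n,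
      (if i < t then Real.exp (-(2 * β) * ((t : ℝ) - i)) else 0) ≤ r * r ^ (t - n) / (1 - r) := by
    intro n
    induction n with
    | zero => simp; have : (0 : ℝ) ≤ 1 - r := by linarith
              positivity
    | succ n ih =>
      rw [Finset.sum_range_succ]
      by_cases hn : n < t
      · rw [if_pos hn, ← Nat.cast_sub hn.le, exp_eq_pow, ← hr]
        have e : r * r ^ (t - (n + 1)) / (1 - r) = r * r ^ (t - n) / (1 - r) + r ^ (t - n) := by
          obtain ⟨m, hm⟩ : ∃ m, t = n + 1 + m := ⟨t - (n + 1), by omega⟩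
          have e1 : t - (n + 1) = m := by omega
          have e2 : t - n = m + 1 := by omega
          rw [e1, e2, pow_succ]
          field_simp [(by linarith : (1 - r) ≠ 0)]
          ring
        rw [e]; linarith
      · rw [if_neg hn]
        have e1 : t - n = 0 := by omega
        have e2 : t - (n + 1) = 0 := by omega
        rw [e1] at ih; rw [e2]; linarith
  rw [Fin.sum_univ_eq_sum_range (fun i => if i < t then Real.exp (-(2 * β) * ((t : ℝ) - i)) else 0)]
  refine (key n).trans ?_
  rw [bnd, ← hr, div_div, mul_comm (1 - r) 2, ← div_div, div_self two_ne_zero]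
  apply div_le_div_of_nonneg_right _ (by linarith)
  have h1 : r ^ (t - n) ≤ 1 := pow_le_one₀ h0.le h.le
  nlinarith

/-! ### Crossing numbers and fibre sums -/

/-- The sources of the arcs `i → σ i` crossing `t` upwards. -/
noncomputable def crossUp (σ : Perm (Fin n)) (t : ℕ) : Finset (Fin n) :=
  Finset.univ.filter fun i => (i : ℕ) < t ∧ t ≤ ((σ i : Fin n) : ℕ)

/-- The sources of the arcs `v → σ v` crossing `t` downwards. -/
noncomputable def crossDown (σ : Perm (Fin n)) (t : ℕ) : Finset (Fin n) :=
  Finset.univ.filter fun v => t ≤ (v : ℕ) ∧ ((σ v : Fin n) : ℕ) < t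

lemma card_crossDown (σ : Perm (Fin n)) (t : ℕ) : (crossDown σ t).card = (crossUp σ t).card := by
  have h1 : (Finset.univ.filter fun i : Fin n => ((σ i : Fin n) : ℕ) < t).card
      = (Finset.univ.filter fun i : Fin n => (i : ℕ) < t).card := by
    apply Finset.card_bij (fun i _ => σ i)
    · intro a ha; simpa using ha
    · intro a _ b _ h; exact σ.injective h
    · intro b hb; exact ⟨σ⁻¹ b, by simpa using hb, by simp⟩
  have h2 : (Finset.univ.filter fun i : Fin n => ((σ i : Fin n) : ℕ) < t).card
      = (crossDown σ t).card
        + (Finset.univ.filter fun i : Fin n => (i : ℕ) < t ∧ ((σ i : Fin n) : ℕ) < t).card := by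
    rw [crossDown, ← Finset.card_union_of_disjoint]
    · congr 1; ext i; simp; omega
    · rw [Finset.disjoint_filter]; intro i _ h; omega
  have h3 : (Finset.univ.filter fun i : Fin n => (i : ℕ) < t).card
      = (crossUp σ t).card
        + (Finset.univ.filter fun i : Fin n => (i : ℕ) < t ∧ ((σ i : Fin n) : ℕ) < t).card := by
    rw [crossUp, ← Finset.card_union_of_disjoint]
    · congr 1; ext i; simp; omega
    · rw [Finset.disjoint_filter]; intro i _ h; omega
  omega

/-- Bound for `e^{-2β (min (v, σ v) - t)}` along arcs above `t`. -/
noncomputable def above (β : ℝ) (σ : Perm (Fin n)) (t : ℕ) (v : Fin n) : ℝ :=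
  (if t ≤ (v : ℕ) then Real.exp (-(2 * β) * (((v : ℕ) : ℝ) - t)) else 0) +
  (if t ≤ ((σ v : Fin n) : ℕ) then Real.exp (-(2 * β) * (((σ v : ℕ) : ℝ) - t)) else 0)

/-- Bound for `e^{-2β (t - max (i, σ i))}` along arcs below `t`. -/
noncomputable def below (β : ℝ) (σ : Perm (Fin n)) (t : ℕ) (i : Fin n) : ℝ :=
  (if (i : ℕ) < t then Real.exp (-(2 * β) * ((t : ℝ) - ((i : ℕ) : ℝ))) else 0) +
  (if ((σ i : Fin n) : ℕ) < t then Real.exp (-(2 * β) * ((t : ℝ) - ((σ i : ℕ) : ℝ))) else 0)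

lemma above_nonneg (σ : Perm (Fin n)) (v : Fin n) : 0 ≤ above β σ t v := by
  unfold above; positivity

lemma below_nonneg (σ : Perm (Fin n)) (v : Fin n) : 0 ≤ below β σ t v := by
  unfold below; positivity

lemma sum_above (hβ : 0 < β) (σ : Perm (Fin n)) : ∑ v, above β σ t v ≤ bnd β := by
  unfold above
  rw [Finset.sum_add_distrib, Equiv.sum_comp σ
    (fun v => if t ≤ (v : ℕ) then Real.exp (-(2 * β) * (((v : ℕ) : ℝ) - t)) else 0)]
  have := geom_up hβ n t
  linarith

lemma sum_below (hβ : 0 < β) (σ : Perm (Fin n)) : ∑ v, below β σ t v ≤ bnd β := by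
  unfold below
  rw [Finset.sum_add_distrib, Equiv.sum_comp σ
    (fun v => if (v : ℕ) < t then Real.exp (-(2 * β) * ((t : ℝ) - ((v : ℕ) : ℝ))) else 0)]
  have := geom_down hβ n t
  linarith

lemma le_above {σ : Perm (Fin n)} {v u : Fin n} (hu : σ v = u) (h1 : t ≤ (v : ℕ))
    (h2 : t ≤ (u : ℕ)) :
    Real.exp (-(2 * β) * (min ((v : ℕ) : ℝ) ((u : ℕ) : ℝ) - t)) ≤ above β σ t v := by
  subst hu
  rw [above, if_pos h1, if_pos h2]
  rcases min_choice ((v : ℕ) : ℝ) ((σ v : ℕ) : ℝ) with h | h <;> rw [h]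
  · exact le_add_of_nonneg_right (Real.exp_pos _).le
  · exact le_add_of_nonneg_left (Real.exp_pos _).le

lemma le_below {σ : Perm (Fin n)} {v u : Fin n} (hu : σ v = u) (h1 : (v : ℕ) < t)
    (h2 : (u : ℕ) < t) :
    Real.exp (-(2 * β) * (t - max ((v : ℕ) : ℝ) ((u : ℕ) : ℝ))) ≤ below β σ t v := by
  subst hu
  rw [below, if_pos h1, if_pos h2]
  rcases max_choice ((v : ℕ) : ℝ) ((σ v : ℕ) : ℝ) with h | h <;> rw [h]
  · exact le_add_of_nonneg_right (Real.exp_pos _).le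
  · exact le_add_of_nonneg_left (Real.exp_pos _).le

/-- Comparison of sums along a map with a left inverse. -/
lemma sum_transport {ι κ : Type*} (S : Finset ι) (T : Finset κ) (f : ι → ℝ) (g : κ → ℝ)
    (φ : ι → κ) (ψ : κ → ι) (hφ : ∀ i ∈ S, φ i ∈ T) (hψ : ∀ i ∈ S, ψ (φ i) = i)
    (hfg : ∀ i ∈ S, f i ≤ g (φ i)) (hg : ∀ k ∈ T, 0 ≤ g k) :
    ∑ i ∈ S, f i ≤ ∑ k ∈ T, g k := by
  have hinj : Set.InjOn φ (S : Set ι) := by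
    intro a ha b hb hab
    rw [← hψ a ha, ← hψ b hb, hab]
  calc ∑ i ∈ S, f i ≤ ∑ i ∈ S, g (φ i) := Finset.sum_le_sum hfg
    _ = ∑ k ∈ S.image φ, g k := (Finset.sum_image hinj).symm
    _ ≤ ∑ k ∈ T, g k := by
      apply Finset.sum_le_sum_of_subset_of_nonneg
      · intro k hk
        obtain ⟨i, hi, rfl⟩ := Finset.mem_image.1 hk
        exact hφ i hi
      · intro k hk _; exact hg k hk

/-! ### Second moment of the crossing number -/

lemma agreeBelow_mul_swap {a c : Fin n}
    (ha : t ≤ (a : ℕ) ∨ t ≤ ((σ a : Fin n) : ℕ)) (hc : t ≤ (c : ℕ) ∨ t ≤ ((σ c : Fin n) : ℕ)) :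
    AgreeBelow σ (σ * swap a c) t := by
  intro i hi hi'
  rw [Perm.mul_apply, swap_apply_of_ne_of_ne]
  · rintro rfl; omega
  · rintro rfl; omega

/-- Uncrossing a pair of arcs across `t` keeps the cycle of `s` open at `t`, unless both arcs are
the ones adjacent to the excursion of `s` below `t`. -/
lemma reach_uncross (hs : (s : ℕ) < t) (h : Reach σ t s) {a v : Fin n}
    (ha : (a : ℕ) < t) (ha' : t ≤ ((σ a : Fin n) : ℕ))
    (hv : t ≤ (v : ℕ))
    (hne : (a, v) ≠ (σ⁻¹ (hit σ t s), hit σ⁻¹ t s)) : Reach (σ * swap a v) t s := by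
  have hag : AgreeBelow σ (σ * swap a v) t := agreeBelow_mul_swap (Or.inr ha') (Or.inl hv)
  have h1 := h.hit_spec
  have h2 := (reach_inv.2 h).hit_spec
  by_cases e1 : a = σ⁻¹ (hit σ t s)
  · have e2 : v ≠ hit σ⁻¹ t s := fun e2 => hne (by rw [← e1, ← e2])
    have e3 : (σ * swap a v)⁻¹ (σ (hit σ⁻¹ t s)) = hit σ⁻¹ t s := by
      rw [Perm.inv_eq_iff_eq, Perm.mul_apply, swap_apply_of_ne_of_ne _ (Ne.symm e2)]
      intro h; have := h2.le; rw [h] at this; omega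
    have := h2.transfer hs hag.inv (by rw [inv_inv, e3]; exact h2.le)
    exact reach_inv.1 this.reach
  · have e3 : (σ * swap a v) (σ⁻¹ (hit σ t s)) = hit σ t s := by
      rw [Perm.mul_apply, swap_apply_of_ne_of_ne (Ne.symm e1)]
      · simp
      · intro h; have := h1.pred_lt hs; rw [h] at this; omega
    exact (h1.transfer hs hag (by rw [e3]; exact h1.le)).reach

/-- Conditionally on the cycle of `s` being open at `t`, the crossing number at `t` has second
moment at most `1 + (bnd β)²`. -/
lemma second_moment (hβ : 0 < β) (hs : (s : ℕ) < t) :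
    ∑ σ ∈ Finset.univ.filter (fun σ : Perm (Fin n) => Reach σ t s),
        mallowsWeight n β σ * ((crossUp σ t).card : ℝ) ^ 2
      ≤ (1 + bnd β ^ 2) * ∑ σ ∈ Finset.univ.filter (fun σ : Perm (Fin n) => Reach σ t s),
        mallowsWeight n β σ := by
  set R := Finset.univ.filter (fun σ : Perm (Fin n) => Reach σ t s) with hR
  set Q : Perm (Fin n) → Finset (Fin n × Fin n) := fun σ =>
    ((crossUp σ t) ×ˢ (crossDown σ t)).erase (σ⁻¹ (hit σ t s), hit σ⁻¹ t s) with hQ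
  have hcard : ∀ σ, ((crossUp σ t).card : ℝ) ^ 2 ≤ 1 + ((Q σ).card : ℝ) := by
    intro σ
    have h1 : ((crossUp σ t) ×ˢ (crossDown σ t)).card ≤ (Q σ).card + 1 :=
      Nat.sub_le_iff_le_add.1 Finset.pred_card_le_card_erase
    rw [Finset.card_product, card_crossDown] at h1
    have : (((crossUp σ t).card * (crossUp σ t).card : ℕ) : ℝ) ≤ (((Q σ).card + 1 : ℕ) : ℝ) := by
      exact_mod_cast h1
    push_cast at this
    nlinarith
  have main : ∑ σ ∈ R, ∑ _q ∈ Q σ, mallowsWeight n β σ ≤ bnd β ^ 2 * ∑ σ ∈ R, mallowsWeight n β σ := by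
    rw [Finset.sum_sigma']
    calc _ ≤ ∑ k ∈ R ×ˢ (Finset.univ : Finset (Fin n × Fin n)),
            mallowsWeight n β k.1 * (below β k.1 t k.2.1 * above β k.1 t k.2.2) := by
          refine sum_transport _ _ _ _ (fun i => (i.1 * swap i.2.1 i.2.2, i.2))
            (fun k => ⟨k.1 * swap k.2.1 k.2.2, k.2⟩) ?_ ?_ ?_ ?_
          · rintro ⟨σ, a, v⟩ h
            simp only [hR, hQ, crossUp, crossDown, Finset.mem_sigma, Finset.mem_filter,
              Finset.mem_univ, true_and, Finset.mem_erase, Finset.mem_product] at h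
            obtain ⟨h1, h2, ⟨h3, h4⟩, h5, h6⟩ := h
            simp only [hR, Finset.mem_product, Finset.mem_filter, Finset.mem_univ, true_and,
              and_true]
            exact reach_uncross hs h1 h3 h4 h5 h2
          · rintro ⟨σ, a, v⟩ h
            simp [mul_assoc]
          · rintro ⟨σ, a, v⟩ h
            simp only [hR, hQ, crossUp, crossDown, Finset.mem_sigma, Finset.mem_filter,
              Finset.mem_univ, true_and, Finset.mem_erase, Finset.mem_product] at h
            obtain ⟨h1, h2, ⟨h3, h4⟩, h5, h6⟩ := h
            simp only
            rw [weight_swap_uncross σ a v h3 h4 h5 h6]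
            refine mul_le_mul_of_nonneg_left ?_ (weight_pos _).le
            refine mul_le_mul (le_below ?_ h3 h6) (le_above ?_ h5 h4) (Real.exp_pos _).le
              (below_nonneg _ _)
            · simp
            · simp
          · rintro ⟨σ, a, v⟩ h
            exact mul_nonneg (weight_pos _).le (mul_nonneg (below_nonneg _ _) (above_nonneg _ _))
      _ = ∑ σ ∈ R, mallowsWeight n β σ * ((∑ i, below β σ t i) * (∑ v, above β σ t v)) := by
          rw [Finset.sum_product]
          refine Finset.sum_congr rfl fun σ _ => ?_
          dsimp only
          rw [← Finset.mul_sum, Finset.sum_mul_sum, ← Finset.univ_product_univ,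
            Finset.sum_product]
      _ ≤ ∑ σ ∈ R, mallowsWeight n β σ * (bnd β * bnd β) := by
          refine Finset.sum_le_sum fun σ _ => ?_
          refine mul_le_mul_of_nonneg_left ?_ (weight_pos _).le
          exact mul_le_mul (sum_below hβ σ) (sum_above hβ σ)
            (Finset.sum_nonneg fun v _ => above_nonneg _ _) (by linarith [two_le_bnd hβ])
      _ = _ := by rw [← Finset.sum_mul]; ring
  calc _ ≤ ∑ σ ∈ R, (mallowsWeight n β σ + ∑ _q ∈ Q σ, mallowsWeight n β σ) := by
        refine Finset.sum_le_sum fun σ _ => ?_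
        rw [Finset.sum_const, nsmul_eq_mul]
        nlinarith [hcard σ, weight_pos (β := β) σ]
    _ ≤ _ := by rw [Finset.sum_add_distrib]; linarith

/-! ### Closing an open cycle at the next point -/

lemma close_step_fwd (σ : Perm (Fin n)) (e p : Fin n)
    (he : (e : ℕ) < t) (he' : t ≤ ((σ e : Fin n) : ℕ)) (hp : ((σ p : Fin n) : ℕ) = t) :
    mallowsWeight n β σ ≤ mallowsWeight n β (σ * swap e p) *
      (if (p : ℕ) < t then 1 else
        Real.exp (-(2 * β) * (min ((p : ℕ) : ℝ) ((σ e : ℕ) : ℝ) - t))) := by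
  split_ifs with h
  · rw [mul_one]
    exact (weight_swap_same σ e p he h he' hp.ge).le
  · exact weight_swap_close σ e p he he' hp (not_lt.1 h)

lemma close_step_bwd (τ : Perm (Fin n)) (y v : Fin n)
    (hv : (y : ℕ) ≤ (v : ℕ)) (hv' : ((τ v : Fin n) : ℕ) < y) :
    mallowsWeight n β τ ≤ mallowsWeight n β (τ * swap y v) *
      (if ((τ y : Fin n) : ℕ) < y then 1 else
        Real.exp (-(2 * β) * (min ((τ y : ℕ) : ℝ) ((v : ℕ) : ℝ) - (y : ℕ)))) := by
  have h := close_step_fwd (β := β) (t := (y : ℕ)) τ⁻¹ (τ v) (τ y) hv' (by simpa using hv) (by simp)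
  have e1 : τ⁻¹ * swap (τ v) (τ y) = (τ * swap y v)⁻¹ := by
    rw [mul_inv_rev, swap_inv, swap_mul_eq_mul_swap, inv_inv, swap_comm]
  rw [e1, weight_inv, weight_inv] at h
  simpa using h

/-- The permutation obtained from `σ` by closing the cycle of `s` at `y`: the excursion of `s`
below `y` is entered from `y` and left to `y`. -/
noncomputable def closeAt (σ : Perm (Fin n)) (y s : Fin n) : Perm (Fin n) :=
  σ * swap (σ⁻¹ (hit σ y s)) (σ⁻¹ y) * swap y (hit σ⁻¹ y s)

/-- All properties of `closeAt`. With `e` the exit point of the excursion, `p` the preimage of `y`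
and `v` the point from which the excursion is entered, the old permutation is recovered from the new
one together with `p` and `v`, and its weight is controlled by the new arcs leaving `p` and `v`. -/
lemma closeAt_spec (hs : s < y) (h : Reach σ y s) :
    Tops (closeAt σ y s) y s ∧
    closeAt σ y s * swap y (hit σ⁻¹ y s) * swap ((closeAt σ y s)⁻¹ y) (σ⁻¹ y) = σ ∧
    crossUp (closeAt σ y s) y = crossUp σ y ∧
    mallowsWeight n β σ ≤ mallowsWeight n β (closeAt σ y s) *
      (((if σ⁻¹ y ∈ crossUp (closeAt σ y s) y then 1 else 0)
          + above β (closeAt σ y s) y (σ⁻¹ y)) *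
       ((if hit σ⁻¹ y s ∈ crossDown (closeAt σ y s) y then 1 else 0)
          + above β (closeAt σ y s) y (hit σ⁻¹ y s))) := by
  have hs' : (s : ℕ) < (y : ℕ) := hs
  have h1 := h.hit_spec
  have h2 := (reach_inv.2 h).hit_spec
  have he := h1.pred_lt hs'
  have hd := h2.pred_lt hs'
  rw [inv_inv] at hd
  have hv := h2.le
  have hu := h1.le
  set u := hit σ y s with hu_def
  set v := hit σ⁻¹ y s with hv_def
  set e := σ⁻¹ u with he_def
  set p := σ⁻¹ y with hp_def
  have hσe : σ e = u := by simp [he_def]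
  have hσp : σ p = y := by simp [hp_def]
  set τ := σ * swap e p with hτ
  have hρ : closeAt σ y s = τ * swap y v := rfl
  rw [hρ]
  have hτe : τ e = y := by rw [hτ, Perm.mul_apply, swap_apply_left, hσp]
  have hτp : τ p = u := by rw [hτ, Perm.mul_apply, swap_apply_right, hσe]
  have hve : v ≠ e := by rintro h; rw [h] at hv; omega
  have hvp : v ≠ p := by rintro h; rw [h, hσp] at hd; omega
  have hye : y ≠ e := by rintro h; rw [← h] at he; omega
  have hτv : τ v = σ v := by rw [hτ, Perm.mul_apply, swap_apply_of_ne_of_ne hve hvp]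
  have hρe : (τ * swap y v) e = y := by
    rw [Perm.mul_apply, swap_apply_of_ne_of_ne (Ne.symm hye) (Ne.symm hve), hτe]
  have hρy : (τ * swap y v) y = σ v := by rw [Perm.mul_apply, swap_apply_left, hτv]
  have hρv : (τ * swap y v) v = τ y := by rw [Perm.mul_apply, swap_apply_right]
  have hag : AgreeBelow σ (τ * swap y v) y := by
    intro i hi hi'
    have n1 : i ≠ y := by rintro rfl; omega
    have n2 : i ≠ v := by rintro rfl; omega
    have n3 : i ≠ e := by rintro rfl; rw [hσe] at hi'; omega
    have n4 : i ≠ p := by rintro rfl; rw [hσp] at hi'; omega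
    rw [Perm.mul_apply, swap_apply_of_ne_of_ne n1 n2, hτ, Perm.mul_apply,
      swap_apply_of_ne_of_ne n3 n4]
  have hρinv : (τ * swap y v)⁻¹ (σ v) = y := by rw [Perm.inv_eq_iff_eq, hρy]
  have hρinv' : (τ * swap y v)⁻¹ y = e := by rw [Perm.inv_eq_iff_eq, hρe]
  refine ⟨⟨?_, ?_⟩, ?_, ?_, ?_⟩
  · have := h1.transfer hs' hag (by rw [← he_def, hρe])
    rwa [← he_def, hρe] at this
  · have := h2.transfer hs' hag.inv (by rw [inv_inv, hρinv])
    rwa [inv_inv, hρinv] at this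
  · rw [hρinv', hτ]; simp [mul_assoc]
  · ext i
    simp only [crossUp, Finset.mem_filter, Finset.mem_univ, true_and, and_congr_right_iff]
    intro hi
    have n1 : i ≠ y := by rintro rfl; omega
    have n2 : i ≠ v := by rintro rfl; omega
    rw [Perm.mul_apply, swap_apply_of_ne_of_ne n1 n2]
    by_cases n3 : i = e
    · subst n3; rw [hτe, hσe]; simp [hu]
    by_cases n4 : i = p
    · rw [n4, hτp, hσp]; simp [hu]
    rw [hτ, Perm.mul_apply, swap_apply_of_ne_of_ne n3 n4]
  · have s1 := close_step_fwd (β := β) (t := (y : ℕ)) σ e p he (by rw [hσe]; exact hu) (by rw [hσp])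
    have s2 := close_step_bwd (β := β) τ y v hv (by rw [hτv]; exact hd)
    rw [← hτ, hσe] at s1
    have f1 : (if (p : ℕ) < y then (1 : ℝ) else
        Real.exp (-(2 * β) * (min ((p : ℕ) : ℝ) ((u : ℕ) : ℝ) - (y : ℕ))))
        ≤ (if p ∈ crossUp (τ * swap y v) y then 1 else 0) + above β (τ * swap y v) y p := by
      by_cases hpy : p = y
      · rw [hpy, if_neg (lt_irrefl _), min_eq_left (by exact_mod_cast hu)]
        have : (1 : ℝ) ≤ above β (τ * swap y v) y y := by
          rw [above, if_pos le_rfl]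
          simp only [sub_self, mul_zero, Real.exp_zero]
          exact le_add_of_nonneg_right (by positivity)
        simp only [sub_self, mul_zero, Real.exp_zero]
        refine this.trans (le_add_of_nonneg_left (by positivity))
      · have hρp : (τ * swap y v) p = u := by
          rw [Perm.mul_apply, swap_apply_of_ne_of_ne hpy (Ne.symm hvp), hτp]
        split_ifs with c1 c2 c2
        · exact le_add_of_nonneg_right (above_nonneg _ _)
        · exfalso; apply c2
          simp only [crossUp, Finset.mem_filter, Finset.mem_univ, true_and]
          rw [hρp]; exact ⟨c1, hu⟩
        · exact (le_above hρp (not_lt.1 c1) hu).trans (le_add_of_nonneg_left zero_le_one)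
        · rw [zero_add]; exact le_above hρp (not_lt.1 c1) hu
    have f2 : (if ((τ y : Fin n) : ℕ) < y then (1 : ℝ) else
        Real.exp (-(2 * β) * (min ((τ y : ℕ) : ℝ) ((v : ℕ) : ℝ) - (y : ℕ))))
        ≤ (if v ∈ crossDown (τ * swap y v) y then 1 else 0) + above β (τ * swap y v) y v := by
      split_ifs with c1 c2 c2
      · exact le_add_of_nonneg_right (above_nonneg _ _)
      · exfalso; apply c2
        simp only [crossDown, Finset.mem_filter, Finset.mem_univ, true_and]
        rw [hρv]; exact ⟨hv, c1⟩
      · rw [min_comm]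
        exact (le_above hρv hv (not_lt.1 c1)).trans (le_add_of_nonneg_left zero_le_one)
      · rw [zero_add, min_comm]; exact le_above hρv hv (not_lt.1 c1)
    have g1 : (0 : ℝ) ≤ (if (p : ℕ) < y then (1 : ℝ) else
        Real.exp (-(2 * β) * (min ((p : ℕ) : ℝ) ((u : ℕ) : ℝ) - (y : ℕ)))) := by positivity
    have g2 : (0 : ℝ) ≤ (if v ∈ crossDown (τ * swap y v) y then (1 : ℝ) else 0)
        + above β (τ * swap y v) y v :=
      add_nonneg (by positivity) (above_nonneg _ _)
    calc _ ≤ _ := s1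
      _ ≤ _ := mul_le_mul_of_nonneg_right s2 g1
      _ = mallowsWeight n β (τ * swap y v) * (_ * _) := by rw [mul_assoc, mul_comm (ite _ _ _)]
      _ ≤ _ := mul_le_mul_of_nonneg_left (mul_le_mul f1 f2 (by positivity) (g1.trans f1))
          (weight_pos _).le

lemma closing (hβ : 0 < β) (hs : s < y) :
    ∑ σ ∈ Finset.univ.filter (fun σ : Perm (Fin n) => Reach σ y s),
        mallowsWeight n β σ / (((crossUp σ y).card : ℝ) + bnd β) ^ 2
      ≤ ∑ σ ∈ Finset.univ.filter (fun σ : Perm (Fin n) => Tops σ y s), mallowsWeight n β σ := by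
  set T := Finset.univ.filter (fun σ : Perm (Fin n) => Tops σ y s) with hT
  have hB := two_le_bnd hβ
  set A : Perm (Fin n) → Fin n → ℝ := fun σ p =>
    (if p ∈ crossUp σ y then 1 else 0) + above β σ y p with hA
  set D : Perm (Fin n) → Fin n → ℝ := fun σ v =>
    (if v ∈ crossDown σ y then 1 else 0) + above β σ y v with hD
  have hA0 : ∀ σ p, 0 ≤ A σ p := fun σ p => add_nonneg (by positivity) (above_nonneg _ _)
  have hD0 : ∀ σ p, 0 ≤ D σ p := fun σ p => add_nonneg (by positivity) (above_nonneg _ _)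
  have hAs : ∀ σ, ∑ p, A σ p ≤ ((crossUp σ y).card : ℝ) + bnd β := by
    intro σ
    simp only [hA]
    rw [Finset.sum_add_distrib]
    have := sum_above (t := (y : ℕ)) hβ σ
    simp
    linarith
  have hDs : ∀ σ, ∑ p, D σ p ≤ ((crossUp σ y).card : ℝ) + bnd β := by
    intro σ
    simp only [hD]
    rw [Finset.sum_add_distrib]
    have := sum_above (t := (y : ℕ)) hβ σ
    rw [← card_crossDown]
    simp
    linarith
  calc _ ≤ ∑ k ∈ T ×ˢ (Finset.univ : Finset (Fin n × Fin n)),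
        mallowsWeight n β k.1 * (A k.1 k.2.1 * D k.1 k.2.2) /
          (((crossUp k.1 y).card : ℝ) + bnd β) ^ 2 := by
        refine sum_transport _ _ _ _ (fun σ => (closeAt σ y s, (σ⁻¹ y, hit σ⁻¹ y s)))
          (fun k => k.1 * swap y k.2.2 * swap (k.1⁻¹ y) k.2.1) ?_ ?_ ?_ ?_
        · intro σ h
          simp only [Finset.mem_filter, Finset.mem_univ, true_and] at h
          simp only [hT, Finset.mem_product, Finset.mem_filter, Finset.mem_univ, true_and,
            and_true]
          exact (closeAt_spec (β := β) hs h).1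
        · intro σ h
          simp only [Finset.mem_filter, Finset.mem_univ, true_and] at h
          exact (closeAt_spec (β := β) hs h).2.1
        · intro σ h
          simp only [Finset.mem_filter, Finset.mem_univ, true_and] at h
          obtain ⟨-, -, h3, h4⟩ := closeAt_spec (β := β) hs h
          dsimp only
          rw [← h3]
          exact div_le_div_of_nonneg_right h4 (by positivity)
        · rintro ⟨σ, p, v⟩ _
          exact div_nonneg (mul_nonneg (weight_pos _).le (mul_nonneg (hA0 _ _) (hD0 _ _)))
            (by positivity)
    _ = ∑ σ ∈ T, mallowsWeight n β σ * ((∑ p, A σ p) * (∑ v, D σ v)) /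
          (((crossUp σ y).card : ℝ) + bnd β) ^ 2 := by
        rw [Finset.sum_product]
        refine Finset.sum_congr rfl fun σ _ => ?_
        dsimp only
        rw [← Finset.sum_div, ← Finset.mul_sum, Finset.sum_mul_sum, ← Finset.univ_product_univ,
          Finset.sum_product]
    _ ≤ _ := by
        refine Finset.sum_le_sum fun σ _ => ?_
        have hpos : (0 : ℝ) < ((crossUp σ y).card : ℝ) + bnd β := by positivity
        rw [div_le_iff₀ (by positivity)]
        refine mul_le_mul_of_nonneg_left ?_ (weight_pos _).le
        rw [sq]
        exact mul_le_mul (hAs σ) (hDs σ) (Finset.sum_nonneg fun v _ => hD0 _ _) hpos.le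

/-- The cycle of `s`, when open at `y > s`, closes at `y` with probability of order at least
`(bnd β)⁻²`. -/
lemma reach_le_tops (hβ : 0 < β) (hs : s < y) :
    ∑ σ ∈ Finset.univ.filter (fun σ : Perm (Fin n) => Reach σ y s), mallowsWeight n β σ
      ≤ 6 * bnd β ^ 2 *
        ∑ σ ∈ Finset.univ.filter (fun σ : Perm (Fin n) => Tops σ y s), mallowsWeight n β σ := by
  have h1 := closing (n := n) hβ hs
  have h2 := second_moment (n := n) (t := (y : ℕ)) hβ hs
  have hB := two_le_bnd hβ
  set R := Finset.univ.filter (fun σ : Perm (Fin n) => Reach σ y s) with hR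
  set B := bnd β with hB'
  have key : ∑ σ ∈ R, mallowsWeight n β σ ≤
      ∑ σ ∈ R, (1 / (12 * B ^ 2) * (2 * (mallowsWeight n β σ * ((crossUp σ y).card : ℝ) ^ 2)
        + 2 * B ^ 2 * mallowsWeight n β σ)
        + 3 * B ^ 2 * (mallowsWeight n β σ / (((crossUp σ y).card : ℝ) + B) ^ 2)) := by
    refine Finset.sum_le_sum fun σ _ => ?_
    have hw := weight_pos (β := β) σ
    set w := mallowsWeight n β σ
    set H := ((crossUp σ y).card : ℝ) with hH
    have hH0 : 0 ≤ H := by positivity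
    have hX : 0 < H + B := by linarith
    -- the weighted inequality of arithmetic and geometric means
    have amgm : 1 ≤ 1 / (12 * B ^ 2) * (H + B) ^ 2 + 3 * B ^ 2 / (H + B) ^ 2 := by
      have e : 1 / (12 * B ^ 2) * (H + B) ^ 2 + 3 * B ^ 2 / (H + B) ^ 2 - 1
          = ((H + B) ^ 2 - 6 * B ^ 2) ^ 2 / (12 * B ^ 2 * (H + B) ^ 2) := by
        field_simp; ring
      have : 0 ≤ ((H + B) ^ 2 - 6 * B ^ 2) ^ 2 / (12 * B ^ 2 * (H + B) ^ 2) := by positivity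
      linarith
    have sq2 : (H + B) ^ 2 ≤ 2 * H ^ 2 + 2 * B ^ 2 := by nlinarith [sq_nonneg (H - B)]
    calc w = w * 1 := (mul_one _).symm
      _ ≤ w * (1 / (12 * B ^ 2) * (2 * H ^ 2 + 2 * B ^ 2) + 3 * B ^ 2 / (H + B) ^ 2) := by
        refine mul_le_mul_of_nonneg_left (amgm.trans ?_) hw.le
        gcongr
      _ = _ := by ring
  rw [Finset.sum_add_distrib, ← Finset.mul_sum, ← Finset.mul_sum, Finset.sum_add_distrib,
    ← Finset.mul_sum, ← Finset.mul_sum] at key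
  set X := ∑ σ ∈ R, mallowsWeight n β σ with hX
  have hX0 : 0 ≤ X := Finset.sum_nonneg fun σ _ => (weight_pos _).le
  set M := ∑ σ ∈ R, mallowsWeight n β σ * ((crossUp σ y).card : ℝ) ^ 2
  have k2 : 1 / (12 * B ^ 2) * (2 * M + 2 * B ^ 2 * X) ≤ 1 / 2 * X := by
    rw [one_div, inv_mul_le_iff₀ (by positivity)]
    nlinarith [mul_nonneg hX0 (by nlinarith : (0 : ℝ) ≤ B ^ 2 - 1)]
  have k3 := mul_le_mul_of_nonneg_left h1 (by positivity : (0 : ℝ) ≤ 3 * B ^ 2)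
  linarith

/-! ### Masses, reversal and the upper bound -/

/-- The partition function. -/
noncomputable def Z (n : ℕ) (β : ℝ) : ℝ := ∑ σ : Perm (Fin n), mallowsWeight n β σ

/-- The unnormalized mass of the event that `σ` satisfies `P`. -/
noncomputable def mass (β : ℝ) (P : Perm (Fin n) → Prop) : ℝ :=
  ∑ σ ∈ Finset.univ.filter P, mallowsWeight n β σ

lemma Z_pos : 0 < Z n β :=
  Finset.sum_pos (fun σ _ => weight_pos σ) ⟨1, Finset.mem_univ _⟩

lemma mass_nonneg (P : Perm (Fin n) → Prop) : 0 ≤ mass β P :=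
  Finset.sum_nonneg fun σ _ => (weight_pos σ).le

lemma mass_mono {P Q : Perm (Fin n) → Prop} (h : ∀ σ, P σ → Q σ) : mass β P ≤ mass β Q := by
  refine Finset.sum_le_sum_of_subset_of_nonneg ?_ fun σ _ _ => (weight_pos σ).le
  intro σ hσ
  simp only [Finset.mem_filter, Finset.mem_univ, true_and] at hσ ⊢
  exact h σ hσ

lemma mass_le_Z (P : Perm (Fin n) → Prop) : mass β P ≤ Z n β :=
  Finset.sum_le_sum_of_subset_of_nonneg (Finset.filter_subset _ _) fun σ _ _ => (weight_pos σ).le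

lemma mass_union {P Q R : Perm (Fin n) → Prop} (h : ∀ σ, P σ → Q σ ∨ R σ) :
    mass β P ≤ mass β Q + mass β R := by
  unfold mass
  simp only [Finset.sum_filter]
  rw [← Finset.sum_add_distrib]
  refine Finset.sum_le_sum fun σ _ => ?_
  have hw := (weight_pos (β := β) σ).le
  have := h σ
  split_ifs <;> first | linarith | tauto

lemma mass_compl (P : Perm (Fin n) → Prop) : mass β P + mass β (fun σ => ¬ P σ) = Z n β := by
  unfold mass Z
  simp only [Finset.sum_filter]
  rw [← Finset.sum_add_distrib]
  refine Finset.sum_congr rfl fun σ _ => ?_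
  by_cases h : P σ <;> simp [h]

lemma card_cycle (σ : Perm (Fin n)) (s : Fin n) :
    ((cycleFinset n σ s).card : ℝ) = ∑ x : Fin n, if σ.SameCycle s x then (1 : ℝ) else 0 := by
  rw [Finset.sum_boole]
  congr 2
  ext x
  simp only [cycleFinset, Finset.mem_filter, Finset.mem_univ, true_and]
  exact ⟨fun ⟨k, hk⟩ => ⟨k, by simpa using hk⟩, fun h => h.exists_nat_pow_eq⟩

lemma mallowsE_cycle (s : Fin n) :
    mallowsE n β (fun σ => ((cycleFinset n σ s).card : ℝ))
      = (∑ x : Fin n, mass β fun σ => σ.SameCycle s x) / Z n β := by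
  unfold mallowsE mallowsProb mass
  simp only [card_cycle, Finset.sum_mul, Finset.sum_filter]
  rw [Finset.sum_comm, Finset.sum_div]
  refine Finset.sum_congr rfl fun x _ => ?_
  rw [Finset.sum_div]
  refine Finset.sum_congr rfl fun σ _ => ?_
  split_ifs <;> simp [Z]

lemma cost_rev (σ : Perm (Fin n)) : cost (Fin.revPerm * σ * Fin.revPerm⁻¹) = cost σ := by
  unfold cost
  rw [← Equiv.sum_comp Fin.revPerm]
  refine Finset.sum_congr rfl fun i _ => ?_
  have h1 : ((Fin.revPerm * σ * Fin.revPerm⁻¹ : Perm (Fin n)) (Fin.revPerm i) : Fin n)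
      = Fin.rev (σ i) := by simp
  have h2 : ∀ j : Fin n, ((Fin.rev j : ℕ) : ℝ) = n - (j + 1) := by
    intro j
    rw [Fin.val_rev, Nat.cast_sub (by omega)]; push_cast; ring
  rw [h1, Fin.revPerm_apply, h2, h2, abs_sub_comm]
  congr 1; ring

lemma mass_rev (s x : Fin n) :
    (mass β fun σ => σ.SameCycle (Fin.rev s) (Fin.rev x)) = mass β fun σ => σ.SameCycle s x := by
  unfold mass
  simp only [Finset.sum_filter]
  rw [← Equiv.sum_comp (MulAut.conj (Fin.revPerm : Perm (Fin n))).toEquiv]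
  refine Finset.sum_congr rfl fun σ _ => ?_
  have h1 : mallowsWeight n β (Fin.revPerm * σ * Fin.revPerm⁻¹) = mallowsWeight n β σ := by
    rw [weight_eq, weight_eq, cost_rev]
  have h2 : (Fin.revPerm * σ * Fin.revPerm⁻¹).SameCycle (Fin.rev s) (Fin.rev x)
      ↔ σ.SameCycle s x := by
    rw [sameCycle_conj]
    have : ∀ j : Fin n, (Fin.revPerm⁻¹ : Perm (Fin n)) (Fin.rev j) = j := by
      intro j; rw [Perm.inv_eq_iff_eq]; simp
    rw [this, this]
  simp only [MulEquiv.toEquiv_eq_coe, MulEquiv.coe_toEquiv, MulAut.conj_apply, h1, h2]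
  split_ifs <;> rfl

lemma sum_mass_rev (s : Fin n) :
    (∑ x : Fin n, mass β fun σ => σ.SameCycle (Fin.rev s) x)
      = ∑ x : Fin n, mass β fun σ => σ.SameCycle s x := by
  rw [← Equiv.sum_comp Fin.revPerm]
  exact Finset.sum_congr rfl fun x _ => mass_rev s x

lemma sum_tops (s : Fin n) :
    ∑ y ∈ Finset.univ.filter (fun y : Fin n => s < y), mass β (fun σ => Tops σ y s) ≤ Z n β := by
  unfold mass Z
  simp only [Finset.sum_filter (fun σ => Tops σ _ s)]
  rw [Finset.sum_comm]
  refine Finset.sum_le_sum fun σ _ => ?_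
  rw [← Finset.sum_filter, Finset.sum_const, nsmul_eq_mul]
  have : (Finset.filter (fun y => Tops σ y s) (Finset.univ.filter fun y : Fin n => s < y)).card ≤ 1 := by
    rw [Finset.card_le_one]
    intro a ha b hb
    simp only [Finset.mem_filter, Finset.mem_univ, true_and] at ha hb
    exact ha.2.eq hb.2 ha.1 hb.1
  have h1 : ((Finset.filter (fun y => Tops σ y s)
      (Finset.univ.filter fun y : Fin n => s < y)).card : ℝ) ≤ 1 := by exact_mod_cast this
  nlinarith [weight_pos (β := β) σ]

lemma sum_right (hβ : 0 < β) (s : Fin n) :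
    ∑ x ∈ Finset.univ.filter (fun x : Fin n => s < x), mass β (fun σ => σ.SameCycle s x)
      ≤ 6 * bnd β ^ 2 * Z n β := by
  calc _ ≤ ∑ x ∈ Finset.univ.filter (fun x : Fin n => s < x),
        6 * bnd β ^ 2 * mass β (fun σ => Tops σ x s) := by
        refine Finset.sum_le_sum fun x hx => ?_
        simp only [Finset.mem_filter, Finset.mem_univ, true_and] at hx
        exact (mass_mono fun σ h => ⟨x, h, le_rfl⟩).trans (reach_le_tops hβ hx)
    _ ≤ _ := by
        rw [← Finset.mul_sum]
        exact mul_le_mul_of_nonneg_left (sum_tops s) (by positivity)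

lemma sum_left (hβ : 0 < β) (s : Fin n) :
    ∑ x ∈ Finset.univ.filter (fun x : Fin n => x < s), mass β (fun σ => σ.SameCycle s x)
      ≤ 6 * bnd β ^ 2 * Z n β := by
  refine le_trans (le_of_eq ?_) (sum_right hβ (Fin.rev s))
  rw [Finset.sum_filter, Finset.sum_filter, ← Equiv.sum_comp Fin.revPerm
    (fun x => if Fin.rev s < x then mass β (fun σ => σ.SameCycle (Fin.rev s) x) else 0)]
  refine Finset.sum_congr rfl fun x _ => ?_
  simp only [Fin.revPerm_apply, Fin.rev_lt_rev, mass_rev]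

lemma upper (hβ : 0 < β) (s : Fin n) :
    ∑ x : Fin n, mass β (fun σ => σ.SameCycle s x) ≤ 109 * max (β ^ 2)⁻¹ 1 * Z n β := by
  have hsplit : ∑ x : Fin n, mass β (fun σ => σ.SameCycle s x)
      = mass β (fun σ => σ.SameCycle s s)
        + ∑ x ∈ Finset.univ.filter (fun x : Fin n => s < x), mass β (fun σ => σ.SameCycle s x)
        + ∑ x ∈ Finset.univ.filter (fun x : Fin n => x < s), mass β (fun σ => σ.SameCycle s x) := by
    rw [Finset.sum_filter, Finset.sum_filter]
    rw [show mass β (fun σ => σ.SameCycle s s)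
      = ∑ x : Fin n, if x = s then mass β (fun σ => σ.SameCycle s x) else 0 by simp]
    rw [← Finset.sum_add_distrib, ← Finset.sum_add_distrib]
    refine Finset.sum_congr rfl fun x _ => ?_
    rcases lt_trichotomy x s with h | h | h
    · simp [h, h.ne, h.not_gt]
    · simp [h]
    · simp [h, h.ne', h.not_gt]
  have h1 := sum_right hβ s
  have h2 := sum_left hβ s
  have h3 := mass_le_Z (β := β) (fun σ : Perm (Fin n) => σ.SameCycle s s)
  have hZ := Z_pos (n := n) (β := β)
  have hB : bnd β ^ 2 ≤ 9 * max (β ^ 2)⁻¹ 1 := by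
    have hb := bnd_le hβ
    have hb2 := two_le_bnd hβ
    have hm : bnd β ≤ 3 * max (1 / β) 1 := by
      linarith [le_max_left (1 / β) 1, le_max_right (1 / β) 1]
    have : (max (1 / β) 1) ^ 2 = max (β ^ 2)⁻¹ 1 := by
      rcases le_total (1 / β) 1 with h | h
      · rw [max_eq_right h, max_eq_right]
        · norm_num
        · rw [← inv_pow, ← one_div]; exact pow_le_one₀ (by positivity) h
      · rw [max_eq_left h, max_eq_left]
        · rw [one_div, inv_pow]
        · rw [← inv_pow, ← one_div]; exact one_le_pow₀ h
    nlinarith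
  have hM := le_max_right (β ^ 2)⁻¹ 1
  rw [hsplit]
  have : (1 + 12 * bnd β ^ 2) * Z n β ≤ 109 * max (β ^ 2)⁻¹ 1 * Z n β :=
    mul_le_mul_of_nonneg_right (by linarith) hZ.le
  linarith

/-! ### The lower bound -/

lemma card_window {a k : ℕ} (h : a + k ≤ n) :
    (Finset.univ.filter fun b : Fin n => a ≤ (b : ℕ) ∧ (b : ℕ) < a + k).card = k := by
  have hc : (Finset.Ico a (a + k)).card = k := by simp
  refine Eq.trans ?_ hc
  apply Finset.card_bij (fun (b : Fin n) _ => (b : ℕ))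
  · intro b hb; simpa using hb
  · intro b _ c _ h; exact Fin.ext h
  · intro m hm
    rw [Finset.mem_Ico] at hm
    exact ⟨⟨m, by omega⟩, by simpa using hm, rfl⟩

lemma exp_two_le : Real.exp 2 ≤ 8 := by
  have h := Real.exp_one_lt_d9
  have h0 := Real.exp_pos 1
  rw [show (2 : ℝ) = 1 + 1 by norm_num, Real.exp_add]
  nlinarith

lemma exp_four_le : Real.exp 2 * Real.exp 2 ≤ 55 := by
  have h := Real.exp_one_lt_d9
  have h0 := Real.exp_pos 1
  have e : Real.exp 2 = Real.exp 1 * Real.exp 1 := by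
    rw [← Real.exp_add]; norm_num
  have h2 : Real.exp 2 ≤ 7.39 := by
    rw [e]; nlinarith
  nlinarith [Real.exp_pos 2]

lemma exp_near (hβ : 0 < β) {w : ℕ} (hw : β * w ≤ 1) {a c : Fin n}
    (h1 : (a : ℕ) ≤ c) (h2 : (c : ℕ) ≤ a + w) :
    Real.exp (2 * β * |((a : ℕ) : ℝ) - c|) ≤ Real.exp 2 := by
  apply Real.exp_le_exp.2
  have h1' : ((a : ℕ) : ℝ) ≤ c := by exact_mod_cast h1
  have h2' : ((c : ℕ) : ℝ) ≤ a + w := by exact_mod_cast h2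
  rw [abs_of_nonpos (by linarith)]
  nlinarith

/-- Points at distance at most `1 / β` are in the same cycle with probability at least `1 / 9`. -/
lemma near (hβ : 0 < β) {w : ℕ} (hw : β * w ≤ 1) (h1 : (s : ℕ) ≤ x) (h2 : (x : ℕ) ≤ s + w) :
    Z n β ≤ 9 * mass β (fun σ : Perm (Fin n) => σ.SameCycle s x) := by
  have key : mass β (fun σ : Perm (Fin n) => ¬ σ.SameCycle s x)
      ≤ ∑ σ ∈ Finset.univ.filter (fun σ : Perm (Fin n) => σ.SameCycle s x),
        8 * mallowsWeight n β σ := by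
    refine sum_transport _ _ _ _ (fun σ => σ * swap s x) (fun σ => σ * swap s x) ?_ ?_ ?_ ?_
    · intro σ h
      simp only [Finset.mem_filter, Finset.mem_univ, true_and] at h ⊢
      exact merge_sameCycle h
    · intro σ _; simp [mul_assoc]
    · intro σ _
      refine (weight_le_mul_swap hβ σ s x).trans ?_
      exact mul_le_mul_of_nonneg_right ((exp_near hβ hw h1 h2).trans exp_two_le) (weight_pos _).le
    · intro σ _; have := weight_pos (β := β) σ; positivity
  rw [← Finset.mul_sum] at key
  rw [← mass_compl (fun σ : Perm (Fin n) => σ.SameCycle s x)]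
  have key' : mass β (fun σ : Perm (Fin n) => ¬ σ.SameCycle s x)
      ≤ 8 * mass β (fun σ : Perm (Fin n) => σ.SameCycle s x) := by
    refine key.trans (le_of_eq ?_)
    unfold mass
    congr!
  linarith

/-- The cycle of `s` has its maximum at a given `y > s` with probability `O(β²)`: both arcs at the
maximum can be redirected to about `1/β` points above `y`. -/
lemma tops_small (hβ : 0 < β) {w : ℕ} (hw : β * w ≤ 1) (hs : s < y) (hy : (y : ℕ) + w ≤ n) :
    (w : ℝ) ^ 2 * mass β (fun σ : Perm (Fin n) => Tops σ y s) ≤ 55 * Z n β := by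
  set I := Finset.univ.filter fun b : Fin n => (y : ℕ) ≤ (b : ℕ) ∧ (b : ℕ) < y + w with hI
  have hcard : I.card = w := card_window hy
  have hs' : (s : ℕ) < (y : ℕ) := hs
  have key : ∑ k ∈ Finset.univ.filter (fun σ : Perm (Fin n) => Tops σ y s) ×ˢ (I ×ˢ I),
      mallowsWeight n β k.1 ≤ ∑ σ : Perm (Fin n), 55 * mallowsWeight n β σ := by
    -- first hits of the modified permutation, forward and backward
    have hits : ∀ (σ : Perm (Fin n)) (b c : Fin n), Hit σ y s y → (y : ℕ) ≤ b → (y : ℕ) ≤ c →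
        Hit (swap y c * σ * swap y b) y s c := by
      intro σ b c h hb hc
      have hag : AgreeBelow σ (swap y c * σ * swap y b) y := by
        intro i hi hi'
        rw [Perm.mul_apply, Perm.mul_apply, swap_apply_of_ne_of_ne (a := y) (b := b),
          swap_apply_of_ne_of_ne]
        · rintro h; rw [h] at hi'; omega
        · rintro h; rw [h] at hi'; omega
        · rintro rfl; omega
        · rintro rfl; omega
      have hlt := h.pred_lt hs'
      have e : (swap y c * σ * swap y b) (σ⁻¹ y) = c := by
        rw [Perm.mul_apply, Perm.mul_apply, swap_apply_of_ne_of_ne (a := y) (b := b)]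
        · simp
        · intro h; rw [h] at hlt; omega
        · intro h; rw [h] at hlt; omega
      have := h.transfer hs' hag (by rw [e]; exact hc)
      rwa [e] at this
    refine sum_transport _ _ _ _ (fun k => swap y k.2.2 * k.1 * swap y k.2.1)
      (fun σ => (swap y (hit σ y s) * σ * swap y (hit σ⁻¹ y s), (hit σ⁻¹ y s, hit σ y s)))
      ?_ ?_ ?_ ?_
    · intro k _; exact Finset.mem_univ _
    · rintro ⟨σ, b, c⟩ h
      simp only [hI, Finset.mem_product, Finset.mem_filter, Finset.mem_univ, true_and] at h
      obtain ⟨h1, h2, h3⟩ := h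
      have e1 := (hits σ b c h1.1 h2.1 h3.1).hit_eq
      have e2 := (hits σ⁻¹ c b h1.2 h3.1 h2.1).hit_eq
      have e3 : (swap y c * σ * swap y b)⁻¹ = swap y b * σ⁻¹ * swap y c := by
        simp [mul_inv_rev, mul_assoc]
      dsimp only
      rw [e3, e1, e2]
      simp [mul_assoc]
    · rintro ⟨σ, b, c⟩ h
      simp only [hI, Finset.mem_product, Finset.mem_filter, Finset.mem_univ, true_and] at h
      obtain ⟨-, h2, h3⟩ := h
      dsimp only
      have w1 := weight_le_swap_mul hβ σ y c
      have w2 := weight_le_mul_swap hβ (swap y c * σ) y b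
      have x1 := exp_near hβ hw h3.1 h3.2.le
      have x2 := exp_near hβ hw h2.1 h2.2.le
      have p1 := weight_pos (β := β) (swap y c * σ)
      have p2 := weight_pos (β := β) (swap y c * σ * swap y b)
      calc _ ≤ _ := w1
        _ ≤ Real.exp 2 * mallowsWeight n β (swap y c * σ) :=
          mul_le_mul_of_nonneg_right x1 p1.le
        _ ≤ Real.exp 2 * (Real.exp 2 * mallowsWeight n β (swap y c * σ * swap y b)) := by
          refine mul_le_mul_of_nonneg_left (w2.trans ?_) (Real.exp_pos _).le
          exact mul_le_mul_of_nonneg_right x2 p2.le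
        _ ≤ _ := by
          rw [← mul_assoc]; exact mul_le_mul_of_nonneg_right exp_four_le p2.le
    · intro σ _; have := weight_pos (β := β) σ; positivity
  rw [Finset.sum_product, ← Finset.mul_sum] at key
  simp only [Finset.sum_const, Finset.card_product, hcard, nsmul_eq_mul] at key
  rw [← Finset.mul_sum] at key
  push_cast at key
  rw [sq]
  exact key

/-- A point is the maximum of its own cycle with probability `O(β)`: the arc leaving it can be
redirected to about `1/β` points above it. -/
lemma not_reach_small (hβ : 0 < β) {w : ℕ} (hw : β * w ≤ 1) (hx : (x : ℕ) + 1 + w ≤ n) :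
    (w : ℝ) * mass β (fun σ : Perm (Fin n) => ¬ Reach σ (x + 1) x) ≤ 8 * Z n β := by
  set I := Finset.univ.filter fun b : Fin n => (x : ℕ) + 1 ≤ (b : ℕ) ∧ (b : ℕ) < x + 1 + w with hI
  have hcard : I.card = w := card_window hx
  have key : ∑ k ∈ Finset.univ.filter (fun σ : Perm (Fin n) => ¬ Reach σ (x + 1) x) ×ˢ I,
      mallowsWeight n β k.1 ≤ ∑ σ : Perm (Fin n), 8 * mallowsWeight n β σ := by
    refine sum_transport _ _ _ _ (fun k => k.1 * swap x k.2)
      (fun σ => (σ * swap x (hit σ⁻¹ (x + 1) x), hit σ⁻¹ (x + 1) x)) ?_ ?_ ?_ ?_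
    · intro k _; exact Finset.mem_univ _
    · rintro ⟨σ, b⟩ h
      simp only [hI, Finset.mem_product, Finset.mem_filter, Finset.mem_univ, true_and] at h
      obtain ⟨h1, h2, h3⟩ := h
      have hnot : ¬ σ.SameCycle x b := fun h => h1 ⟨b, h, h2⟩
      obtain ⟨k, hk, hk'⟩ := merge_core hnot
      have hhit : Hit (σ * swap x b)⁻¹ (x + 1) x b := by
        refine ⟨k, ?_, h2, fun i hi => ?_⟩
        · rw [inv_pow, Perm.inv_eq_iff_eq, hk]
        · have e : ((σ * swap x b)⁻¹ ^ i) x = (σ ^ (k - i)) x := by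
            rw [← hk' (k - i) (by omega) (by omega), inv_pow, Perm.inv_eq_iff_eq,
              ← Perm.mul_apply, ← pow_add, Nat.add_sub_cancel' hi.le, hk]
          rw [e]
          by_contra hcon
          exact h1 ⟨_, ⟨((k - i : ℕ) : ℤ), by rw [zpow_natCast]⟩, not_lt.1 hcon⟩
      dsimp only
      rw [hhit.hit_eq]
      simp [mul_assoc]
    · rintro ⟨σ, b⟩ h
      simp only [hI, Finset.mem_product, Finset.mem_filter, Finset.mem_univ, true_and] at h
      obtain ⟨-, h2, h3⟩ := h
      refine (weight_le_mul_swap hβ σ x b).trans ?_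
      exact mul_le_mul_of_nonneg_right
        ((exp_near hβ hw (by omega) (by omega)).trans exp_two_le) (weight_pos _).le
    · intro σ _; have := weight_pos (β := β) σ; positivity
  rw [Finset.sum_product, ← Finset.mul_sum] at key
  simp only [Finset.sum_const, hcard, nsmul_eq_mul] at key
  rw [← Finset.mul_sum] at key
  unfold mass Z
  convert key using 2
  congr!

/-- If the cycles of `s` and `x` are both open at `t`, they coincide with probability at least
`1/2`: exchanging the targets of the two exit arcs merges them without changing the weight. -/
lemma both_reach (hs : (s : ℕ) < t) (hx : (x : ℕ) < t) :
    mass β (fun σ : Perm (Fin n) => Reach σ t s ∧ Reach σ t x)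
      ≤ 2 * mass β (fun σ : Perm (Fin n) => σ.SameCycle s x) := by
  have key : mass β (fun σ : Perm (Fin n) => (Reach σ t s ∧ Reach σ t x) ∧ ¬ σ.SameCycle s x)
      ≤ mass β (fun σ : Perm (Fin n) => σ.SameCycle s x) := by
    have main : ∀ σ : Perm (Fin n), Reach σ t s → Reach σ t x → ¬ σ.SameCycle s x →
        (σ * swap (σ⁻¹ (hit σ t s)) (σ⁻¹ (hit σ t x))).SameCycle s x ∧
        Hit (σ * swap (σ⁻¹ (hit σ t s)) (σ⁻¹ (hit σ t x))) t s (hit σ t x) ∧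
        Hit (σ * swap (σ⁻¹ (hit σ t s)) (σ⁻¹ (hit σ t x))) t x (hit σ t s) := by
      intro σ h1 h2 h3
      have k1 := h1.hit_spec
      have k2 := h2.hit_spec
      set e := σ⁻¹ (hit σ t s) with he
      set f := σ⁻¹ (hit σ t x) with hf
      have hse : σ.SameCycle s e := by
        rw [he, ← sameCycle_apply_right]; simpa using k1.sameCycle
      have hxf : σ.SameCycle x f := by
        rw [hf, ← sameCycle_apply_right]; simpa using k2.sameCycle
      have hef : ¬ σ.SameCycle e f := fun h => h3 ((hse.trans h).trans hxf.symm)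
      have hσe : σ e = hit σ t s := by simp [he]
      have hσf : σ f = hit σ t x := by simp [hf]
      have hag : AgreeBelow σ (σ * swap e f) t :=
        agreeBelow_mul_swap (Or.inr (by rw [hσe]; exact k1.le)) (Or.inr (by rw [hσf]; exact k2.le))
      have e1 : (σ * swap e f) e = hit σ t x := by simp [hσf]
      have e2 : (σ * swap e f) f = hit σ t s := by simp [hσe]
      refine ⟨?_, ?_, ?_⟩
      · exact ((merge_mono hef hse).trans (merge_sameCycle hef)).trans (merge_mono hef hxf).symm
      · have := k1.transfer hs hag (by rw [← he, e1]; exact k2.le)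
        rwa [← he, e1] at this
      · have := k2.transfer hx hag (by rw [← hf, e2]; exact k1.le)
        rwa [← hf, e2] at this
    refine sum_transport _ _ _ _
      (fun σ => σ * swap (σ⁻¹ (hit σ t s)) (σ⁻¹ (hit σ t x)))
      (fun σ => σ * swap (σ⁻¹ (hit σ t s)) (σ⁻¹ (hit σ t x))) ?_ ?_ ?_ ?_
    · intro σ h
      simp only [Finset.mem_filter, Finset.mem_univ, true_and] at h ⊢
      exact (main σ h.1.1 h.1.2 h.2).1
    · intro σ h
      simp only [Finset.mem_filter, Finset.mem_univ, true_and] at h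
      obtain ⟨-, m1, m2⟩ := main σ h.1.1 h.1.2 h.2
      rw [m1.hit_eq, m2.hit_eq]
      have i1 : (σ * swap (σ⁻¹ (hit σ t s)) (σ⁻¹ (hit σ t x)))⁻¹ (hit σ t x)
          = σ⁻¹ (hit σ t s) := by rw [Perm.inv_eq_iff_eq]; simp
      have i2 : (σ * swap (σ⁻¹ (hit σ t s)) (σ⁻¹ (hit σ t x)))⁻¹ (hit σ t s)
          = σ⁻¹ (hit σ t x) := by rw [Perm.inv_eq_iff_eq]; simp
      rw [i1, i2]
      simp [mul_assoc]
    · intro σ h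
      simp only [Finset.mem_filter, Finset.mem_univ, true_and] at h
      have k1 := h.1.1.hit_spec
      have k2 := h.1.2.hit_spec
      exact (weight_swap_same σ _ _ (k1.pred_lt hs) (k2.pred_lt hx) (by simpa using k1.le)
        (by simpa using k2.le)).le
    · intro σ _; exact (weight_pos σ).le
  have h2 := mass_union (β := β) (P := fun σ : Perm (Fin n) => Reach σ t s ∧ Reach σ t x)
    (Q := fun σ => (Reach σ t s ∧ Reach σ t x) ∧ ¬ σ.SameCycle s x)
    (R := fun σ => σ.SameCycle s x) (fun σ h => by tauto)
  linarith

/-- The cycle of `s`, if open at `s + w`, is also open at `s + w + m` unless it closes at one of the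
`m` points in between, each of which has probability at most `55 / w²`. -/
lemma reach_chain (hβ : 0 < β) {w : ℕ} (hw : β * w ≤ 1) (hw0 : 0 < w) (m : ℕ)
    (hm : (s : ℕ) + 2 * w + m ≤ n) :
    (w : ℝ) ^ 2 * mass β (fun σ : Perm (Fin n) => Reach σ (s + w) s)
      ≤ (w : ℝ) ^ 2 * mass β (fun σ : Perm (Fin n) => Reach σ (s + w + m) s)
        + m * (55 * Z n β) := by
  induction m with
  | zero => simp
  | succ m ih =>
    have ih' := ih (by omega)
    set y : Fin n := ⟨s + w + m, by omega⟩ with hy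
    have hyv : (y : ℕ) = s + w + m := rfl
    have h1 := tops_small (s := s) (y := y) hβ hw (Fin.lt_def.2 (by omega)) (by omega)
    have h2 := mass_union (β := β) (P := fun σ : Perm (Fin n) => Reach σ (s + w + m) s)
      (Q := fun σ => Reach σ (s + w + (m + 1)) s) (R := fun σ => Tops σ y s) (fun σ h => by
        by_cases ht : Tops σ y s
        · exact Or.inr ht
        · exact Or.inl (reach_succ_of_not_tops (y := y) h ht))
    have h3 := mul_le_mul_of_nonneg_left h2 (by positivity : (0 : ℝ) ≤ (w : ℝ) ^ 2)
    push_cast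
    linarith

/-- A point `x` at distance `w + m - 1` from `s`, with `m` at most a small multiple of `w²`, is in the
cycle of `s` with probability at least `1/36`: the cycle of `s` is open at `x + 1` with probability
at least `1/9 - 1/36`, that of `x` fails to be with probability at most `1/36`, and two open cycles
coincide with probability at least `1/2`. -/
lemma far (hβ : 0 < β) {w : ℕ} (hw : β * w ≤ 1) (hw0 : 288 ≤ w) {m : ℕ}
    (hm1 : 1980 * m ≤ w ^ 2) (hm : (s : ℕ) + 2 * w + m ≤ n) (hx : (x : ℕ) + 1 = s + w + m)
    (hm0 : 1 ≤ m) :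
    Z n β ≤ 36 * mass β (fun σ : Perm (Fin n) => σ.SameCycle s x) := by
  have hZ := Z_pos (n := n) (β := β)
  have h1 := near (n := n) (s := s) (x := ⟨s + w, by omega⟩) hβ hw (by simp) (by simp)
  have h2 : mass β (fun σ : Perm (Fin n) => σ.SameCycle s ⟨s + w, by omega⟩)
      ≤ mass β (fun σ : Perm (Fin n) => Reach σ (s + w) s) :=
    mass_mono fun σ h => ⟨_, h, le_rfl⟩
  have h3 := reach_chain (n := n) (s := s) hβ hw (by omega) m hm
  have h4 := not_reach_small (n := n) (x := x) hβ hw (by omega)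
  have h5 := both_reach (n := n) (β := β) (s := s) (x := x) (t := x + 1) (by omega) (by omega)
  rw [← hx] at h3
  have h6 := mass_union (β := β) (P := fun σ : Perm (Fin n) => Reach σ (x + 1) s)
    (Q := fun σ => Reach σ (x + 1) s ∧ Reach σ (x + 1) x)
    (R := fun σ => ¬ Reach σ (x + 1) x) (fun σ h => by tauto)
  have hwR : (288 : ℝ) ≤ w := by exact_mod_cast hw0
  have hmR : 1980 * (m : ℝ) ≤ (w : ℝ) ^ 2 := by exact_mod_cast hm1
  set q0 := mass β (fun σ : Perm (Fin n) => Reach σ (s + w) s)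
  set q1 := mass β (fun σ : Perm (Fin n) => Reach σ (x + 1) s)
  set N := mass β (fun σ : Perm (Fin n) => ¬ Reach σ (x + 1) x)
  set W := Z n β
  -- the cycle of `s` is still open at `x + 1`
  have a1 : q0 - W / 36 ≤ q1 := by
    have hw2 : (0 : ℝ) < (w : ℝ) ^ 2 := by positivity
    have : (m : ℝ) * (55 * W) ≤ (w : ℝ) ^ 2 * (W / 36) := by nlinarith
    have : (w : ℝ) ^ 2 * q0 ≤ (w : ℝ) ^ 2 * (q1 + W / 36) := by linarith
    have := le_of_mul_le_mul_left this hw2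
    linarith
  -- and so is the cycle of `x`
  have a2 : N ≤ W / 36 := by
    have hw1 : (0 : ℝ) < (w : ℝ) := by linarith
    have : (w : ℝ) * N ≤ (w : ℝ) * (W / 36) := by nlinarith
    exact le_of_mul_le_mul_left this hw1
  linarith

lemma sum_window {a k : ℕ} {A : ℝ} (h : a + k ≤ n) (hA : 0 < A)
    (hwin : ∀ x : Fin n, a ≤ (x : ℕ) → (x : ℕ) < a + k →
      Z n β ≤ A * mass β (fun σ : Perm (Fin n) => σ.SameCycle s x)) :
    (k : ℝ) * Z n β ≤ A * ∑ x : Fin n, mass β (fun σ : Perm (Fin n) => σ.SameCycle s x) := by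
  calc (k : ℝ) * Z n β
      = ∑ _x ∈ Finset.univ.filter (fun b : Fin n => a ≤ (b : ℕ) ∧ (b : ℕ) < a + k), Z n β := by
        rw [Finset.sum_const, card_window h, nsmul_eq_mul]
    _ ≤ ∑ x ∈ Finset.univ.filter (fun b : Fin n => a ≤ (b : ℕ) ∧ (b : ℕ) < a + k),
          A * mass β (fun σ : Perm (Fin n) => σ.SameCycle s x) := by
        refine Finset.sum_le_sum fun x hx => ?_
        simp only [Finset.mem_filter, Finset.mem_univ, true_and] at hx
        exact hwin x hx.1 hx.2
    _ ≤ ∑ x : Fin n, A * mass β (fun σ : Perm (Fin n) => σ.SameCycle s x) :=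
        Finset.sum_le_sum_of_subset_of_nonneg (Finset.filter_subset _ _)
          fun x _ _ => mul_nonneg hA.le (mass_nonneg _)
    _ = _ := by rw [Finset.mul_sum]

lemma lower_half (hβ : 0 < β) (s : Fin n) (hs : 2 * (s : ℕ) ≤ n) :
    min (max (β ^ 2)⁻¹ 1) (n : ℝ) * Z n β
      ≤ 1000000 * ∑ x : Fin n, mass β (fun σ : Perm (Fin n) => σ.SameCycle s x) := by
  have hZ := Z_pos (n := n) (β := β)
  set w := ⌊1 / β⌋₊ with hw
  have hw1 : (w : ℝ) ≤ 1 / β := Nat.floor_le (by positivity)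
  have hw2 : 1 / β < w + 1 := Nat.lt_floor_add_one _
  have hβw : β * w ≤ 1 := by
    rw [le_div_iff₀ hβ] at hw1; linarith
  have hinv : (β ^ 2)⁻¹ = (1 / β) ^ 2 := by rw [one_div, inv_pow]
  have hβ' : 0 < 1 / β := by positivity
  rcases lt_or_ge w 288 with hsmall | hbig
  · have h1 := sum_window (n := n) (β := β) (s := s) (a := s) (k := 1) (A := 9) (by omega)
      (by norm_num) (fun x hx1 hx2 => near hβ hβw hx1 (by omega))
    have hwR : (w : ℝ) + 1 ≤ 288 := by exact_mod_cast hsmall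
    have h2 : min (max (β ^ 2)⁻¹ 1) (n : ℝ) ≤ 82944 := by
      refine (min_le_left _ _).trans (max_le ?_ (by norm_num))
      rw [hinv]; nlinarith
    have h3 := mul_le_mul_of_nonneg_right h2 hZ.le
    push_cast at h1
    linarith
  have hbR : (288 : ℝ) ≤ w := by exact_mod_cast hbig
  have hmax : (β ^ 2)⁻¹ ≤ 4 * (w : ℝ) ^ 2 := by
    rw [hinv]; nlinarith
  have hM : max (β ^ 2)⁻¹ 1 ≤ 4 * (w : ℝ) ^ 2 := max_le hmax (by nlinarith)
  rcases le_or_gt n (8 * w) with hn | hn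
  · have h1 := sum_window (n := n) (β := β) (s := s) (a := s) (k := min w (n - s)) (A := 9)
      (by omega) (by norm_num) (fun x hx1 hx2 => near hβ hβw hx1 (by omega))
    have hk : n ≤ 8 * min w (n - s) := by omega
    have hkR : (n : ℝ) ≤ 8 * ((min w (n - s) : ℕ) : ℝ) := by exact_mod_cast hk
    have h2 := mul_le_mul_of_nonneg_right
      ((min_le_right (max (β ^ 2)⁻¹ 1) (n : ℝ)).trans hkR) hZ.le
    nlinarith
  · set k := min (w ^ 2 / 1980) (n - s - 2 * w) with hk
    have hk1 : 1980 * k ≤ w ^ 2 := by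
      have := Nat.mul_div_le (w ^ 2) 1980
      have : k ≤ w ^ 2 / 1980 := min_le_left _ _
      omega
    have hk2 : s + 2 * w + k ≤ n := by omega
    have h1 := sum_window (n := n) (β := β) (s := s) (a := s + w) (k := k) (A := 36)
      (by omega) (by norm_num) (fun x hx1 hx2 =>
        far (m := x + 1 - s - w) hβ hβw hbig (by omega) (by omega) (by omega) (by omega))
    have h2 : min (max (β ^ 2)⁻¹ 1) (n : ℝ) ≤ 15840 * (k : ℝ) := by
      rcases min_choice (w ^ 2 / 1980) (n - s - 2 * w) with h | h
      · refine (min_le_left _ _).trans (hM.trans ?_)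
        have h0 : 288 ^ 2 ≤ w ^ 2 := Nat.pow_le_pow_left hbig 2
        have : w ^ 2 ≤ 3960 * k := by rw [hk, h]; omega
        have : (w : ℝ) ^ 2 ≤ 3960 * (k : ℝ) := by exact_mod_cast this
        linarith
      · refine (min_le_right _ _).trans ?_
        have : n ≤ 15840 * k := by rw [hk, h]; omega
        exact_mod_cast this
    have h3 := mul_le_mul_of_nonneg_right h2 hZ.le
    nlinarith

lemma lower (hβ : 0 < β) (s : Fin n) :
    min (max (β ^ 2)⁻¹ 1) (n : ℝ) * Z n β
      ≤ 1000000 * ∑ x : Fin n, mass β (fun σ : Perm (Fin n) => σ.SameCycle s x) := by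
  rcases le_or_gt (2 * (s : ℕ)) n with h | h
  · exact lower_half hβ s h
  · rw [← sum_mass_rev]
    exact lower_half hβ (Fin.rev s) (by rw [Fin.val_rev]; omega)

end MallowsL1

/-- There are absolute constants `C ≥ c > 0` such that for all `n ≥ 1`, `β > 0`, `s ∈ [n]`,
`c · min{max{β⁻², 1}, n} ≤ E[|C_s(σ)|] ≤ C · min{max{β⁻², 1}, n}`. -/
theorem statement0 :
    ∃ C c : ℝ, 0 < c ∧ c ≤ C ∧
      ∀ n : ℕ, 0 < n → ∀ β : ℝ, 0 < β → ∀ s : Fin n,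
        c * min (max (β ^ 2)⁻¹ 1) (n : ℝ)
            ≤ mallowsE n β (fun σ => ((cycleFinset n σ s).card : ℝ)) ∧
          mallowsE n β (fun σ => ((cycleFinset n σ s).card : ℝ))
            ≤ C * min (max (β ^ 2)⁻¹ 1) (n : ℝ) := by
  refine ⟨109, 1 / 1000000, by norm_num, by norm_num, fun n _ β hβ s => ?_⟩
  have hZ := MallowsL1.Z_pos (n := n) (β := β)
  rw [MallowsL1.mallowsE_cycle]
  constructor
  · rw [le_div_iff₀ hZ]
    have := MallowsL1.lower (n := n) hβ s
    linarith
  · rw [div_le_iff₀ hZ]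
    have hn : ∑ x : Fin n, MallowsL1.mass β (fun σ : Equiv.Perm (Fin n) => σ.SameCycle s x)
        ≤ 109 * n * MallowsL1.Z n β := by
      have h1 : ∑ x : Fin n, MallowsL1.mass β (fun σ : Equiv.Perm (Fin n) => σ.SameCycle s x)
          ≤ ∑ _x : Fin n, MallowsL1.Z n β :=
        Finset.sum_le_sum fun x _ => MallowsL1.mass_le_Z _
      rw [Finset.sum_const, Finset.card_univ, Fintype.card_fin, nsmul_eq_mul] at h1
      have : 0 ≤ (n : ℝ) * MallowsL1.Z n β := by positivity
      linarith
    rcases min_choice (max (β ^ 2)⁻¹ 1) (n : ℝ) with h | h <;> rw [h]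
    · exact MallowsL1.upper hβ s
    · exact hn
end

section
/- There exist absolute constants C ≥ c > 0 such that for every positive integer n, every β > 0, and every s ∈ [n], if σ is a random permutation with law P_{n,β}, then c · min{e^{-2β} max{β^{-2}, 1}, n - 1} ≤ E[max(C_s(σ)) - min(C_s(σ))] ≤ C · min{e^{-2β} max{β^{-2}, 1}, n - 1}. -/
/-!
Write `r = e^{-2β}`. By reflection it suffices to study `max C_s - s`, since
`E[max C_s - min C_s] = E[max C_s - s] + E[s - min C_s]`, and
`E[max C_s - s] = ∑_{m > s} P(max C_s ≥ m)`. All estimates come from injective surgeries on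
permutations, each the multiplication by one or several transpositions, whose effect on the weight is
a product of factors `gap β m u v = exp (-β (|u - m| + |v - m| - |u - v|))`: the cost of a detour
through `m` on the way from `u` to `v`. Over the arcs `u → σ u` on one side of `m` these factors sum
to at most `2 / (1 - r)`.

*Crossing numbers* (`height_moment`). Exchanging the images of an arc crossing level `k` upwards and
one crossing it downwards gives an arc below and an arc above `k`. Hence the number `c_k` of upward
crossings satisfies `E[c_k² ; A] ≤ 4r / (1 - r)² P(A)` for every event `A` stable under this
uncrossing, in particular for `{max C_s = m}` with `m < k`.

*Upper bound* (`reaches_le`, `topSum_le`). If `max C_s ≥ m > s`, the strand of the cycle through `s`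
that lies below `m` can be closed up, and then `m` can be moved into it, which gives a permutation
with `max C_s = m`. Summing over the lost data gives
`P(max C_s ≥ m) ≤ 2 / (1 - r) · E[4 / (1 - r) + 2 c_{m+1} ; max C_s = m]
  ≤ 18 / (1 - r)² · P(max C_s = m)`.
Summing over `m > s` yields `E[max C_s - s] ≤ 18 / (1 - r)² · P(max C_s > s)`, and
`P(max C_s > s) ≤ min (1, 4r / (1 - r)²)` because an arc must cross the gap above `s`.

*Lower bound* (`window_le`, `topAt_le`, `topSum_ge`, `mallowsE_ge`). Conversely, if `max C_s = m`,
then `m` can be moved into an arc of the window `(m, m + L]` and the rest of the cycle can be merged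
with another such arc. This is injective (`open_injective`), and for `L` of order `1 / β` it costs
only a constant factor, while there are typically about `L²` choices; so
`P(max C_s = m) = O(β²)`. As `s` and `s + 1` share a cycle with probability bounded below
(`sameCycle_weight`, by multiplication by a transposition), for `β ≤ 1` the maximum exceeds
`s + c min (β⁻², n)` with probability bounded below whenever `s` lies in the left half and `n` is large
compared with `1 / β`. In the remaining cases, `n = O(1 / β)` or `β > 1`, it is enough that `s` shares
a cycle with a well-chosen point `t` with probability at least `e^{-2β|s-t|} / 2`.
-/

open scoped BigOperators Classical

lemma cycleFinset_nonempty (n : ℕ) (σ : Equiv.Perm (Fin n)) (s : Fin n) :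
    (cycleFinset n σ s).Nonempty :=
  ⟨s, Finset.mem_filter.mpr ⟨Finset.mem_univ s, ⟨0, by simp⟩⟩⟩

/-- The diameter `max C_s(σ) - min C_s(σ)` of the cycle of `σ` containing `s`. -/
noncomputable def cycleDiam (n : ℕ) (σ : Equiv.Perm (Fin n)) (s : Fin n) : ℝ :=
  (((cycleFinset n σ s).max' (cycleFinset_nonempty n σ s) : ℕ) : ℝ)
    - (((cycleFinset n σ s).min' (cycleFinset_nonempty n σ s) : ℕ) : ℝ)

open Equiv Equiv.Perm

namespace MallowsL1

variable {n : ℕ}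

/-! ### Orbits of a permutation -/

/-- A set containing `s` and closed under `σ` contains the whole cycle of `s`. -/
lemma sameCycle_induct {σ : Perm (Fin n)} {s x : Fin n} (P : Fin n → Prop) (hs : P s)
    (hP : ∀ z, P z → P (σ z)) (h : σ.SameCycle s x) : P x := by
  obtain ⟨i, -, hi⟩ := h.exists_pow_eq'
  subst hi
  clear h
  induction i with
  | zero => simpa using hs
  | succ i ih => rw [pow_succ', Perm.mul_apply]; exact hP _ ih

lemma mem_cycleFinset {σ : Perm (Fin n)} {s x : Fin n} :
    x ∈ cycleFinset n σ s ↔ σ.SameCycle s x := by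
  simp only [cycleFinset, Finset.mem_filter, Finset.mem_univ, true_and]
  constructor
  · rintro ⟨k, rfl⟩; exact ⟨k, by simp⟩
  · intro h
    obtain ⟨i, -, hi⟩ := h.exists_pow_eq'
    exact ⟨i, hi⟩

/-- Two permutations that agree on the cycle of `s` under the first have the same cycle of `s`. -/
lemma sameCycle_congr {σ ρ : Perm (Fin n)} {s : Fin n}
    (h : ∀ z, σ.SameCycle s z → ρ z = σ z) (x : Fin n) :
    ρ.SameCycle s x ↔ σ.SameCycle s x := by
  have h1 : ∀ x, ρ.SameCycle s x → σ.SameCycle s x := fun x hx =>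
    sameCycle_induct (fun z => σ.SameCycle s z) (SameCycle.refl _ _)
      (fun z hz => by rw [h z hz]; exact sameCycle_apply_right.2 hz) hx
  refine ⟨h1 x, fun hx => ?_⟩
  exact sameCycle_induct (fun z => ρ.SameCycle s z) (SameCycle.refl _ _)
      (fun z hz => by rw [← h z (h1 z hz)]; exact sameCycle_apply_right.2 hz) hx

lemma mul_swap_apply_of_ne {σ : Perm (Fin n)} {a b z : Fin n} (h1 : z ≠ a) (h2 : z ≠ b) :
    (σ * swap a b) z = σ z := by
  rw [Perm.mul_apply, swap_apply_of_ne_of_ne h1 h2]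

lemma mul_swap_apply_left {σ : Perm (Fin n)} {a b : Fin n} : (σ * swap a b) a = σ b := by
  rw [Perm.mul_apply, swap_apply_left]

lemma mul_swap_apply_right {σ : Perm (Fin n)} {a b : Fin n} : (σ * swap a b) b = σ a := by
  rw [Perm.mul_apply, swap_apply_right]

lemma mul_swap_cancel {σ : Perm (Fin n)} {a b : Fin n} : σ * swap a b * swap a b = σ := by
  rw [mul_assoc, swap_mul_self, mul_one]

/-- All points of the cycle of `s` lie below `m`. -/
def Below (s m : Fin n) (σ : Perm (Fin n)) : Prop := ∀ x, σ.SameCycle s x → x < m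

/-- The cycle of `s` reaches `m` or beyond. -/
def Reaches (s m : Fin n) (σ : Perm (Fin n)) : Prop := ∃ x, σ.SameCycle s x ∧ m ≤ x

/-- The maximum of the cycle of `s` is `m`. -/
def TopAt (s m : Fin n) (σ : Perm (Fin n)) : Prop :=
  σ.SameCycle s m ∧ ∀ x, σ.SameCycle s x → x ≤ m

/-- Opening a cycle that stays below `m` at `a` towards an arc above `m` determines `a`: it is the
first point of the forward orbit of `s` from which the new permutation jumps to `m` or beyond. -/
lemma exit_unique {s m a q a' q' : Fin n} {ρ ρ' : Perm (Fin n)}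
    (hD : Below s m ρ) (hD' : Below s m ρ') (ha : ρ.SameCycle s a) (ha' : ρ'.SameCycle s a')
    (hq : m ≤ q) (hq' : m ≤ q') (hpq : m ≤ ρ q) (hpq' : m ≤ ρ' q')
    (h : ρ * swap a q = ρ' * swap a' q') : a = a' := by
  by_contra hne
  have key : ∀ z, ρ.SameCycle s z → ρ'.SameCycle s z → z ≠ a ∧ z ≠ a' := by
    intro z hz hz'
    have hzq : z ≠ q := (lt_of_lt_of_le (hD z hz) hq).ne
    have hzq' : z ≠ q' := (lt_of_lt_of_le (hD z hz) hq').ne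
    constructor
    · rintro rfl
      have h1 : (ρ * swap z q) z = ρ' z := by rw [h, mul_swap_apply_of_ne hne hzq']
      rw [mul_swap_apply_left] at h1
      exact absurd (hD' _ (sameCycle_apply_right.2 hz')) (not_lt.2 (h1 ▸ hpq))
    · rintro rfl
      have h1 : (ρ' * swap z q') z = ρ z := by rw [← h, mul_swap_apply_of_ne (Ne.symm hne) hzq]
      rw [mul_swap_apply_left] at h1
      exact absurd (hD _ (sameCycle_apply_right.2 hz)) (not_lt.2 (h1 ▸ hpq'))
  have hP := sameCycle_induct (fun z => ρ.SameCycle s z ∧ ρ'.SameCycle s z)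
    ⟨SameCycle.refl _ _, SameCycle.refl _ _⟩ (fun z ⟨hz, hz'⟩ => by
      refine ⟨sameCycle_apply_right.2 hz, ?_⟩
      obtain ⟨h1, h2⟩ := key z hz hz'
      have hzq : z ≠ q := (lt_of_lt_of_le (hD z hz) hq).ne
      have hzq' : z ≠ q' := (lt_of_lt_of_le (hD z hz) hq').ne
      have : ρ z = ρ' z := by
        rw [← mul_swap_apply_of_ne h1 hzq, h, mul_swap_apply_of_ne h2 hzq']
      rw [this]; exact sameCycle_apply_right.2 hz') ha
  exact (key a hP.1 hP.2).1 rfl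

/-- The surgery "open the cycle of `s` below `m` at `a` and merge it with the arc starting at `q`"
is injective in all its data. -/
lemma open_injective {s m a q a' q' : Fin n} {ρ ρ' : Perm (Fin n)}
    (hD : Below s m ρ) (hD' : Below s m ρ') (ha : ρ.SameCycle s a) (ha' : ρ'.SameCycle s a')
    (hq : m ≤ q) (hq' : m ≤ q') (hpq : m ≤ ρ q) (hpq' : m ≤ ρ' q')
    (h : ρ * swap a q = ρ' * swap a' q') : ρ = ρ' ∧ a = a' ∧ q = q' := by
  have haa := exit_unique hD hD' ha ha' hq hq' hpq hpq' h
  -- the backward exit point `ρ a` is recovered by the same argument applied to inverses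
  have hinv : ∀ (ρ : Perm (Fin n)) (a q : Fin n),
      (ρ * swap a q)⁻¹ = ρ⁻¹ * swap (ρ a) (ρ q) := by
    intro ρ a q
    rw [mul_inv_rev, swap_inv, Equiv.swap_apply_apply]
    group
  have hbb : ρ a = ρ' a' := by
    refine exit_unique (s := s) (m := m) (q := ρ q) (q' := ρ' q') (ρ := ρ⁻¹) (ρ' := ρ'⁻¹)
      (fun x hx => hD x (sameCycle_inv.1 hx)) (fun x hx => hD' x (sameCycle_inv.1 hx))
      (sameCycle_inv.2 (sameCycle_apply_right.2 ha))
      (sameCycle_inv.2 (sameCycle_apply_right.2 ha')) hpq hpq' (by simpa using hq)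
      (by simpa using hq') ?_
    rw [← hinv, ← hinv, h]
  have hqq : q = q' := by
    have h1 : (ρ * swap a q) q = (ρ' * swap a' q') q' := by
      rw [mul_swap_apply_right, mul_swap_apply_right, hbb]
    rw [h] at h1
    exact (ρ' * swap a' q').injective h1
  subst haa hqq
  exact ⟨mul_right_cancel h, rfl, rfl⟩

/-- If the cycle of `s < m` reaches `m`, then the piece of it through `s` and below `m` can be
closed up: exchanging the images of its last point `a` and of the point `q` entering it. -/
lemma exists_close {s m : Fin n} {σ : Perm (Fin n)} (hsm : s < m) (h : Reaches s m σ) :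
    ∃ a q : Fin n, Below s m (σ * swap a q) ∧ (σ * swap a q).SameCycle s a ∧ m ≤ q ∧
      m ≤ (σ * swap a q) q := by
  -- first exit of a forward orbit
  have exit : ∀ ρ : Perm (Fin n), Reaches s m ρ → ∃ j : ℕ, (∀ i ≤ j, (ρ ^ i) s < m) ∧
      m ≤ ρ ((ρ ^ j) s) := by
    rintro ρ ⟨x, hx, hmx⟩
    obtain ⟨i, -, rfl⟩ := hx.exists_pow_eq'
    have hex : ∃ i, m ≤ (ρ ^ i) s := ⟨i, hmx⟩
    have hne : Nat.find hex ≠ 0 := by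
      intro h0
      have := Nat.find_spec hex
      rw [h0] at this
      exact absurd hsm (not_lt.2 (by simpa using this))
    obtain ⟨j, hj⟩ := Nat.exists_eq_succ_of_ne_zero hne
    refine ⟨j, fun i hi => not_le.1 (Nat.find_min hex (by omega)), ?_⟩
    have := Nat.find_spec hex
    rwa [hj, Nat.succ_eq_add_one, pow_succ', Perm.mul_apply] at this
  obtain ⟨j, hj, hja⟩ := exit σ h
  obtain ⟨l, hl, hlb⟩ := exit σ⁻¹ (by
    obtain ⟨x, hx, hmx⟩ := h
    exact ⟨x, sameCycle_inv.2 hx, hmx⟩)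
  set a := (σ ^ j) s with ha
  set b := (σ⁻¹ ^ l) s with hb
  set q := σ⁻¹ b with hq
  have hσq : σ q = b := by simp [hq]
  have hqa : q ≠ a := (lt_of_lt_of_le (hj j le_rfl) hlb).ne'
  refine ⟨a, q, ?_, ?_, hlb, by rwa [mul_swap_apply_right]⟩
  · intro x hx
    have := sameCycle_induct
      (fun z => (∃ i ≤ j, z = (σ ^ i) s) ∨ (∃ i ≤ l, z = (σ⁻¹ ^ i) s))
      (Or.inl ⟨0, Nat.zero_le _, by simp⟩) (fun z hz => ?_) hx
    · rcases this with ⟨i, hi, rfl⟩ | ⟨i, hi, rfl⟩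
      · exact hj i hi
      · exact hl i hi
    · have hzm : z < m := by
        rcases hz with ⟨i, hi, rfl⟩ | ⟨i, hi, rfl⟩
        · exact hj i hi
        · exact hl i hi
      by_cases hza : z = a
      · right; refine ⟨l, le_rfl, ?_⟩
        rw [hza, mul_swap_apply_left, hσq]
      rw [mul_swap_apply_of_ne hza (lt_of_lt_of_le hzm hlb).ne]
      rcases hz with ⟨i, hi, rfl⟩ | ⟨i, hi, rfl⟩
      · left
        refine ⟨i + 1, ?_, by rw [pow_succ', Perm.mul_apply]⟩
        rcases hi.eq_or_lt with rfl | h'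
        · exact absurd rfl hza
        · exact h'
      · cases i with
        | zero =>
          left
          have hj0 : j ≠ 0 := by
            rintro rfl
            exact hza (by simp [ha])
          exact ⟨1, by omega, by simp⟩
        | succ i =>
          right
          refine ⟨i, by omega, ?_⟩
          rw [pow_succ', Perm.mul_apply]; simp
  · have : ∀ i ≤ j, ((σ * swap a q) ^ i) s = (σ ^ i) s := by
      intro i
      induction i with
      | zero => simp
      | succ i ih =>
        intro hi
        rw [pow_succ', Perm.mul_apply, ih (by omega), pow_succ', Perm.mul_apply]
        refine mul_swap_apply_of_ne ?_ ?_
        · intro h'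
          have h1 := hj (i + 1) hi
          rw [pow_succ', Perm.mul_apply, h'] at h1
          exact absurd h1 (not_lt.2 hja)
        · exact (lt_of_lt_of_le (hj i (by omega)) hlb).ne
    exact ⟨j, by rw [zpow_natCast, this j le_rfl]⟩

/-- `σ` with the point `m` removed from its cycle and made a fixed point. -/
def del (m : Fin n) (σ : Perm (Fin n)) : Perm (Fin n) := σ * swap (σ⁻¹ m) m

lemma del_self (m : Fin n) (σ : Perm (Fin n)) : del m σ m = m := by
  rw [del, mul_swap_apply_right]; simp

lemma del_mul_swap (m : Fin n) (σ : Perm (Fin n)) : del m σ * swap (σ⁻¹ m) m = σ :=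
  mul_swap_cancel

/-- If `τ` fixes `m`, then `τ * swap a m` is `τ` with `m` inserted right after `a`. -/
lemma inv_insert {m a : Fin n} {τ : Perm (Fin n)} (hm : τ m = m) : (τ * swap a m)⁻¹ m = a := by
  rw [Perm.inv_eq_iff_eq, mul_swap_apply_left, hm]

lemma del_insert {m a : Fin n} {τ : Perm (Fin n)} (hm : τ m = m) : del m (τ * swap a m) = τ := by
  rw [del, inv_insert hm, mul_swap_cancel]

lemma sameCycle_del {s m : Fin n} {σ : Perm (Fin n)} (hD : Below s m σ) (x : Fin n) :
    (del m σ).SameCycle s x ↔ σ.SameCycle s x := by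
  refine sameCycle_congr (fun z hz => mul_swap_apply_of_ne ?_ (hD z hz).ne) x
  intro h
  have := hD _ (sameCycle_apply_right.2 hz)
  rw [h] at this
  simp at this

/-- Inserting `m` into a cycle of `s` lying below `m` makes `m` the top of that cycle. -/
lemma topAt_insert {s m a : Fin n} {τ : Perm (Fin n)} (hm : τ m = m) (hD : Below s m τ)
    (ha : τ.SameCycle s a) : TopAt s m (τ * swap a m) := by
  constructor
  · by_contra hnot
    have key : ∀ z, (τ * swap a m).SameCycle s z → z ≠ a ∧ z ≠ m := by
      intro z hz
      constructor
      · rintro rfl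
        have := sameCycle_apply_right.2 hz
        rw [mul_swap_apply_left, hm] at this
        exact hnot this
      · rintro rfl; exact hnot hz
    have := (sameCycle_congr (σ := τ * swap a m) (ρ := τ) (s := s)
      (fun z hz => (mul_swap_apply_of_ne (key z hz).1 (key z hz).2).symm) a).1 ha
    exact (key a this).1 rfl
  · intro x hx
    have := sameCycle_induct (fun z => τ.SameCycle s z ∨ z = m) (Or.inl (SameCycle.refl _ _))
      (fun z hz => ?_) hx
    · rcases this with h | h
      · exact (hD x h).le
      · exact h.le
    · rcases hz with h | rfl
      · by_cases hza : z = a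
        · right; rw [hza, mul_swap_apply_left, hm]
        · left; rw [mul_swap_apply_of_ne hza (hD z h).ne]; exact sameCycle_apply_right.2 h
      · left; rw [mul_swap_apply_right]; exact sameCycle_apply_right.2 ha

/-- Deleting the top `m` of the cycle of `s ≠ m` leaves a cycle below `m`, which still contains the
former predecessor of `m`. -/
lemma below_del {s m : Fin n} {σ : Perm (Fin n)} (hsm : s < m) (h : TopAt s m σ) :
    Below s m (del m σ) ∧ (del m σ).SameCycle s (σ⁻¹ m) := by
  have hB : ∀ x, (del m σ).SameCycle s x → σ.SameCycle s x ∧ x ≠ m := by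
    intro x hx
    refine sameCycle_induct (fun z => σ.SameCycle s z ∧ z ≠ m) ⟨SameCycle.refl _ _, hsm.ne⟩
      (fun z hz => ⟨?_, ?_⟩) hx
    · by_cases hza : z = σ⁻¹ m
      · rw [hza, del, mul_swap_apply_left]; exact sameCycle_apply_right.2 h.1
      · rw [del, mul_swap_apply_of_ne hza hz.2]; exact sameCycle_apply_right.2 hz.1
    · intro h'
      apply hz.2
      exact (del m σ).injective (h'.trans (del_self m σ).symm)
  refine ⟨fun x hx => lt_of_le_of_ne (h.2 x (hB x hx).1) (hB x hx).2, ?_⟩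
  by_contra hnot
  have key : ∀ z, (del m σ).SameCycle s z → z ≠ σ⁻¹ m := by
    rintro z hz rfl; exact hnot hz
  have := (sameCycle_congr (σ := del m σ) (ρ := σ) (s := s)
      (fun z hz => (mul_swap_apply_of_ne (key z hz) (hB z hz).2).symm) m).1 h.1
  exact (hB m this).2 rfl

/-! ### Weights and surgeries -/

/-- The cost factor of a detour through `m` on the way from `u` to `v`. -/
noncomputable def gap (β : ℝ) (m u v : ℕ) : ℝ :=
  Real.exp (-β * (|(u : ℝ) - m| + |(v : ℝ) - m| - |(u : ℝ) - v|))

lemma gap_pos (β : ℝ) (m u v : ℕ) : 0 < gap β m u v := Real.exp_pos _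

lemma mallowsWeight_pos (β : ℝ) (σ : Perm (Fin n)) : 0 < mallowsWeight n β σ := Real.exp_pos _

lemma cost_mul_swap (σ : Perm (Fin n)) {i j : Fin n} (hij : i ≠ j) :
    ∑ z : Fin n, |(((σ * swap i j) z : ℕ) : ℝ) - ((z : ℕ) : ℝ)| =
      ∑ z : Fin n, |((σ z : ℕ) : ℝ) - ((z : ℕ) : ℝ)|
        + (|((σ j : ℕ) : ℝ) - ((i : ℕ) : ℝ)| + |((σ i : ℕ) : ℝ) - ((j : ℕ) : ℝ)|
          - |((σ i : ℕ) : ℝ) - ((i : ℕ) : ℝ)| - |((σ j : ℕ) : ℝ) - ((j : ℕ) : ℝ)|) := by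
  have hs : ∀ f : Fin n → ℝ, ∑ z, f z = f i + f j + ∑ z ∈ (Finset.univ.erase i).erase j, f z := by
    intro f
    rw [← Finset.add_sum_erase Finset.univ f (Finset.mem_univ i),
      ← Finset.add_sum_erase (Finset.univ.erase i) f (a := j)
        (Finset.mem_erase.2 ⟨hij.symm, Finset.mem_univ j⟩)]
    ring
  rw [hs, hs (fun z => |((σ z : ℕ) : ℝ) - ((z : ℕ) : ℝ)|)]
  have : ∑ z ∈ (Finset.univ.erase i).erase j, |(((σ * swap i j) z : ℕ) : ℝ) - ((z : ℕ) : ℝ)| =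
      ∑ z ∈ (Finset.univ.erase i).erase j, |((σ z : ℕ) : ℝ) - ((z : ℕ) : ℝ)| := by
    refine Finset.sum_congr rfl fun z hz => ?_
    simp only [Finset.mem_erase, Finset.mem_univ, and_true] at hz
    rw [mul_swap_apply_of_ne hz.2 hz.1]
  rw [this, mul_swap_apply_left, mul_swap_apply_right]
  ring

/-- Reconnecting an arc `i → σ i` below `k` with an arc `j → σ j` above `k` costs the detours of
both arcs to the level `k`. -/
lemma weight_reconnect (β : ℝ) (σ : Perm (Fin n)) {i j : Fin n} {k : ℕ} (hi : (i : ℕ) < k)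
    (hi' : (σ i : ℕ) < k) (hj : k ≤ (j : ℕ)) (hj' : k ≤ (σ j : ℕ)) :
    mallowsWeight n β (σ * swap i j) =
      mallowsWeight n β σ * (gap β k i (σ i) * gap β k j (σ j)) := by
  have hij : i ≠ j := by rintro rfl; omega
  unfold mallowsWeight gap
  rw [cost_mul_swap σ hij, ← Real.exp_add, ← Real.exp_add]
  congr 1
  have h1 : ((i : ℕ) : ℝ) ≤ k := by exact_mod_cast hi.le
  have h2 : ((σ i : ℕ) : ℝ) ≤ k := by exact_mod_cast hi'.le
  have h3 : (k : ℝ) ≤ ((j : ℕ) : ℝ) := by exact_mod_cast hj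
  have h4 : (k : ℝ) ≤ ((σ j : ℕ) : ℝ) := by exact_mod_cast hj'
  rw [abs_of_nonneg (by linarith : (0 : ℝ) ≤ ((σ j : ℕ) : ℝ) - ((i : ℕ) : ℝ)),
    abs_of_nonpos (by linarith : ((σ i : ℕ) : ℝ) - ((j : ℕ) : ℝ) ≤ 0),
    abs_of_nonpos (by linarith : ((i : ℕ) : ℝ) - (k : ℝ) ≤ 0),
    abs_of_nonpos (by linarith : ((σ i : ℕ) : ℝ) - (k : ℝ) ≤ 0),
    abs_of_nonneg (by linarith : (0 : ℝ) ≤ ((j : ℕ) : ℝ) - (k : ℝ)),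
    abs_of_nonneg (by linarith : (0 : ℝ) ≤ ((σ j : ℕ) : ℝ) - (k : ℝ)),
    abs_sub_comm ((i : ℕ) : ℝ) ((σ i : ℕ) : ℝ), abs_sub_comm ((j : ℕ) : ℝ) ((σ j : ℕ) : ℝ)]
  ring

/-- Inserting the fixed point `m` into the arc `a → τ a` costs the detour of that arc to `m`. -/
lemma weight_insert (β : ℝ) {τ : Perm (Fin n)} {m a : Fin n} (hm : τ m = m) :
    mallowsWeight n β (τ * swap a m) = mallowsWeight n β τ * gap β m a (τ a) := by
  by_cases ham : a = m
  · subst ham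
    rw [swap_self, ← Perm.one_def, mul_one]
    simp [gap, hm]
  unfold mallowsWeight gap
  rw [cost_mul_swap τ ham, ← Real.exp_add, hm]
  congr 1
  rw [abs_sub_comm ((a : ℕ) : ℝ) ((m : ℕ) : ℝ), abs_sub_comm ((a : ℕ) : ℝ) ((τ a : ℕ) : ℝ)]
  simp only [sub_self, abs_zero]
  ring

lemma gap_high {β : ℝ} {m u v : ℕ} (hu : m ≤ u) (hv : m ≤ v) :
    gap β m u v = Real.exp (-(2 * β)) ^ (min u v - m) := by
  rw [gap, ← Real.exp_nat_mul, Nat.cast_sub (le_min hu hv)]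
  congr 1
  have h3 : (m : ℝ) ≤ u := by exact_mod_cast hu
  have h4 : (m : ℝ) ≤ v := by exact_mod_cast hv
  push_cast
  rw [abs_of_nonneg (sub_nonneg.2 h3), abs_of_nonneg (sub_nonneg.2 h4)]
  rcases le_total (u : ℝ) v with h | h
  · rw [min_eq_left h, abs_of_nonpos (by linarith)]; ring
  · rw [min_eq_right h, abs_of_nonneg (by linarith)]; ring

lemma gap_low {β : ℝ} {m u v : ℕ} (hu : u ≤ m) (hv : v ≤ m) :
    gap β m u v = Real.exp (-(2 * β)) ^ (m - max u v) := by
  rw [gap, ← Real.exp_nat_mul, Nat.cast_sub (max_le hu hv)]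
  congr 1
  have h3 : (u : ℝ) ≤ m := by exact_mod_cast hu
  have h4 : (v : ℝ) ≤ m := by exact_mod_cast hv
  push_cast
  rw [abs_of_nonpos (sub_nonpos.2 h3), abs_of_nonpos (sub_nonpos.2 h4)]
  rcases le_total (u : ℝ) v with h | h
  · rw [max_eq_right h, abs_of_nonpos (by linarith)]; ring
  · rw [max_eq_left h, abs_of_nonneg (by linarith)]; ring

lemma gap_le_one {β : ℝ} (hβ : 0 < β) (m u v : ℕ) : gap β m u v ≤ 1 := by
  rw [gap, Real.exp_le_one_iff]
  have := abs_sub_le (u : ℝ) m v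
  rw [abs_sub_comm (m : ℝ) v] at this
  nlinarith

lemma sum_le_sum_of_inj {α γ : Type*} {s : Finset α} {t : Finset γ} {f : α → ℝ} {g : γ → ℝ}
    (e : α → γ) (he : ∀ a ∈ s, e a ∈ t) (hinj : Set.InjOn e s)
    (hfg : ∀ a ∈ s, f a ≤ g (e a)) (hg : ∀ b ∈ t, 0 ≤ g b) :
    ∑ a ∈ s, f a ≤ ∑ b ∈ t, g b := by
  classical
  calc ∑ a ∈ s, f a ≤ ∑ a ∈ s, g (e a) := Finset.sum_le_sum hfg
    _ = ∑ b ∈ s.image e, g b := (Finset.sum_image hinj).symm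
    _ ≤ ∑ b ∈ t, g b := Finset.sum_le_sum_of_subset_of_nonneg
        (Finset.image_subset_iff.2 he) (fun b hb _ => hg b hb)

lemma sum_pow_high {r : ℝ} (h0 : 0 ≤ r) (h1 : r < 1) (k : ℕ) :
    ∑ i ∈ Finset.univ.filter (fun i : Fin n => k ≤ (i : ℕ)), r ^ ((i : ℕ) - k) ≤ 1 / (1 - r) := by
  calc _ ≤ ∑ j ∈ Finset.range n, r ^ j := by
        refine sum_le_sum_of_inj (fun i : Fin n => (i : ℕ) - k) ?_ ?_ (fun _ _ => le_rfl)
          (fun _ _ => by positivity)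
        · intro i _; have := i.2; simp only [Finset.mem_range]; omega
        · intro i hi j hj hij
          simp at hi hj hij
          ext; omega
    _ ≤ ∑' j, r ^ j := (summable_geometric_of_lt_one h0 h1).sum_le_tsum _
        (fun _ _ => by positivity)
    _ = _ := by rw [tsum_geometric_of_lt_one h0 h1, one_div]

lemma sum_pow_low {r : ℝ} (h0 : 0 ≤ r) (h1 : r < 1) (k : ℕ) :
    ∑ i ∈ Finset.univ.filter (fun i : Fin n => (i : ℕ) < k), r ^ (k - (i : ℕ)) ≤ r / (1 - r) := by
  calc _ ≤ ∑ j ∈ Finset.range k, r * r ^ j := by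
        refine sum_le_sum_of_inj (fun i : Fin n => k - 1 - (i : ℕ)) ?_ ?_ ?_
          (fun _ _ => by positivity)
        · intro i hi; simp at hi ⊢; omega
        · intro i hi j hj hij
          simp at hi hj hij
          ext; omega
        · intro i hi
          simp at hi
          rw [← pow_succ']
          exact (congrArg (r ^ ·) (by omega)).le
    _ = r * ∑ j ∈ Finset.range k, r ^ j := by rw [Finset.mul_sum]
    _ ≤ r * ∑' j, r ^ j := by
        gcongr
        exact (summable_geometric_of_lt_one h0 h1).sum_le_tsum _ (fun _ _ => by positivity)
    _ = _ := by rw [tsum_geometric_of_lt_one h0 h1, div_eq_mul_inv]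

/-- Arcs of `σ` with both ends below `k`. -/
def lowArcs (k : ℕ) (σ : Perm (Fin n)) : Finset (Fin n) :=
  Finset.univ.filter fun i => (i : ℕ) < k ∧ (σ i : ℕ) < k

/-- Arcs of `σ` with both ends at or above `k`. -/
def highArcs (k : ℕ) (σ : Perm (Fin n)) : Finset (Fin n) :=
  Finset.univ.filter fun i => k ≤ (i : ℕ) ∧ k ≤ (σ i : ℕ)

/-- Arcs of `σ` crossing the gap below `k` upwards. -/
def upArcs (k : ℕ) (σ : Perm (Fin n)) : Finset (Fin n) :=
  Finset.univ.filter fun i => (i : ℕ) < k ∧ k ≤ (σ i : ℕ)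

/-- Arcs of `σ` crossing the gap below `k` downwards. -/
def downArcs (k : ℕ) (σ : Perm (Fin n)) : Finset (Fin n) :=
  Finset.univ.filter fun i => k ≤ (i : ℕ) ∧ (σ i : ℕ) < k

lemma sum_highArcs_le {β : ℝ} (hβ : 0 < β) (k : ℕ) (σ : Perm (Fin n)) :
    ∑ i ∈ highArcs k σ, gap β k i (σ i) ≤ 2 / (1 - Real.exp (-(2 * β))) := by
  set r := Real.exp (-(2 * β)) with hr
  have h0 : 0 < r := Real.exp_pos _
  have h1 : r < 1 := by rw [hr, Real.exp_lt_one_iff]; linarith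
  calc _ ≤ ∑ i ∈ highArcs k σ, (r ^ ((i : ℕ) - k) + r ^ ((σ i : ℕ) - k)) := by
        refine Finset.sum_le_sum fun i hi => ?_
        simp only [highArcs, Finset.mem_filter, Finset.mem_univ, true_and] at hi
        rw [gap_high hi.1 hi.2, ← hr]
        rcases le_total (i : ℕ) (σ i : ℕ) with h | h
        · rw [min_eq_left h]; linarith [pow_pos h0 ((σ i : ℕ) - k)]
        · rw [min_eq_right h]; linarith [pow_pos h0 ((i : ℕ) - k)]
    _ = ∑ i ∈ highArcs k σ, r ^ ((i : ℕ) - k) + ∑ i ∈ highArcs k σ, r ^ ((σ i : ℕ) - k) :=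
        Finset.sum_add_distrib
    _ ≤ 1 / (1 - r) + 1 / (1 - r) := by
        refine add_le_add ?_ ?_
        · refine le_trans (sum_le_sum_of_inj (g := fun i : Fin n => r ^ ((i : ℕ) - k)) id ?_
            (fun _ _ _ _ h => h) (fun _ _ => le_rfl)
            (fun _ _ => by positivity)) (sum_pow_high (n := n) h0.le h1 k)
          intro i hi
          simp [highArcs] at hi ⊢; exact hi.1
        · refine le_trans (sum_le_sum_of_inj (g := fun i : Fin n => r ^ ((i : ℕ) - k)) σ ?_ (fun _ _ _ _ h => σ.injective h)
            (fun _ _ => le_rfl) (fun _ _ => by positivity)) (sum_pow_high (n := n) h0.le h1 k)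
          intro i hi
          simp [highArcs] at hi ⊢; exact hi.2
    _ = 2 / (1 - r) := by ring

lemma sum_lowArcs_le {β : ℝ} (hβ : 0 < β) (k : ℕ) (σ : Perm (Fin n)) :
    ∑ i ∈ lowArcs k σ, gap β k i (σ i)
      ≤ 2 * Real.exp (-(2 * β)) / (1 - Real.exp (-(2 * β))) := by
  set r := Real.exp (-(2 * β)) with hr
  have h0 : 0 < r := Real.exp_pos _
  have h1 : r < 1 := by rw [hr, Real.exp_lt_one_iff]; linarith
  calc _ ≤ ∑ i ∈ lowArcs k σ, (r ^ (k - (i : ℕ)) + r ^ (k - (σ i : ℕ))) := by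
        refine Finset.sum_le_sum fun i hi => ?_
        simp only [lowArcs, Finset.mem_filter, Finset.mem_univ, true_and] at hi
        rw [gap_low hi.1.le hi.2.le, ← hr]
        rcases le_total (i : ℕ) (σ i : ℕ) with h | h
        · rw [max_eq_right h]; linarith [pow_pos h0 (k - (i : ℕ))]
        · rw [max_eq_left h]; linarith [pow_pos h0 (k - (σ i : ℕ))]
    _ = ∑ i ∈ lowArcs k σ, r ^ (k - (i : ℕ)) + ∑ i ∈ lowArcs k σ, r ^ (k - (σ i : ℕ)) :=
        Finset.sum_add_distrib
    _ ≤ r / (1 - r) + r / (1 - r) := by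
        refine add_le_add ?_ ?_
        · refine le_trans (sum_le_sum_of_inj (g := fun i : Fin n => r ^ (k - (i : ℕ))) id ?_
            (fun _ _ _ _ h => h) (fun _ _ => le_rfl)
            (fun _ _ => by positivity)) (sum_pow_low (n := n) h0.le h1 k)
          intro i hi
          simp [lowArcs] at hi ⊢; exact hi.1
        · refine le_trans (sum_le_sum_of_inj (g := fun i : Fin n => r ^ (k - (i : ℕ))) σ ?_ (fun _ _ _ _ h => σ.injective h)
            (fun _ _ => le_rfl) (fun _ _ => by positivity)) (sum_pow_low (n := n) h0.le h1 k)
          intro i hi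
          simp [lowArcs] at hi ⊢; exact hi.2
    _ = 2 * r / (1 - r) := by ring

lemma card_upArcs_eq (k : ℕ) (σ : Perm (Fin n)) : (upArcs k σ).card = (downArcs k σ).card := by
  -- both are the defect between `k`-initial segments and arcs inside them
  have h1 : (upArcs k σ).card + (lowArcs k σ).card
      = (Finset.univ.filter fun i : Fin n => (i : ℕ) < k).card := by
    rw [← Finset.card_union_of_disjoint]
    · congr 1; ext i; simp [upArcs, lowArcs]; omega
    · rw [Finset.disjoint_left]; intro i; simp [upArcs, lowArcs]; omega
  have h2 : (downArcs k σ).card + (lowArcs k σ).card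
      = (Finset.univ.filter fun i : Fin n => (σ i : ℕ) < k).card := by
    rw [← Finset.card_union_of_disjoint]
    · congr 1; ext i; simp [downArcs, lowArcs]; omega
    · rw [Finset.disjoint_left]; intro i; simp [downArcs, lowArcs]; omega
  have h3 : (Finset.univ.filter fun i : Fin n => (σ i : ℕ) < k).card
      = (Finset.univ.filter fun i : Fin n => (i : ℕ) < k).card := by
    refine Finset.card_bij (fun i _ => σ i) ?_ (fun _ _ _ _ h => σ.injective h) ?_
    · intro i hi; simpa using hi
    · intro j hj; exact ⟨σ⁻¹ j, by simpa using hj, by simp⟩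
  omega

/-! ### Crossing numbers and the upper bound for the tail of the maximum -/

/-- Second moment of the number of arcs crossing level `k`, on any event `E` stable under
uncrossing an upward and a downward arc at level `k`. Uncrossing such a pair gives an arc below and
an arc above `k`, and the weight of the reverse operation is summable over those arcs. -/
lemma height_moment {β : ℝ} (hβ : 0 < β) (k : ℕ) (E : Perm (Fin n) → Prop)
    (hE : ∀ σ i j, E σ → i ∈ upArcs k σ → j ∈ downArcs k σ → E (σ * swap i j)) :
    ∑ σ ∈ Finset.univ.filter E, ((upArcs k σ).card : ℝ) ^ 2 * mallowsWeight n β σ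
      ≤ 4 * Real.exp (-(2 * β)) / (1 - Real.exp (-(2 * β))) ^ 2
        * ∑ σ ∈ Finset.univ.filter E, mallowsWeight n β σ := by
  set r := Real.exp (-(2 * β)) with hr
  have h0 : 0 < r := Real.exp_pos _
  have h1 : r < 1 := by rw [hr, Real.exp_lt_one_iff]; linarith
  calc ∑ σ ∈ Finset.univ.filter E, ((upArcs k σ).card : ℝ) ^ 2 * mallowsWeight n β σ
      = ∑ t ∈ (Finset.univ.filter E).sigma (fun σ => upArcs k σ ×ˢ downArcs k σ),
          mallowsWeight n β t.1 := by
        rw [Finset.sum_sigma]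
        refine Finset.sum_congr rfl fun σ _ => ?_
        dsimp only
        rw [Finset.sum_const, Finset.card_product, ← card_upArcs_eq, nsmul_eq_mul]
        push_cast; ring
    _ ≤ ∑ t ∈ (Finset.univ.filter E).sigma (fun σ => lowArcs k σ ×ˢ highArcs k σ),
          mallowsWeight n β t.1 *
            (gap β k t.2.1 (t.1 t.2.1) * gap β k t.2.2 (t.1 t.2.2)) := by
        refine sum_le_sum_of_inj (fun t => ⟨t.1 * swap t.2.1 t.2.2, t.2⟩) ?_ ?_ ?_ ?_
        · rintro ⟨σ, i, j⟩ ht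
          simp only [Finset.mem_sigma, Finset.mem_product, Finset.mem_filter, Finset.mem_univ,
            true_and] at ht ⊢
          refine ⟨hE σ i j ht.1 ht.2.1 ht.2.2, ?_⟩
          simp only [upArcs, downArcs, Finset.mem_filter, Finset.mem_univ, true_and] at ht
          simp only [lowArcs, highArcs, Finset.mem_filter, Finset.mem_univ, true_and,
            mul_swap_apply_left, mul_swap_apply_right]
          tauto
        · rintro ⟨σ, i, j⟩ _ ⟨σ', i', j'⟩ _ h
          simp only [Sigma.mk.injEq, heq_eq_eq, Prod.mk.injEq] at h
          obtain ⟨h, rfl, rfl⟩ := h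
          rw [mul_right_cancel h]
        · rintro ⟨σ, i, j⟩ ht
          simp only [Finset.mem_sigma, Finset.mem_product, Finset.mem_filter, Finset.mem_univ,
            true_and, upArcs, downArcs] at ht
          have := weight_reconnect β (σ * swap i j) (i := i) (j := j) (k := k) ht.2.1.1
            (by rw [mul_swap_apply_left]; exact ht.2.2.2) ht.2.2.1
            (by rw [mul_swap_apply_right]; exact ht.2.1.2)
          rw [mul_swap_cancel] at this
          exact this.le
        · rintro ⟨σ, i, j⟩ _
          exact mul_nonneg (mallowsWeight_pos _ _).le
            (mul_nonneg (gap_pos _ _ _ _).le (gap_pos _ _ _ _).le)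
    _ = ∑ σ ∈ Finset.univ.filter E, mallowsWeight n β σ *
          ((∑ i ∈ lowArcs k σ, gap β k i (σ i)) * ∑ j ∈ highArcs k σ, gap β k j (σ j)) := by
        rw [Finset.sum_sigma]
        refine Finset.sum_congr rfl fun σ _ => ?_
        dsimp only
        rw [← Finset.mul_sum, Finset.sum_product, Finset.sum_mul_sum]
    _ ≤ ∑ σ ∈ Finset.univ.filter E, mallowsWeight n β σ * (2 * r / (1 - r) * (2 / (1 - r))) := by
        refine Finset.sum_le_sum fun σ _ => ?_
        refine mul_le_mul_of_nonneg_left ?_ (mallowsWeight_pos _ _).le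
        refine mul_le_mul (sum_lowArcs_le hβ k σ) (sum_highArcs_le hβ k σ)
          (Finset.sum_nonneg fun _ _ => (gap_pos _ _ _ _).le) ?_
        have : 0 < 1 - r := by linarith
        positivity
    _ = _ := by
        rw [← Finset.sum_mul, mul_comm]
        congr 1
        have : 1 - r ≠ 0 := by linarith
        field_simp
        ring

/-- Arcs crossing a level strictly above the top of the cycle of `s` do not meet that cycle, so
uncrossing them does not change its top. -/
lemma topAt_uncross {s m : Fin n} {k : ℕ} (hk : (m : ℕ) < k) {σ : Perm (Fin n)} {i j : Fin n}
    (h : TopAt s m σ) (hi : i ∈ upArcs k σ) (hj : j ∈ downArcs k σ) :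
    TopAt s m (σ * swap i j) := by
  simp only [upArcs, downArcs, Finset.mem_filter, Finset.mem_univ, true_and] at hi hj
  have hc := sameCycle_congr (σ := σ) (ρ := σ * swap i j) (s := s) (fun z hz => by
    refine mul_swap_apply_of_ne ?_ ?_
    · rintro rfl
      have := h.2 _ (sameCycle_apply_right.2 hz)
      rw [Fin.le_def] at this; omega
    · rintro rfl
      have := h.2 _ hz
      rw [Fin.le_def] at this; omega)
  exact ⟨(hc m).2 h.1, fun x hx => h.2 x ((hc x).1 hx)⟩

/-- Total weight of the detours from `m` to the arcs of `del m σ`: arcs on one side of `m` give a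
geometric series, and each arc crossing `m` costs at most `1`. -/
lemma sum_gap_del_le {β : ℝ} (hβ : 0 < β) {s m : Fin n} (hsm : s < m) {σ : Perm (Fin n)}
    (h : TopAt s m σ) :
    ∑ x : Fin n, gap β m x (del m σ x)
      ≤ 4 / (1 - Real.exp (-(2 * β))) + 2 * ((upArcs (m + 1) σ).card : ℝ) := by
  set τ := del m σ with hτ
  have hτm : τ m = m := del_self m σ
  have hr1 : Real.exp (-(2 * β)) < 1 := by rw [Real.exp_lt_one_iff]; linarith
  have hlow := sum_lowArcs_le hβ m τ
  have hhigh := sum_highArcs_le hβ m τ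
  -- away from `m` and its predecessor, `τ` and `σ` agree
  have hcross : ∀ x, x ∈ upArcs m τ → x ∈ upArcs (m + 1) σ := by
    intro x hx
    simp only [upArcs, Finset.mem_filter, Finset.mem_univ, true_and] at hx ⊢
    have hxm : x ≠ m := by rintro rfl; omega
    have hne : τ x ≠ m := fun h' => hxm (τ.injective (h'.trans hτm.symm))
    have hxa : x ≠ σ⁻¹ m := by
      rintro rfl
      have h1 : τ (σ⁻¹ m) = σ m := mul_swap_apply_left
      have h2 := h.2 _ (sameCycle_apply_right.2 h.1)
      rw [h1] at hx hne
      rw [Fin.le_def] at h2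
      exact hne (Fin.ext (le_antisymm h2 hx.2))
    have hx2 : τ x = σ x := mul_swap_apply_of_ne hxa hxm
    rw [hx2] at hx hne
    have : (σ x : ℕ) ≠ m := fun h' => hne (Fin.ext h')
    omega
  have hup : ((upArcs m τ).card : ℝ) ≤ (upArcs (m + 1) σ).card := by
    exact_mod_cast Finset.card_le_card hcross
  have hdn : ((downArcs m τ).card : ℝ) ≤ (upArcs (m + 1) σ).card := by
    rw [← card_upArcs_eq]; exact hup
  have hbd : ∀ S : Finset (Fin n), ∑ x ∈ S, gap β m x (τ x) ≤ S.card := by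
    intro S
    calc _ ≤ ∑ x ∈ S, (1 : ℝ) := Finset.sum_le_sum fun x _ => gap_le_one hβ _ _ _
      _ = _ := by simp
  have hu : (Finset.univ : Finset (Fin n)) =
      (lowArcs m τ ∪ highArcs m τ) ∪ (upArcs m τ ∪ downArcs m τ) := by
    ext x; simp [lowArcs, highArcs, upArcs, downArcs]; omega
  have hsplit : ∀ S T : Finset (Fin n), ∑ x ∈ S ∪ T, gap β m x (τ x) ≤
      ∑ x ∈ S, gap β m x (τ x) + ∑ x ∈ T, gap β m x (τ x) := by
    intro S T
    rw [← Finset.sum_union_inter]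
    have : 0 ≤ ∑ x ∈ S ∩ T, gap β m x (τ x) := Finset.sum_nonneg fun _ _ => (gap_pos _ _ _ _).le
    linarith
  have e1 := hsplit (lowArcs m τ ∪ highArcs m τ) (upArcs m τ ∪ downArcs m τ)
  have e2 := hsplit (lowArcs m τ) (highArcs m τ)
  have e3 := hsplit (upArcs m τ) (downArcs m τ)
  have e4 := hbd (upArcs m τ)
  have e5 := hbd (downArcs m τ)
  have e6 : 2 * Real.exp (-(2 * β)) / (1 - Real.exp (-(2 * β)))
      ≤ 2 / (1 - Real.exp (-(2 * β))) := by
    apply div_le_div_of_nonneg_right _ (by linarith); linarith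
  have e7 : 4 / (1 - Real.exp (-(2 * β))) = 2 * (2 / (1 - Real.exp (-(2 * β)))) := by ring
  rw [hu]
  linarith

/-- The weight of `{max C_s ≥ m}` is at most `18 / (1 - e^{-2β})²` times that of
`{max C_s = m}`. A permutation with `max C_s ≥ m` is sent to the one obtained by closing the strand
of `s` below `m` and inserting `m` there; the lost data are the arc above `m` that was cut and the
former position of `m`, each with a summable weight. -/
lemma reaches_le {β : ℝ} (hβ : 0 < β) {s m : Fin n} (hsm : s < m) :
    ∑ σ ∈ Finset.univ.filter (Reaches s m), mallowsWeight n β σ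
      ≤ 18 / (1 - Real.exp (-(2 * β))) ^ 2
        * ∑ σ ∈ Finset.univ.filter (TopAt s m), mallowsWeight n β σ := by
  set r := Real.exp (-(2 * β)) with hr
  have h0 : 0 < r := Real.exp_pos _
  have h1 : r < 1 := by rw [hr, Real.exp_lt_one_iff]; linarith
  have h1' : 0 < 1 - r := by linarith
  -- pairs of a permutation whose cycle of `s` is below `m` and a point `a` of that cycle
  set DD : Finset (Perm (Fin n) × Fin n) :=
    Finset.univ.filter fun p => Below s m p.1 ∧ p.1.SameCycle s p.2 with hDD
  have step1 : ∑ σ ∈ Finset.univ.filter (Reaches s m), mallowsWeight n β σ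
      ≤ 2 / (1 - r) * ∑ p ∈ DD, mallowsWeight n β p.1 * gap β m p.2 (p.1 p.2) := by
    have hch : ∀ σ : Perm (Fin n), ∃ aq : Fin n × Fin n, Reaches s m σ →
        Below s m (σ * swap aq.1 aq.2) ∧ (σ * swap aq.1 aq.2).SameCycle s aq.1 ∧ m ≤ aq.2 ∧
          m ≤ (σ * swap aq.1 aq.2) aq.2 := by
      intro σ
      by_cases h : Reaches s m σ
      · obtain ⟨a, q, h'⟩ := exists_close hsm h
        exact ⟨(a, q), fun _ => h'⟩
      · exact ⟨(s, s), fun h' => absurd h' h⟩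
    choose e he using hch
    calc ∑ σ ∈ Finset.univ.filter (Reaches s m), mallowsWeight n β σ
        ≤ ∑ t ∈ DD.sigma (fun p => highArcs m p.1), mallowsWeight n β t.1.1 *
            (gap β m t.1.2 (t.1.1 t.1.2) * gap β m t.2 (t.1.1 t.2)) := by
          refine sum_le_sum_of_inj
            (fun σ => ⟨(σ * swap (e σ).1 (e σ).2, (e σ).1), (e σ).2⟩) ?_ ?_ ?_ ?_
          · intro σ hσ
            obtain ⟨g1, g2, g3, g4⟩ := he σ (Finset.mem_filter.1 hσ).2
            simp only [hDD, Finset.mem_sigma, Finset.mem_filter, Finset.mem_univ, true_and,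
              highArcs]
            exact ⟨⟨g1, g2⟩, g3, g4⟩
          · intro σ _ σ' _ h
            simp only [Sigma.mk.injEq, heq_eq_eq, Prod.mk.injEq] at h
            obtain ⟨⟨h, h2⟩, h3⟩ := h
            rw [h2, h3] at h
            exact mul_right_cancel h
          · intro σ hσ
            obtain ⟨g1, g2, g3, g4⟩ := he σ (Finset.mem_filter.1 hσ).2
            have := weight_reconnect β (σ * swap (e σ).1 (e σ).2) (i := (e σ).1) (j := (e σ).2)
              (k := m) (g1 _ g2) (g1 _ (sameCycle_apply_right.2 g2)) g3 g4
            rw [mul_swap_cancel] at this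
            exact this.le
          · rintro ⟨⟨σ, i⟩, j⟩ _
            exact mul_nonneg (mallowsWeight_pos _ _).le
              (mul_nonneg (gap_pos _ _ _ _).le (gap_pos _ _ _ _).le)
      _ = ∑ p ∈ DD, (mallowsWeight n β p.1 * gap β m p.2 (p.1 p.2)) *
            ∑ q ∈ highArcs m p.1, gap β m q (p.1 q) := by
          rw [Finset.sum_sigma]
          refine Finset.sum_congr rfl fun p _ => ?_
          rw [Finset.mul_sum]
          refine Finset.sum_congr rfl fun q _ => ?_
          ring
      _ ≤ ∑ p ∈ DD, (mallowsWeight n β p.1 * gap β m p.2 (p.1 p.2)) * (2 / (1 - r)) := by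
          refine Finset.sum_le_sum fun p _ => ?_
          exact mul_le_mul_of_nonneg_left (sum_highArcs_le hβ m p.1)
            (mul_nonneg (mallowsWeight_pos _ _).le (gap_pos _ _ _ _).le)
      _ = _ := by rw [← Finset.sum_mul, mul_comm]
  have step2 : ∑ p ∈ DD, mallowsWeight n β p.1 * gap β m p.2 (p.1 p.2)
      ≤ ∑ σ ∈ Finset.univ.filter (TopAt s m), mallowsWeight n β σ *
          ∑ x : Fin n, gap β m x (del m σ x) := by
    calc ∑ p ∈ DD, mallowsWeight n β p.1 * gap β m p.2 (p.1 p.2)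
        ≤ ∑ t ∈ (Finset.univ.filter (TopAt s m)) ×ˢ (Finset.univ : Finset (Fin n)),
            mallowsWeight n β t.1 * gap β m t.2 (del m t.1 t.2) := by
          refine sum_le_sum_of_inj (fun p => (del m p.1 * swap p.2 m, p.1⁻¹ m)) ?_ ?_ ?_ ?_
          · rintro ⟨ρ, a⟩ hp
            simp only [hDD, Finset.mem_filter, Finset.mem_univ, true_and] at hp
            simp only [Finset.mem_product, Finset.mem_filter, Finset.mem_univ, true_and, and_true]
            exact topAt_insert (del_self m ρ)
              (fun x hx => hp.1 x ((sameCycle_del hp.1 x).1 hx)) ((sameCycle_del hp.1 a).2 hp.2)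
          · rintro ⟨ρ, a⟩ _ ⟨ρ', a'⟩ _ h
            simp only [Prod.mk.injEq] at h
            obtain ⟨h2, h3⟩ := h
            have h4 : del m ρ = del m ρ' := by
              rw [← del_insert (a := a) (del_self m ρ), h2, del_insert (del_self m ρ')]
            have h5 : a = a' := by
              rw [← inv_insert (a := a) (del_self m ρ), h2, inv_insert (del_self m ρ')]
            rw [h5, ← del_mul_swap m ρ, h4, h3, del_mul_swap]
          · rintro ⟨ρ, a⟩ hp
            simp only [hDD, Finset.mem_filter, Finset.mem_univ, true_and] at hp
            have ha : del m ρ a = ρ a := by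
              refine mul_swap_apply_of_ne ?_ (hp.1 a hp.2).ne
              rintro rfl
              have := hp.1 _ (sameCycle_apply_right.2 hp.2)
              simp at this
            have e1 := weight_insert β (a := ρ⁻¹ m) (del_self m ρ)
            have e2 := weight_insert β (a := a) (del_self m ρ)
            rw [del_mul_swap] at e1
            simp only
            rw [del_insert (del_self m ρ), e1, e2, ha]
            exact le_of_eq (by ring)
          · rintro ⟨σ, x⟩ _
            exact mul_nonneg (mallowsWeight_pos _ _).le (gap_pos _ _ _ _).le
      _ = _ := by
          rw [Finset.sum_product]
          refine Finset.sum_congr rfl fun p _ => ?_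
          rw [Finset.mul_sum]
  have step3 : ∑ σ ∈ Finset.univ.filter (TopAt s m), mallowsWeight n β σ *
          ∑ x : Fin n, gap β m x (del m σ x)
      ≤ 9 / (1 - r) * ∑ σ ∈ Finset.univ.filter (TopAt s m), mallowsWeight n β σ := by
    have hm := height_moment hβ (m + 1) (TopAt s m)
      (fun σ i j h hi hj => topAt_uncross (Nat.lt_succ_self _) h hi hj)
    rw [← hr] at hm
    calc _ ≤ ∑ σ ∈ Finset.univ.filter (TopAt s m), (5 / (1 - r) * mallowsWeight n β σ +
            (1 - r) * (((upArcs (m + 1) σ).card : ℝ) ^ 2 * mallowsWeight n β σ)) := by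
          refine Finset.sum_le_sum fun σ hσ => ?_
          have hg := sum_gap_del_le hβ hsm (Finset.mem_filter.1 hσ).2
          rw [← hr] at hg
          set c : ℝ := ((upArcs (m + 1) σ).card : ℝ)
          -- arithmetic-geometric mean, balanced for heights of order `1 / (1 - r)`
          have hc : 2 * c ≤ (1 - r) * c ^ 2 + 1 / (1 - r) := by
            have : (1 - r) * c ^ 2 + 1 / (1 - r) - 2 * c = ((1 - r) * c - 1) ^ 2 / (1 - r) := by
              field_simp; ring
            have h' : 0 ≤ ((1 - r) * c - 1) ^ 2 / (1 - r) := by positivity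
            linarith
          have h5 : 5 / (1 - r) = 4 / (1 - r) + 1 / (1 - r) := by ring
          calc _ ≤ mallowsWeight n β σ * (5 / (1 - r) + (1 - r) * c ^ 2) :=
                mul_le_mul_of_nonneg_left (by linarith) (mallowsWeight_pos _ _).le
            _ = _ := by ring
      _ = 5 / (1 - r) * ∑ σ ∈ Finset.univ.filter (TopAt s m), mallowsWeight n β σ +
          (1 - r) * ∑ σ ∈ Finset.univ.filter (TopAt s m),
            ((upArcs (m + 1) σ).card : ℝ) ^ 2 * mallowsWeight n β σ := by
          rw [Finset.sum_add_distrib, Finset.mul_sum, Finset.mul_sum]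
      _ ≤ 5 / (1 - r) * ∑ σ ∈ Finset.univ.filter (TopAt s m), mallowsWeight n β σ +
          (1 - r) * (4 * r / (1 - r) ^ 2 *
            ∑ σ ∈ Finset.univ.filter (TopAt s m), mallowsWeight n β σ) := by gcongr
      _ = (5 + 4 * r) / (1 - r) *
            ∑ σ ∈ Finset.univ.filter (TopAt s m), mallowsWeight n β σ := by
          field_simp
      _ ≤ _ := by
          refine mul_le_mul_of_nonneg_right ?_
            (Finset.sum_nonneg fun _ _ => (mallowsWeight_pos _ _).le)
          apply div_le_div_of_nonneg_right _ h1'.le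
          linarith
  calc _ ≤ 2 / (1 - r) * (9 / (1 - r) *
        ∑ σ ∈ Finset.univ.filter (TopAt s m), mallowsWeight n β σ) :=
        step1.trans (mul_le_mul_of_nonneg_left (step2.trans step3) (by positivity))
    _ = _ := by
        field_simp
        ring

/-! ### Windows and the lower bound -/

/-- Arcs of `σ` with both ends in the window `(m, m + L]`. -/
def window (m L : ℕ) (σ : Perm (Fin n)) : Finset (Fin n) :=
  Finset.univ.filter fun u => (m < (u : ℕ) ∧ (u : ℕ) ≤ m + L) ∧ (m < (σ u : ℕ) ∧ (σ u : ℕ) ≤ m + L)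

/-- Points of the window whose arc leaves it belong to crossing arcs at one of its two ends. -/
lemma le_card_window {m L : ℕ} (h : m + L < n) (σ : Perm (Fin n)) :
    L ≤ (window m L σ).card + (upArcs (m + 1) σ).card + (upArcs (m + L + 1) σ).card := by
  have hI : (Finset.univ.filter fun u : Fin n => m < (u : ℕ) ∧ (u : ℕ) ≤ m + L).card = L := by
    have : (Finset.univ.filter fun u : Fin n => m < (u : ℕ) ∧ (u : ℕ) ≤ m + L)
        = Finset.Ioc (⟨m, by omega⟩ : Fin n) ⟨m + L, h⟩ := by
      ext u; simp [Fin.lt_def, Fin.le_def]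
    rw [this, Fin.card_Ioc]; simp
  calc L = (Finset.univ.filter fun u : Fin n => m < (u : ℕ) ∧ (u : ℕ) ≤ m + L).card := hI.symm
    _ ≤ (window m L σ ∪ downArcs (m + 1) σ ∪ upArcs (m + L + 1) σ).card := by
        refine Finset.card_le_card fun u hu => ?_
        simp only [Finset.mem_filter, Finset.mem_univ, true_and] at hu
        simp only [window, upArcs, downArcs, Finset.mem_union, Finset.mem_filter, Finset.mem_univ,
          true_and]
        omega
    _ ≤ _ := by
        refine (Finset.card_union_le _ _).trans ?_
        rw [card_upArcs_eq (m + 1)]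
        have := Finset.card_union_le (window m L σ) (downArcs (m + 1) σ)
        omega

/-- A permutation whose cycle of `s` has top `m` can be modified by moving `m` into an arc of a
window above `m` and merging the rest of the cycle with another such arc. This is injective and
changes the weight by a bounded factor when `L` is of order `1 / β`. -/
lemma window_le {β : ℝ} (hβ : 0 < β) {s m : Fin n} (hsm : s < m) (L : ℕ) :
    ∑ σ ∈ Finset.univ.filter (TopAt s m),
        mallowsWeight n β σ * ((window m L σ).card : ℝ) ^ 2
      ≤ Real.exp (4 * β * L) * ∑ σ : Perm (Fin n), mallowsWeight n β σ := by
  set r := Real.exp (-(2 * β)) with hr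
  have h0 : 0 < r := Real.exp_pos _
  have h1 : r < 1 := by rw [hr, Real.exp_lt_one_iff]; linarith
  have hexp : Real.exp (4 * β * L) * (r ^ L * r ^ L) = 1 := by
    rw [hr, ← Real.exp_nat_mul, ← Real.exp_add, ← Real.exp_add, Real.exp_eq_one_iff]
    ring
  have hgap : ∀ u v : ℕ, (m : ℕ) ≤ u → (m : ℕ) ≤ v → u ≤ m + L → r ^ L ≤ gap β m u v := by
    intro u v hu hv hu'
    rw [gap_high hu hv, ← hr]
    exact pow_le_pow_of_le_one h0.le h1.le (by omega)
  rw [Finset.mul_sum]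
  calc ∑ σ ∈ Finset.univ.filter (TopAt s m), mallowsWeight n β σ * ((window m L σ).card : ℝ) ^ 2
      = ∑ t ∈ (Finset.univ.filter (TopAt s m)).sigma (fun σ => window m L σ ×ˢ window m L σ),
          mallowsWeight n β t.1 := by
        rw [Finset.sum_sigma]
        refine Finset.sum_congr rfl fun σ _ => ?_
        dsimp only
        rw [Finset.sum_const, Finset.card_product, nsmul_eq_mul]
        push_cast; ring
    _ ≤ _ := by
        have facts : ∀ (σ : Perm (Fin n)) (x q : Fin n), TopAt s m σ → x ∈ window m L σ →
            q ∈ window m L σ → Below s m (del m σ * swap x m) ∧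
            (del m σ * swap x m).SameCycle s (σ⁻¹ m) ∧ m ≤ q ∧ m ≤ (del m σ * swap x m) q := by
          intro σ x q hσ hx hq
          simp only [window, Finset.mem_filter, Finset.mem_univ, true_and] at hx hq
          obtain ⟨hB, hC⟩ := below_del hsm hσ
          have hc := sameCycle_congr (σ := del m σ) (ρ := del m σ * swap x m) (s := s)
            (fun z hz => mul_swap_apply_of_ne
              (by rintro rfl; have := hB _ hz; rw [Fin.lt_def] at this; omega) (hB z hz).ne)
          refine ⟨fun z hz => hB z ((hc z).1 hz), (hc _).2 hC, hq.1.1.le, ?_⟩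
          by_cases hqx : q = x
          · rw [hqx, mul_swap_apply_left, del_self]
          · have hqm : q ≠ m := by rintro rfl; omega
            rw [mul_swap_apply_of_ne hqx hqm, del, mul_swap_apply_of_ne _ hqm]
            · exact hq.2.1.le
            · rintro rfl
              simp at hq
        refine sum_le_sum_of_inj
          (fun t => del m t.1 * swap t.2.1 m * swap (t.1⁻¹ m) t.2.2) (fun _ _ => Finset.mem_univ _)
          ?_ ?_ (fun _ _ => mul_nonneg (Real.exp_pos _).le (mallowsWeight_pos _ _).le)
        · rintro ⟨σ, x, q⟩ ht ⟨σ', x', q'⟩ ht' h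
          simp only [Finset.coe_sigma, Set.mem_sigma_iff, Finset.mem_coe, Finset.mem_product,
            Finset.mem_filter, Finset.mem_univ, true_and] at ht ht' h
          obtain ⟨f1, f2, f3, f4⟩ := facts σ x q ht.1 ht.2.1 ht.2.2
          obtain ⟨f1', f2', f3', f4'⟩ := facts σ' x' q' ht'.1 ht'.2.1 ht'.2.2
          obtain ⟨g1, g2, g3⟩ := open_injective f1 f1' f2 f2' f3 f3' f4 f4' h
          have g4 : x = x' := by
            rw [← inv_insert (a := x) (del_self m σ), g1, inv_insert (del_self m σ')]
          have g5 : del m σ = del m σ' := by rw [g4] at g1; exact mul_right_cancel g1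
          have g6 : σ = σ' := by rw [← del_mul_swap m σ, g5, g2, del_mul_swap]
          rw [g6, g4, g3]
        · rintro ⟨σ, x, q⟩ ht
          simp only [Finset.mem_sigma, Finset.mem_product,
            Finset.mem_filter, Finset.mem_univ, true_and] at ht
          obtain ⟨f1, f2, f3, f4⟩ := facts σ x q ht.1 ht.2.1 ht.2.2
          dsimp only
          have e1 := weight_reconnect β (del m σ * swap x m) (i := σ⁻¹ m) (j := q) (k := m)
            (f1 _ f2) (f1 _ (sameCycle_apply_right.2 f2)) f3 f4
          have e2 := weight_insert β (a := x) (del_self m σ)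
          have e3 := weight_insert β (a := σ⁻¹ m) (del_self m σ)
          rw [del_mul_swap] at e3
          obtain ⟨-, hx, hq⟩ := ht
          simp only [window, Finset.mem_filter, Finset.mem_univ, true_and] at hx hq
          have hax : σ⁻¹ m ≠ x := by
            intro h'; have := f1 _ f2; rw [h', Fin.lt_def] at this; omega
          have e4 : (del m σ * swap x m) (σ⁻¹ m) = del m σ (σ⁻¹ m) :=
            mul_swap_apply_of_ne hax (f1 _ f2).ne
          have e5 : del m σ x = σ x :=
            mul_swap_apply_of_ne hax.symm (by rintro rfl; omega)
          rw [e4] at e1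
          have e6 : mallowsWeight n β (del m σ * swap x m * swap (σ⁻¹ m) q) =
              mallowsWeight n β σ *
                (gap β m x (σ x) * gap β m q ((del m σ * swap x m) q)) := by
            rw [e1, e2, e3, e5]; ring
          have e7 : r ^ L * r ^ L ≤ gap β m x (σ x) * gap β m q ((del m σ * swap x m) q) :=
            mul_le_mul (hgap _ _ hx.1.1.le hx.2.1.le hx.1.2) (hgap _ _ f3 f4 hq.1.2)
              (by positivity) (gap_pos _ _ _ _).le
          calc mallowsWeight n β σ
              = Real.exp (4 * β * L) * (mallowsWeight n β σ * (r ^ L * r ^ L)) := by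
                rw [mul_left_comm, hexp, mul_one]
            _ ≤ _ := by
                rw [e6]
                exact mul_le_mul_of_nonneg_left
                  (mul_le_mul_of_nonneg_left e7 (mallowsWeight_pos _ _).le) (Real.exp_pos _).le

/-- A level `m` is the top of the cycle of `s` with probability `O(L⁻² e^{4βL})`. The hypothesis on `L`
makes the crossing numbers at both ends of the window small compared with `L`, so that most arcs
starting in the window stay in it. -/
lemma topAt_le {β : ℝ} (hβ : 0 < β) {s m : Fin n} (hsm : s < m) {L : ℕ} (hL : (m : ℕ) + L < n)
    (hLR : 64 * (4 * Real.exp (-(2 * β)) / (1 - Real.exp (-(2 * β))) ^ 2) ≤ (L : ℝ) ^ 2) :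
    (L : ℝ) ^ 2 * ∑ σ ∈ Finset.univ.filter (TopAt s m), mallowsWeight n β σ
      ≤ 8 * Real.exp (4 * β * L) * ∑ σ : Perm (Fin n), mallowsWeight n β σ := by
  have hw := window_le hβ hsm L
  have m1 := height_moment hβ (m + 1) (TopAt s m)
      (fun σ i j h hi hj => topAt_uncross (Nat.lt_succ_self _) h hi hj)
  have m2 := height_moment hβ (m + L + 1) (TopAt s m)
      (fun σ i j h hi hj => topAt_uncross (by omega) h hi hj)
  set R := 4 * Real.exp (-(2 * β)) / (1 - Real.exp (-(2 * β))) ^ 2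
  set W := ∑ σ ∈ Finset.univ.filter (TopAt s m), mallowsWeight n β σ
  have hW : 0 ≤ W := Finset.sum_nonneg fun _ _ => (mallowsWeight_pos _ _).le
  have key : (L : ℝ) ^ 2 / 4 * W
      - 4 * (∑ σ ∈ Finset.univ.filter (TopAt s m),
            ((upArcs (m + 1) σ).card : ℝ) ^ 2 * mallowsWeight n β σ
        + ∑ σ ∈ Finset.univ.filter (TopAt s m),
            ((upArcs (m + L + 1) σ).card : ℝ) ^ 2 * mallowsWeight n β σ)
      ≤ ∑ σ ∈ Finset.univ.filter (TopAt s m),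
        mallowsWeight n β σ * ((window m L σ).card : ℝ) ^ 2 := by
    rw [← Finset.sum_add_distrib, Finset.mul_sum, Finset.mul_sum, ← Finset.sum_sub_distrib]
    refine Finset.sum_le_sum fun σ _ => ?_
    have hc : (L : ℝ) ≤ (window m L σ).card + (upArcs (m + 1) σ).card
        + (upArcs (m + L + 1) σ).card := by exact_mod_cast le_card_window hL σ
    set N : ℝ := ((window m L σ).card : ℝ)
    set c₁ : ℝ := ((upArcs (m + 1) σ).card : ℝ)
    set c₂ : ℝ := ((upArcs (m + L + 1) σ).card : ℝ)
    have hN : 0 ≤ N := Nat.cast_nonneg _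
    have hL0 : (0 : ℝ) ≤ L := Nat.cast_nonneg _
    have hp : (L : ℝ) ^ 2 / 4 - 4 * (c₁ ^ 2 + c₂ ^ 2) ≤ N ^ 2 := by
      by_cases h : c₁ + c₂ ≤ L / 2
      · have : (L : ℝ) / 2 ≤ N := by linarith
        nlinarith [sq_nonneg c₁, sq_nonneg c₂]
      · nlinarith [sq_nonneg (c₁ - c₂), sq_nonneg N]
    nlinarith [mallowsWeight_pos β σ]
  have hRW : 64 * R * W ≤ (L : ℝ) ^ 2 * W := mul_le_mul_of_nonneg_right hLR hW
  linarith

lemma sameCycle_mul_swap {σ : Perm (Fin n)} {s t : Fin n} (h : ¬ σ.SameCycle s t) :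
    (σ * swap s t).SameCycle s t := by
  by_contra hnot
  have := sameCycle_induct (σ := σ) (s := σ t) (x := t)
    (fun z => σ.SameCycle t z ∧ (σ * swap s t).SameCycle s z)
    ⟨sameCycle_apply_right.2 (SameCycle.refl _ _), by
      have h1 : (σ * swap s t) s = σ t := mul_swap_apply_left
      rw [← h1]; exact sameCycle_apply_right.2 (SameCycle.refl _ _)⟩
    (fun z ⟨hz, hz'⟩ => by
      refine ⟨sameCycle_apply_right.2 hz, ?_⟩
      have hzs : z ≠ s := by rintro rfl; exact h hz.symm
      have hzt : z ≠ t := by rintro rfl; exact hnot hz'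
      have h1 : (σ * swap s t) z = σ z := mul_swap_apply_of_ne hzs hzt
      rw [← h1]; exact sameCycle_apply_right.2 hz')
    (sameCycle_apply_left.2 (SameCycle.refl _ _))
  exact hnot this.2

/-- Multiplication by the transposition of `s` and `t` merges their cycles if they are distinct, so
`s` and `t` share a cycle with probability at least `e^{-2β|s-t|} / 2`. -/
lemma sameCycle_weight {β : ℝ} (hβ : 0 < β) (s t : Fin n) :
    Real.exp (-(2 * β * |((s : ℕ) : ℝ) - ((t : ℕ) : ℝ)|)) / 2 *
        ∑ σ : Perm (Fin n), mallowsWeight n β σ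
      ≤ ∑ σ ∈ Finset.univ.filter (fun σ : Perm (Fin n) => σ.SameCycle s t),
          mallowsWeight n β σ := by
  set d := |((s : ℕ) : ℝ) - ((t : ℕ) : ℝ)| with hd
  have hd0 : 0 ≤ d := abs_nonneg _
  set S := ∑ σ ∈ Finset.univ.filter (fun σ : Perm (Fin n) => σ.SameCycle s t),
          mallowsWeight n β σ with hS
  have hS0 : 0 ≤ S := Finset.sum_nonneg fun _ _ => (mallowsWeight_pos _ _).le
  have h1 : ∑ σ ∈ Finset.univ.filter (fun σ : Perm (Fin n) => ¬ σ.SameCycle s t),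
      mallowsWeight n β σ ≤ Real.exp (2 * β * d) * S := by
    rw [hS, Finset.mul_sum]
    refine sum_le_sum_of_inj (fun σ => σ * swap s t) ?_ (fun σ _ σ' _ h => mul_right_cancel h) ?_
      (fun _ _ => mul_nonneg (Real.exp_pos _).le (mallowsWeight_pos _ _).le)
    · intro σ hσ
      simp only [Finset.mem_filter, Finset.mem_univ, true_and] at hσ ⊢
      exact sameCycle_mul_swap hσ
    · intro σ hσ
      simp only [Finset.mem_filter, Finset.mem_univ, true_and] at hσ
      have hst : s ≠ t := by rintro rfl; exact hσ (SameCycle.refl _ _)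
      unfold mallowsWeight
      rw [cost_mul_swap σ hst, ← Real.exp_add, Real.exp_le_exp]
      have a1 := abs_sub_le ((σ t : ℕ) : ℝ) ((t : ℕ) : ℝ) ((s : ℕ) : ℝ)
      have a2 := abs_sub_le ((σ s : ℕ) : ℝ) ((s : ℕ) : ℝ) ((t : ℕ) : ℝ)
      rw [abs_sub_comm ((t : ℕ) : ℝ) ((s : ℕ) : ℝ)] at a1
      rw [← hd] at a1 a2
      nlinarith
  have h2 := Finset.sum_filter_add_sum_filter_not Finset.univ
    (fun σ : Perm (Fin n) => σ.SameCycle s t) (mallowsWeight n β)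
  have h3 : 1 ≤ Real.exp (2 * β * d) := Real.one_le_exp (by positivity)
  rw [← h2, ← hS, Real.exp_neg]
  have h4 : S ≤ Real.exp (2 * β * d) * S := le_mul_of_one_le_left hS0 h3
  calc _ ≤ (Real.exp (2 * β * d))⁻¹ / 2 * (2 * (Real.exp (2 * β * d) * S)) := by
        apply mul_le_mul_of_nonneg_left (by linarith) (by positivity)
    _ = S := by
        have := Real.exp_ne_zero (2 * β * d)
        field_simp

/-! ### Expectations -/

/-- The maximum of the cycle of `s`. -/
noncomputable def top (σ : Perm (Fin n)) (s : Fin n) : Fin n :=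
  (cycleFinset n σ s).max' (cycleFinset_nonempty n σ s)

lemma topAt_iff {σ : Perm (Fin n)} {s m : Fin n} : TopAt s m σ ↔ top σ s = m := by
  rw [top, Finset.max'_eq_iff]
  simp only [mem_cycleFinset]
  rfl

lemma topAt_top (σ : Perm (Fin n)) (s : Fin n) : TopAt s (top σ s) σ := topAt_iff.2 rfl

lemma reaches_iff {σ : Perm (Fin n)} {s m : Fin n} : Reaches s m σ ↔ m ≤ top σ s := by
  constructor
  · rintro ⟨x, hx, hmx⟩; exact hmx.trans ((topAt_top σ s).2 x hx)
  · intro h; exact ⟨_, (topAt_top σ s).1, h⟩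

lemma self_le_top (σ : Perm (Fin n)) (s : Fin n) : s ≤ top σ s :=
  (topAt_top σ s).2 s (SameCycle.refl _ _)

/-- The unnormalized expectation of `max C_s - s`. -/
noncomputable def topSum (n : ℕ) (β : ℝ) (s : Fin n) : ℝ :=
  ∑ σ : Perm (Fin n), (((top σ s : ℕ) : ℝ) - ((s : ℕ) : ℝ)) * mallowsWeight n β σ

/-- The partition function. -/
noncomputable def part (n : ℕ) (β : ℝ) : ℝ := ∑ σ : Perm (Fin n), mallowsWeight n β σ

lemma part_pos (n : ℕ) (β : ℝ) : 0 < part n β :=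
  Finset.sum_pos (fun _ _ => mallowsWeight_pos _ _) Finset.univ_nonempty

lemma mallowsE_eq (β : ℝ) (f : Perm (Fin n) → ℝ) :
    mallowsE n β f = (∑ σ, f σ * mallowsWeight n β σ) / part n β := by
  rw [mallowsE, Finset.sum_div]
  refine Finset.sum_congr rfl fun σ _ => ?_
  rw [mallowsProb, part, mul_div_assoc]

/-- Conjugation by the reversal of `[n]`. -/
def flip (σ : Perm (Fin n)) : Perm (Fin n) := Fin.revPerm * σ * Fin.revPerm⁻¹

lemma flip_apply (σ : Perm (Fin n)) (i : Fin n) : flip σ i = Fin.rev (σ (Fin.rev i)) := rfl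

lemma flip_flip (σ : Perm (Fin n)) : flip (flip σ) = σ := by
  ext i; simp [flip_apply]

lemma rev_cast (i : Fin n) : ((Fin.rev i : ℕ) : ℝ) = (n : ℝ) - 1 - ((i : ℕ) : ℝ) := by
  rw [Fin.val_rev, Nat.cast_sub i.2]; push_cast; ring

lemma mallowsWeight_flip (β : ℝ) (σ : Perm (Fin n)) :
    mallowsWeight n β (flip σ) = mallowsWeight n β σ := by
  unfold mallowsWeight
  congr 2
  refine Fintype.sum_equiv Fin.revPerm _ _ fun i => ?_
  rw [flip_apply, rev_cast, Fin.revPerm_apply, rev_cast, ← abs_neg]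
  congr 1; ring

lemma top_flip (σ : Perm (Fin n)) (s : Fin n) :
    top (flip σ) (Fin.rev s)
      = Fin.rev ((cycleFinset n σ s).min' (cycleFinset_nonempty n σ s)) := by
  set b := (cycleFinset n σ s).min' (cycleFinset_nonempty n σ s) with hb
  have hsc : ∀ x, (flip σ).SameCycle (Fin.rev s) x ↔ σ.SameCycle s (Fin.rev x) := by
    intro x
    rw [flip, sameCycle_conj]
    have : ∀ y : Fin n, (Fin.revPerm⁻¹ : Perm (Fin n)) y = Fin.rev y := fun y => rfl
    rw [this, this, Fin.rev_rev]
  rw [← topAt_iff]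
  constructor
  · rw [hsc, Fin.rev_rev, ← mem_cycleFinset]; exact Finset.min'_mem _ _
  · intro x hx
    rw [hsc, ← mem_cycleFinset] at hx
    rw [Fin.le_rev_iff]
    exact Finset.min'_le _ _ hx

lemma mallowsE_cycleDiam (β : ℝ) (s : Fin n) :
    mallowsE n β (fun σ => cycleDiam n σ s)
      = (topSum n β s + topSum n β (Fin.rev s)) / part n β := by
  rw [mallowsE_eq]
  congr 1
  have h : topSum n β (Fin.rev s) =
      ∑ σ : Perm (Fin n), (((s : ℕ) : ℝ) -
        (((cycleFinset n σ s).min' (cycleFinset_nonempty n σ s) : ℕ) : ℝ))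
          * mallowsWeight n β σ := by
    rw [topSum]
    refine Fintype.sum_equiv ⟨flip, flip, flip_flip, flip_flip⟩ _ _ fun σ => ?_
    simp only [Equiv.coe_fn_mk]
    rw [mallowsWeight_flip, ← flip_flip σ, top_flip, flip_flip, rev_cast, rev_cast]
    ring
  rw [h, topSum, ← Finset.sum_add_distrib]
  refine Finset.sum_congr rfl fun σ _ => ?_
  rw [cycleDiam, top]
  ring

lemma topSum_nonneg (β : ℝ) (s : Fin n) : 0 ≤ topSum n β s := by
  refine Finset.sum_nonneg fun σ _ => mul_nonneg ?_ (mallowsWeight_pos _ _).le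
  have h := self_le_top σ s
  rw [Fin.le_def] at h
  have : ((s : ℕ) : ℝ) ≤ ((top σ s : ℕ) : ℝ) := by exact_mod_cast h
  linarith

lemma topSum_eq (β : ℝ) (s : Fin n) :
    topSum n β s = ∑ m ∈ Finset.Ioi s,
      ∑ σ ∈ Finset.univ.filter (Reaches s m), mallowsWeight n β σ := by
  simp_rw [Finset.sum_filter]
  rw [Finset.sum_comm, topSum]
  refine Finset.sum_congr rfl fun σ _ => ?_
  rw [← Finset.sum_filter, Finset.sum_const, nsmul_eq_mul]
  congr 1
  have : (Finset.Ioi s).filter (fun m => Reaches s m σ) = Finset.Ioc s (top σ s) := by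
    ext m; simp [reaches_iff]
  rw [this, Fin.card_Ioc, Nat.cast_sub (self_le_top σ s)]

/-- Each `σ` has exactly one top, so summing `reaches_le` over the levels `m > s` bounds `E[max C_s - s]`
by a multiple of `P(max C_s > s)`; the latter forces an arc to cross the gap above `s`. -/
lemma topSum_le {β : ℝ} (hβ : 0 < β) (s : Fin n) :
    topSum n β s ≤ 18 / (1 - Real.exp (-(2 * β))) ^ 2
      * min 1 (4 * Real.exp (-(2 * β)) / (1 - Real.exp (-(2 * β))) ^ 2) * part n β := by
  have hr1 : Real.exp (-(2 * β)) < 1 := by rw [Real.exp_lt_one_iff]; linarith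
  have h1' : 0 < 1 - Real.exp (-(2 * β)) := by linarith
  have e1 : ∑ m ∈ Finset.Ioi s, ∑ σ ∈ Finset.univ.filter (TopAt s m), mallowsWeight n β σ
      = ∑ σ ∈ Finset.univ.filter (fun σ : Perm (Fin n) => s < top σ s), mallowsWeight n β σ := by
    simp_rw [Finset.sum_filter]
    rw [Finset.sum_comm]
    refine Finset.sum_congr rfl fun σ _ => ?_
    simp_rw [topAt_iff]
    rw [Finset.sum_ite_eq]
    simp
  have e2 : ∑ σ ∈ Finset.univ.filter (fun σ : Perm (Fin n) => s < top σ s), mallowsWeight n β σ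
      ≤ part n β :=
    Finset.sum_le_sum_of_subset_of_nonneg (Finset.filter_subset _ _)
      (fun _ _ _ => (mallowsWeight_pos _ _).le)
  have e3 : ∑ σ ∈ Finset.univ.filter (fun σ : Perm (Fin n) => s < top σ s), mallowsWeight n β σ
      ≤ 4 * Real.exp (-(2 * β)) / (1 - Real.exp (-(2 * β))) ^ 2 * part n β := by
    have hm := height_moment (n := n) hβ (s + 1) (fun _ => True) (fun _ _ _ _ _ _ => trivial)
    simp only [Finset.filter_true] at hm
    refine le_trans ?_ hm
    rw [Finset.sum_filter]
    refine Finset.sum_le_sum fun σ _ => ?_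
    split_ifs with h
    · refine le_mul_of_one_le_left (mallowsWeight_pos _ _).le ?_
      have hne : (upArcs (s + 1) σ).card ≠ 0 := by
        rw [Finset.card_ne_zero]
        by_contra hemp
        rw [Finset.not_nonempty_iff_eq_empty] at hemp
        have hle : top σ s ≤ s := by
          refine sameCycle_induct (σ := σ) (fun z => z ≤ s) le_rfl (fun z hz => ?_)
            (topAt_top σ s).1
          by_contra hlt
          have : z ∈ upArcs (s + 1) σ := by
            simp only [upArcs, Finset.mem_filter, Finset.mem_univ, true_and]
            rw [Fin.le_def] at hz hlt
            omega
          rw [hemp] at this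
          simp at this
        exact absurd h (not_lt.2 hle)
      have : (1 : ℝ) ≤ ((upArcs (s + 1) σ).card : ℝ) := by
        exact_mod_cast Nat.one_le_iff_ne_zero.2 hne
      exact one_le_pow₀ this
    · exact mul_nonneg (sq_nonneg _) (mallowsWeight_pos _ _).le
  calc topSum n β s ≤ ∑ m ∈ Finset.Ioi s, 18 / (1 - Real.exp (-(2 * β))) ^ 2 *
        ∑ σ ∈ Finset.univ.filter (TopAt s m), mallowsWeight n β σ := by
        rw [topSum_eq]
        exact Finset.sum_le_sum fun m hm => reaches_le hβ (Finset.mem_Ioi.1 hm)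
    _ = 18 / (1 - Real.exp (-(2 * β))) ^ 2 *
        ∑ σ ∈ Finset.univ.filter (fun σ : Perm (Fin n) => s < top σ s), mallowsWeight n β σ := by
        rw [← Finset.mul_sum, e1]
    _ ≤ 18 / (1 - Real.exp (-(2 * β))) ^ 2 *
        (min 1 (4 * Real.exp (-(2 * β)) / (1 - Real.exp (-(2 * β))) ^ 2) * part n β) := by
        refine mul_le_mul_of_nonneg_left ?_ (by positivity)
        rw [min_mul_of_nonneg _ _ (part_pos n β).le, one_mul]
        exact le_min e2 e3
    _ = _ := by ring

lemma one_sub_exp_ge {β : ℝ} (hβ : 0 < β) :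
    2 * β / (1 + 2 * β) ≤ 1 - Real.exp (-(2 * β)) := by
  have h := Real.add_one_le_exp (2 * β)
  rw [Real.exp_neg]
  have h2 : (Real.exp (2 * β))⁻¹ ≤ (1 + 2 * β)⁻¹ := by
    apply inv_anti₀ (by positivity); linarith
  have h3 : 2 * β / (1 + 2 * β) = 1 - (1 + 2 * β)⁻¹ := by
    field_simp; ring
  linarith

lemma topSum_le' {β : ℝ} (hβ : 0 < β) (s : Fin n) :
    topSum n β s ≤ 400 * (Real.exp (-(2 * β)) * max (β ^ 2)⁻¹ 1) * part n β := by
  refine (topSum_le hβ s).trans (mul_le_mul_of_nonneg_right ?_ (part_pos n β).le)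
  have hge := one_sub_exp_ge hβ
  set r := Real.exp (-(2 * β)) with hr
  have h0 : 0 < r := Real.exp_pos _
  rcases le_total β 1 with h | h
  · have h1 : 2 * β / 3 ≤ 1 - r := by
      refine le_trans ?_ hge
      apply div_le_div_of_nonneg_left (by positivity) (by positivity) (by linarith)
    have h2 : (1 : ℝ) / 9 ≤ r := by
      have e1 : Real.exp (-2) ≤ r := by rw [hr]; apply Real.exp_le_exp.2; linarith
      have e2 : (1 : ℝ) / 9 ≤ Real.exp (-2) := by
        rw [Real.exp_neg, one_div]
        apply inv_anti₀ (Real.exp_pos _)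
        have := Real.exp_one_lt_d9
        have e3 : Real.exp 2 = Real.exp 1 * Real.exp 1 := by rw [← Real.exp_add]; norm_num
        rw [e3]
        nlinarith [Real.exp_pos 1]
      linarith
    have h3 : 18 / (1 - r) ^ 2 ≤ 18 / (2 * β / 3) ^ 2 := by gcongr
    have h4 : (18 : ℝ) / (2 * β / 3) ^ 2 = 81 / 2 * (β ^ 2)⁻¹ := by
      field_simp; norm_num
    calc _ ≤ 18 / (1 - r) ^ 2 * 1 := by
          apply mul_le_mul_of_nonneg_left (min_le_left _ _) (by positivity)
      _ ≤ 81 / 2 * (β ^ 2)⁻¹ := by rw [mul_one, ← h4]; exact h3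
      _ ≤ 400 * (r * (β ^ 2)⁻¹) := by
          have : 0 < (β ^ 2)⁻¹ := by positivity
          nlinarith
      _ ≤ _ := by gcongr; exact le_max_left _ _
  · have h1 : 2 / 3 ≤ 1 - r := by
      refine le_trans ?_ hge
      rw [div_le_div_iff₀ (by norm_num) (by positivity)]; linarith
    have h3 : 18 / (1 - r) ^ 2 ≤ 18 / (2 / 3) ^ 2 := by gcongr
    have h4 : 4 * r / (1 - r) ^ 2 ≤ 4 * r / (2 / 3) ^ 2 := by gcongr
    calc _ ≤ 18 / (1 - r) ^ 2 * (4 * r / (1 - r) ^ 2) := by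
          apply mul_le_mul_of_nonneg_left (min_le_right _ _) (by positivity)
      _ ≤ 18 / (2 / 3) ^ 2 * (4 * r / (2 / 3) ^ 2) := by
          apply mul_le_mul h3 h4 (by positivity) (by positivity)
      _ = 729 / 2 * r := by ring
      _ ≤ 400 * (r * 1) := by linarith
      _ ≤ _ := by gcongr; exact le_max_right _ _

lemma cycleDiam_le (σ : Perm (Fin n)) (s : Fin n) : cycleDiam n σ s ≤ (n : ℝ) - 1 := by
  rw [cycleDiam]
  have h1 := ((cycleFinset n σ s).max' (cycleFinset_nonempty n σ s)).2
  have h2 : ((((cycleFinset n σ s).max' (cycleFinset_nonempty n σ s) : ℕ) : ℝ)) + 1 ≤ n := by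
    exact_mod_cast h1
  have h3 : (0 : ℝ) ≤ (((cycleFinset n σ s).min' (cycleFinset_nonempty n σ s) : ℕ) : ℝ) :=
    Nat.cast_nonneg _
  linarith

lemma cycleDiam_nonneg (σ : Perm (Fin n)) (s : Fin n) : 0 ≤ cycleDiam n σ s := by
  rw [cycleDiam, sub_nonneg]
  exact_mod_cast (Finset.min'_le _ _ (Finset.max'_mem _ (cycleFinset_nonempty n σ s)))

lemma le_cycleDiam {σ : Perm (Fin n)} {s t : Fin n} (h : σ.SameCycle s t) :
    |((s : ℕ) : ℝ) - ((t : ℕ) : ℝ)| ≤ cycleDiam n σ s := by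
  have hs : s ∈ cycleFinset n σ s := mem_cycleFinset.2 (SameCycle.refl _ _)
  have ht : t ∈ cycleFinset n σ s := mem_cycleFinset.2 h
  have a1 : ((s : ℕ) : ℝ) ≤ _ := Nat.cast_le.2 (Fin.le_def.1 (Finset.le_max' _ _ hs))
  have a2 : ((t : ℕ) : ℝ) ≤ _ := Nat.cast_le.2 (Fin.le_def.1 (Finset.le_max' _ _ ht))
  have a3 : _ ≤ ((s : ℕ) : ℝ) := Nat.cast_le.2 (Fin.le_def.1 (Finset.min'_le _ _ hs))
  have a4 : _ ≤ ((t : ℕ) : ℝ) := Nat.cast_le.2 (Fin.le_def.1 (Finset.min'_le _ _ ht))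
  rw [cycleDiam, abs_le]
  constructor <;> linarith

lemma mallowsE_le_card (β : ℝ) (s : Fin n) :
    mallowsE n β (fun σ => cycleDiam n σ s) ≤ (n : ℝ) - 1 := by
  rw [mallowsE_eq, div_le_iff₀ (part_pos n β), part, Finset.mul_sum]
  exact Finset.sum_le_sum fun σ _ =>
    mul_le_mul_of_nonneg_right (cycleDiam_le σ s) (mallowsWeight_pos _ _).le

lemma mallowsE_nonneg (β : ℝ) (s : Fin n) : 0 ≤ mallowsE n β (fun σ => cycleDiam n σ s) := by
  rw [mallowsE_eq]
  exact div_nonneg (Finset.sum_nonneg fun σ _ =>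
    mul_nonneg (cycleDiam_nonneg σ s) (mallowsWeight_pos _ _).le) (part_pos n β).le

/-- A single point `t` already gives a lower bound, sharp for `|s - t|` of order `1 / β`. -/
lemma mallowsE_ge_point {β : ℝ} (hβ : 0 < β) (s t : Fin n) :
    |((s : ℕ) : ℝ) - ((t : ℕ) : ℝ)| *
        (Real.exp (-(2 * β * |((s : ℕ) : ℝ) - ((t : ℕ) : ℝ)|)) / 2)
      ≤ mallowsE n β (fun σ => cycleDiam n σ s) := by
  have h := sameCycle_weight hβ s t
  set d := |((s : ℕ) : ℝ) - ((t : ℕ) : ℝ)|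
  have hd0 : 0 ≤ d := abs_nonneg _
  rw [mallowsE_eq, le_div_iff₀ (part_pos n β)]
  calc _ = d * (Real.exp (-(2 * β * d)) / 2 * part n β) := by ring
    _ ≤ d * ∑ σ ∈ Finset.univ.filter (fun σ : Perm (Fin n) => σ.SameCycle s t),
          mallowsWeight n β σ := mul_le_mul_of_nonneg_left h hd0
    _ = ∑ σ ∈ Finset.univ.filter (fun σ : Perm (Fin n) => σ.SameCycle s t),
          d * mallowsWeight n β σ := Finset.mul_sum _ _ _
    _ ≤ ∑ σ ∈ Finset.univ.filter (fun σ : Perm (Fin n) => σ.SameCycle s t),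
          cycleDiam n σ s * mallowsWeight n β σ := by
        refine Finset.sum_le_sum fun σ hσ => ?_
        exact mul_le_mul_of_nonneg_right (le_cycleDiam (Finset.mem_filter.1 hσ).2)
          (mallowsWeight_pos _ _).le
    _ ≤ _ := Finset.sum_le_sum_of_subset_of_nonneg (Finset.filter_subset _ _)
        (fun σ _ _ => mul_nonneg (cycleDiam_nonneg σ s) (mallowsWeight_pos _ _).le)

/-- If each level `m ∈ (s, s + T]` is the top of the cycle of `s` with probability at most `p`, where
`T p` is small, then that cycle reaches beyond `s + T` with probability bounded below. The reason is
that `s` and `s + 1` share a cycle with probability at least `e^{-2} / 2`. -/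
lemma topSum_ge {β : ℝ} (hβ : 0 < β) (hβ1 : β ≤ 1) {s : Fin n} {T : ℕ} {p : ℝ} (hp : 0 ≤ p)
    (hT : (s : ℕ) + 1 < n)
    (hp' : ∀ m : Fin n, s < m → (m : ℕ) ≤ s + T →
      ∑ σ ∈ Finset.univ.filter (TopAt s m), mallowsWeight n β σ ≤ p * part n β)
    (hTp : T * p ≤ Real.exp (-2) / 4) :
    ((T : ℝ) + 1) * (Real.exp (-2) / 4) * part n β ≤ topSum n β s := by
  set t : Fin n := ⟨(s : ℕ) + 1, hT⟩ with ht
  set Z := part n β with hZ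
  have hZ0 : 0 < Z := part_pos n β
  set S := ∑ σ ∈ Finset.univ.filter (fun σ : Perm (Fin n) => σ.SameCycle s t),
          mallowsWeight n β σ with hS
  set I : Finset (Fin n) := Finset.univ.filter fun m => s < m ∧ (m : ℕ) ≤ s + T with hI
  set F := ∑ σ ∈ Finset.univ.filter (fun σ : Perm (Fin n) => (s : ℕ) + T < top σ s),
          mallowsWeight n β σ with hF
  have e1 : Real.exp (-2) / 2 * Z ≤ S := by
    refine le_trans ?_ (sameCycle_weight hβ s t)
    refine mul_le_mul_of_nonneg_right ?_ hZ0.le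
    have : |((s : ℕ) : ℝ) - ((t : ℕ) : ℝ)| = 1 := by
      rw [ht]; push_cast; rw [show ((s : ℕ) : ℝ) - ((s : ℕ) + 1) = -1 by ring]; simp
    rw [this]
    gcongr
    linarith
  have e2 : S ≤ ∑ m ∈ I, ∑ σ ∈ Finset.univ.filter (TopAt s m), mallowsWeight n β σ + F := by
    rw [hS, hF]
    simp_rw [Finset.sum_filter]
    rw [Finset.sum_comm, ← Finset.sum_add_distrib]
    refine Finset.sum_le_sum fun σ _ => ?_
    have hw := (mallowsWeight_pos β σ).le
    have hnn : 0 ≤ ∑ m ∈ I, if TopAt s m σ then mallowsWeight n β σ else 0 :=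
      Finset.sum_nonneg fun m _ => by split_ifs <;> simp [hw]
    by_cases hst : σ.SameCycle s t
    · rw [if_pos hst]
      by_cases hlt : (s : ℕ) + T < top σ s
      · rw [if_pos hlt]; linarith
      · rw [if_neg hlt, add_zero]
        have hmem : top σ s ∈ I := by
          have := (topAt_top σ s).2 t hst
          rw [Fin.le_def] at this
          simp only [hI, Finset.mem_filter, Finset.mem_univ, true_and, Fin.lt_def]
          simp only [ht] at this
          omega
        refine le_trans ?_ (Finset.single_le_sum (f := fun m =>
          if TopAt s m σ then mallowsWeight n β σ else 0)
          (fun m _ => by split_ifs <;> simp [hw]) hmem)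
        rw [if_pos (topAt_top σ s)]
    · rw [if_neg hst]
      split_ifs <;> linarith
  have hIc : (I.card : ℝ) ≤ T := by
    have : I.card ≤ (Finset.Ioc (s : ℕ) (s + T)).card := by
      refine Finset.card_le_card_of_injOn (fun m => (m : ℕ)) ?_ (fun _ _ _ _ h => Fin.ext h)
      intro m hm
      simp only [hI, Finset.coe_filter, Finset.mem_univ, true_and, Set.mem_ofPred_eq,
        Fin.lt_def] at hm
      simpa using hm
    rw [Nat.card_Ioc] at this
    exact_mod_cast (by omega : I.card ≤ T)
  have e3 : ∑ m ∈ I, ∑ σ ∈ Finset.univ.filter (TopAt s m), mallowsWeight n β σ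
      ≤ Real.exp (-2) / 4 * Z := by
    calc _ ≤ ∑ m ∈ I, p * Z := by
          refine Finset.sum_le_sum fun m hm => ?_
          simp only [hI, Finset.mem_filter, Finset.mem_univ, true_and] at hm
          exact hp' m hm.1 hm.2
      _ = I.card * p * Z := by rw [Finset.sum_const, nsmul_eq_mul]; ring
      _ ≤ T * p * Z := by gcongr
      _ ≤ _ := by gcongr
  have e4 : Real.exp (-2) / 4 * Z ≤ F := by linarith
  calc _ = ((T : ℝ) + 1) * (Real.exp (-2) / 4 * Z) := by ring
    _ ≤ ((T : ℝ) + 1) * F := by gcongr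
    _ = ∑ σ ∈ Finset.univ.filter (fun σ : Perm (Fin n) => (s : ℕ) + T < top σ s),
          ((T : ℝ) + 1) * mallowsWeight n β σ := by rw [hF, Finset.mul_sum]
    _ ≤ ∑ σ ∈ Finset.univ.filter (fun σ : Perm (Fin n) => (s : ℕ) + T < top σ s),
          (((top σ s : ℕ) : ℝ) - ((s : ℕ) : ℝ)) * mallowsWeight n β σ := by
        refine Finset.sum_le_sum fun σ hσ => ?_
        refine mul_le_mul_of_nonneg_right ?_ (mallowsWeight_pos _ _).le
        have h1 : (s : ℕ) + T + 1 ≤ top σ s := (Finset.mem_filter.1 hσ).2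
        have h2 : ((s : ℕ) : ℝ) + T + 1 ≤ ((top σ s : ℕ) : ℝ) := by exact_mod_cast h1
        linarith
    _ ≤ _ := by
        refine Finset.sum_le_sum_of_subset_of_nonneg (Finset.filter_subset _ _) fun σ _ _ => ?_
        refine mul_nonneg ?_ (mallowsWeight_pos _ _).le
        have : ((s : ℕ) : ℝ) ≤ ((top σ s : ℕ) : ℝ) := by
          exact_mod_cast (Fin.le_def.1 (self_le_top σ s))
        linarith

/-- Lower bound for a point in the left half when `n` is large compared with `1 / β`. -/
lemma topSum_ge_left {β : ℝ} (hβ : 0 < β) (hβ1 : β ≤ 1) {s : Fin n} {L : ℕ}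
    (hL : 24 / β ≤ L) (hL' : L ≤ 25 / β) (hn : 4 * L < n) (hs : 2 * (s : ℕ) < n) :
    min (2 * Real.exp (-102) * (β ^ 2)⁻¹) ((n : ℝ) / 4) * (Real.exp (-2) / 4) * part n β
      ≤ topSum n β s := by
  -- with windows of length `L`, `topAt_le` gives the top probability `p = e^{100} β² / 8`, and `T` is
  -- the largest number of levels for which `T p ≤ e^{-2} / 4`, kept below `n / 4` so that windows fit
  set T := ⌊min (2 * Real.exp (-102) * (β ^ 2)⁻¹) ((n : ℝ) / 4)⌋₊ with hT
  have hmin0 : 0 ≤ min (2 * Real.exp (-102) * (β ^ 2)⁻¹) ((n : ℝ) / 4) :=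
    le_min (by positivity) (by positivity)
  have hTle : (T : ℝ) ≤ min (2 * Real.exp (-102) * (β ^ 2)⁻¹) ((n : ℝ) / 4) :=
    Nat.floor_le hmin0
  have hTn : 4 * T ≤ n := by
    have : (T : ℝ) ≤ n / 4 := hTle.trans (min_le_right _ _)
    have : (4 : ℝ) * T ≤ n := by linarith
    exact_mod_cast this
  have hL1 : 0 < L := by
    have : (0 : ℝ) < L := lt_of_lt_of_le (by positivity) hL
    exact_mod_cast this
  have hLβ : 24 ≤ β * L := by rw [div_le_iff₀ hβ] at hL; linarith
  have hLβ' : β * L ≤ 25 := by rw [le_div_iff₀ hβ] at hL'; linarith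
  have hLR : 64 * (4 * Real.exp (-(2 * β)) / (1 - Real.exp (-(2 * β))) ^ 2) ≤ (L : ℝ) ^ 2 := by
    have hge : 2 * β / 3 ≤ 1 - Real.exp (-(2 * β)) := by
      refine le_trans ?_ (one_sub_exp_ge hβ)
      apply div_le_div_of_nonneg_left (by positivity) (by positivity) (by linarith)
    have hle : Real.exp (-(2 * β)) ≤ 1 := by rw [Real.exp_le_one_iff]; linarith
    calc _ ≤ 64 * (4 * 1 / (2 * β / 3) ^ 2) := by gcongr
      _ = (24 / β) ^ 2 := by field_simp; norm_num
      _ ≤ _ := by gcongr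
  refine le_trans ?_ (topSum_ge hβ hβ1 (s := s) (T := T) (p := Real.exp 100 * β ^ 2 / 8)
    (by positivity) (by omega) ?_ ?_)
  · have := (Nat.lt_floor_add_one (min (2 * Real.exp (-102) * (β ^ 2)⁻¹) ((n : ℝ) / 4))).le
    have hZ := (part_pos n β).le
    gcongr
  · intro m hsm hm
    have h1 := topAt_le hβ hsm (L := L) (by omega) hLR
    have hW : 0 ≤ ∑ σ ∈ Finset.univ.filter (TopAt s m), mallowsWeight n β σ :=
      Finset.sum_nonneg fun _ _ => (mallowsWeight_pos _ _).le
    set W := ∑ σ ∈ Finset.univ.filter (TopAt s m), mallowsWeight n β σ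
    have h2 : Real.exp (4 * β * L) ≤ Real.exp 100 := Real.exp_le_exp.2 (by linarith)
    have hZ := (part_pos n β).le
    have h3 : (L : ℝ) ^ 2 * W ≤ 8 * Real.exp 100 * part n β :=
      h1.trans (by unfold part at hZ ⊢; gcongr)
    have h4 : 64 * W ≤ 8 * Real.exp 100 * part n β * β ^ 2 := by
      calc 64 * W ≤ (β * L) ^ 2 * W := by
            apply mul_le_mul_of_nonneg_right _ hW
            nlinarith
        _ = ((L : ℝ) ^ 2 * W) * β ^ 2 := by ring
        _ ≤ _ := by gcongr
    linarith
  · have hT2 : (T : ℝ) ≤ 2 * Real.exp (-102) * (β ^ 2)⁻¹ := hTle.trans (min_le_left _ _)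
    calc (T : ℝ) * (Real.exp 100 * β ^ 2 / 8)
        ≤ (2 * Real.exp (-102) * (β ^ 2)⁻¹) * (Real.exp 100 * β ^ 2 / 8) := by gcongr
      _ = (Real.exp (-102) * Real.exp 100) / 4 := by field_simp; norm_num
      _ = Real.exp (-2) / 4 := by rw [← Real.exp_add]; norm_num
      _ ≤ _ := le_rfl

/-- The lower bound, by the window argument for `β ≤ 1` and `n` large compared with `1 / β`, and by
a single well-chosen transposition otherwise. -/
lemma mallowsE_ge {β : ℝ} (hβ : 0 < β) (hn : 0 < n) (s : Fin n) :
    Real.exp (-200) / 4 * min (Real.exp (-(2 * β)) * max (β ^ 2)⁻¹ 1) ((n : ℝ) - 1)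
      ≤ mallowsE n β (fun σ => cycleDiam n σ s) := by
  have hn1 : (1 : ℝ) ≤ n := by exact_mod_cast hn
  have hmin0 : 0 ≤ min (Real.exp (-(2 * β)) * max (β ^ 2)⁻¹ 1) ((n : ℝ) - 1) :=
    le_min (by positivity) (by linarith)
  have he1 : Real.exp (-200) ≤ 1 := by rw [Real.exp_le_one_iff]; norm_num
  rcases le_or_gt β 1 with hβ1 | hβ1
  · set L := ⌈24 / β⌉₊ with hLdef
    have hL : 24 / β ≤ L := Nat.le_ceil _
    have hL' : (L : ℝ) ≤ 25 / β := by
      have h1 := (Nat.ceil_lt_add_one (by positivity : 0 ≤ 24 / β)).le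
      have h2 : 1 ≤ 1 / β := by rw [le_div_iff₀ hβ]; linarith
      have h3 : 25 / β = 24 / β + 1 / β := by ring
      linarith
    rcases lt_or_ge (4 * L) n with hLn | hLn
    · -- `n` is large: apply the bound on the half of `[n]` that contains `s`
      have hmain : ∀ s : Fin n, 2 * (s : ℕ) < n →
          Real.exp (-200) / 4 * min (Real.exp (-(2 * β)) * max (β ^ 2)⁻¹ 1) ((n : ℝ) - 1)
            * part n β ≤ topSum n β s := by
        intro s hs
        refine le_trans ?_ (topSum_ge_left hβ hβ1 hL hL' hLn hs)
        refine mul_le_mul_of_nonneg_right ?_ (part_pos n β).le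
        have hβ2 : 1 ≤ (β ^ 2)⁻¹ := by
          rw [one_le_inv₀ (by positivity)]; exact pow_le_one₀ hβ.le hβ1
        rw [max_eq_left hβ2]
        have hr : Real.exp (-(2 * β)) ≤ 1 := by rw [Real.exp_le_one_iff]; linarith
        have k1 : min (Real.exp (-(2 * β)) * (β ^ 2)⁻¹) ((n : ℝ) - 1)
            ≤ min ((β ^ 2)⁻¹) (n : ℝ) := by
          apply min_le_min
          · exact mul_le_of_le_one_left (by positivity) hr
          · linarith
        have k2 : Real.exp (-102) * min ((β ^ 2)⁻¹) (n : ℝ)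
            ≤ min (2 * Real.exp (-102) * (β ^ 2)⁻¹) ((n : ℝ) / 4) := by
          have q1 : 0 < Real.exp (-102) := Real.exp_pos _
          have q2 : Real.exp (-102) ≤ 1 / 4 := by
            rw [Real.exp_neg, one_div]
            apply inv_anti₀ (by norm_num)
            have := Real.add_one_le_exp (102 : ℝ)
            linarith
          apply le_min
          · have := mul_le_mul_of_nonneg_left (min_le_left (β ^ 2)⁻¹ (n : ℝ)) q1.le
            have : 0 ≤ Real.exp (-102) * (β ^ 2)⁻¹ := by positivity
            linarith
          · have := mul_le_mul_of_nonneg_left (min_le_right (β ^ 2)⁻¹ (n : ℝ)) q1.le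
            nlinarith
        have k3 : Real.exp (-200) ≤ Real.exp (-102) * Real.exp (-2) := by
          rw [← Real.exp_add]; apply Real.exp_le_exp.2; norm_num
        have k4 : 0 ≤ min ((β ^ 2)⁻¹) (n : ℝ) := le_min (by positivity) (by linarith)
        calc _ ≤ Real.exp (-102) * Real.exp (-2) / 4 * min ((β ^ 2)⁻¹) (n : ℝ) := by gcongr
          _ = (Real.exp (-102) * min ((β ^ 2)⁻¹) (n : ℝ)) * (Real.exp (-2) / 4) := by ring
          _ ≤ _ := by gcongr
      rw [mallowsE_cycleDiam, le_div_iff₀ (part_pos n β)]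
      rcases lt_or_ge (2 * (s : ℕ)) n with hs | hs
      · have := hmain s hs
        linarith [topSum_nonneg β (Fin.rev s)]
      · have := hmain (Fin.rev s) (by rw [Fin.val_rev]; omega)
        linarith [topSum_nonneg β s]
    · -- `n = O(1 / β)`: use the end of `[n]` farther from `s`
      have hnβ : β * ((n : ℝ) - 1) ≤ 100 := by
        have h1 : (n : ℝ) ≤ 4 * L := by exact_mod_cast hLn
        rw [le_div_iff₀ hβ] at hL'
        nlinarith
      obtain ⟨t, ht⟩ : ∃ t : Fin n, ((n : ℝ) - 1) / 2 ≤ |((s : ℕ) : ℝ) - ((t : ℕ) : ℝ)| := by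
        rcases le_total (((n : ℝ) - 1) / 2) ((s : ℕ) : ℝ) with h | h
        · refine ⟨⟨0, hn⟩, ?_⟩
          simpa using h
        · refine ⟨⟨n - 1, by omega⟩, ?_⟩
          rw [abs_sub_comm]
          refine le_trans ?_ (le_abs_self _)
          simp only [Nat.cast_sub (show 1 ≤ n from hn)]
          push_cast
          linarith
      refine le_trans ?_ (mallowsE_ge_point hβ s t)
      have hd : |((s : ℕ) : ℝ) - ((t : ℕ) : ℝ)| ≤ (n : ℝ) - 1 := by
        have h1 : ((s : ℕ) : ℝ) + 1 ≤ n := by exact_mod_cast s.2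
        have h2 : ((t : ℕ) : ℝ) + 1 ≤ n := by exact_mod_cast t.2
        have h3 : (0 : ℝ) ≤ ((s : ℕ) : ℝ) := Nat.cast_nonneg _
        have h4 : (0 : ℝ) ≤ ((t : ℕ) : ℝ) := Nat.cast_nonneg _
        rw [abs_le]; constructor <;> linarith
      set d := |((s : ℕ) : ℝ) - ((t : ℕ) : ℝ)|
      have he : Real.exp (-200) ≤ Real.exp (-(2 * β * d)) := by
        apply Real.exp_le_exp.2
        nlinarith
      calc _ ≤ Real.exp (-200) / 4 * ((n : ℝ) - 1) := by gcongr; exact min_le_right _ _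
        _ = ((n : ℝ) - 1) / 2 * (Real.exp (-200) / 2) := by ring
        _ ≤ _ := by
            have : 0 ≤ ((n : ℝ) - 1) / 2 := by linarith
            gcongr
  · -- `β > 1`: use a neighbour of `s`
    rcases Nat.lt_or_ge 1 n with h | h
    · obtain ⟨t, ht⟩ : ∃ t : Fin n, |((s : ℕ) : ℝ) - ((t : ℕ) : ℝ)| = 1 := by
        rcases Nat.lt_or_ge (s + 1) n with h' | h'
        · refine ⟨⟨s + 1, h'⟩, ?_⟩
          simp
        · have hs1 : 1 ≤ (s : ℕ) := by omega
          refine ⟨⟨s - 1, by omega⟩, ?_⟩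
          simp only [Nat.cast_sub hs1]
          simp
      have hp := mallowsE_ge_point hβ s t
      rw [ht] at hp
      have hβ2 : (β ^ 2)⁻¹ ≤ 1 := inv_le_one_of_one_le₀ (one_le_pow₀ hβ1.le)
      rw [max_eq_right hβ2]
      have h1 := min_le_left (Real.exp (-(2 * β)) * 1) ((n : ℝ) - 1)
      have h2 := Real.exp_pos (-(2 * β))
      rw [mul_one] at hp
      have h3 : Real.exp (-200) / 4 * min (Real.exp (-(2 * β)) * 1) ((n : ℝ) - 1)
          ≤ 1 / 4 * (Real.exp (-(2 * β)) * 1) := by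
        refine mul_le_mul (by linarith) h1 ?_ (by norm_num)
        exact le_min (by positivity) (by linarith)
      linarith
    · have hn' : n = 1 := by omega
      refine le_trans (le_of_eq ?_) (mallowsE_nonneg β s)
      have : ((n : ℝ) - 1) = 0 := by rw [hn']; norm_num
      rw [this, min_eq_right (by positivity), mul_zero]

end MallowsL1


/-- There are absolute constants `C ≥ c > 0` such that for all `n ≥ 1`, `β > 0`, `s ∈ [n]`,
`c · min{e^{-2β} max{β⁻², 1}, n - 1} ≤ E[max C_s(σ) - min C_s(σ)]
  ≤ C · min{e^{-2β} max{β⁻², 1}, n - 1}`. -/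
theorem statement1 :
    ∃ C c : ℝ, 0 < c ∧ c ≤ C ∧
      ∀ n : ℕ, 0 < n → ∀ β : ℝ, 0 < β → ∀ s : Fin n,
        c * min (Real.exp (-(2 * β)) * max (β ^ 2)⁻¹ 1) ((n : ℝ) - 1)
            ≤ mallowsE n β (fun σ => cycleDiam n σ s) ∧
          mallowsE n β (fun σ => cycleDiam n σ s)
            ≤ C * min (Real.exp (-(2 * β)) * max (β ^ 2)⁻¹ 1) ((n : ℝ) - 1) := by
  refine ⟨1000, Real.exp (-200) / 4, by positivity, ?_, fun n hn β hβ s =>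
    ⟨MallowsL1.mallowsE_ge hβ hn s, ?_⟩⟩
  · have : Real.exp (-200) ≤ 1 := by rw [Real.exp_le_one_iff]; norm_num
    linarith
  · have hn1 : (1 : ℝ) ≤ n := by exact_mod_cast hn
    rw [mul_min_of_nonneg _ _ (by norm_num : (0 : ℝ) ≤ 1000)]
    refine le_min ?_ ?_
    · rw [MallowsL1.mallowsE_cycleDiam, div_le_iff₀ (MallowsL1.part_pos n β)]
      have h1 := MallowsL1.topSum_le' hβ s
      have h2 := MallowsL1.topSum_le' hβ (Fin.rev s)
      have h3 : 0 ≤ (Real.exp (-(2 * β)) * max (β ^ 2)⁻¹ 1) * MallowsL1.part n β :=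
        mul_nonneg (by positivity) (MallowsL1.part_pos n β).le
      linarith
    · have := MallowsL1.mallowsE_le_card β s
      linarith
end
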